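/- arXiv:2210.08526 — 3 statements merged into one kernel-verified Lean document; each statement's English description precedes it below -/
import Mathlib

section
/- Let A_n be the random skew-symmetric matrix model with α-balanced entries. There exist constants c > 0 and K > 0 such that for every n and every prime p with p ≤ exp(n^c), P(rank(A_n/p) ≤ n − 3) ≤ K (p^{−3} + exp(−n^c)). -/
/-!
The argument works over `𝔽_p` with the law `ν` of an entry modulo `p`; write `φ` for its
characteristic function.

Build the matrix by bordering: `A_{k+1}` is obtained from `A_k` by adding a random row `X` and the
column `-X`. If `X` is orthogonal to `ker A_k`, then `Z_k = |ker A_k|` grows by a factor of at most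
`p`; otherwise it shrinks by a factor `p`, by skew-symmetry. For a uniform `X` the first case has
probability `1 / Z_k`. For a general `X` it has probability at most `1 / Z_k + p⁻⁴`, provided that
no nonzero `w ∈ ker A_k` is *structured*, meaning `∏ |φ(w_i)| > p⁻⁴` (`IsBal.prob_orth_le`). Then the
potential `Z² + 4p²Z` contracts by `1/2` in expectation up to an additive `4p³`
(`IsBal.sum_pot_bord_le`). Starting the chain at size `√n` and applying Markov's inequality gives
`P(Z_n ≥ p³) ≤ 8p⁻³` plus errors (`IsBal.prob_ker_le`), and corank at least `3` means `Z_n ≥ p³`.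

It remains to exclude structured kernel vectors at all sizes `k ≥ √n` (`IsBal.prob_bad_le`). For a
structured `w`, a greedy choice yields a set `J` of about `k^{3/4}` coordinates such that the spectrum
`T = {t : ∏_{j ∈ J} |φ(t w_j)| > p⁻⁴}` forces nearly all coordinates of `w` into the set `W` of `x`
with `1 - |φ(tx)|²` small on average over `t ∈ T` (`IsBal.exists_struct`). Given `w` on `J`, the
rows outside `J` are orthogonal to `w` with probability at most `R ^ (k - |J|)`, where `R` is the
Fourier bound `p⁻¹ ∑_t ∏_{j ∈ J} |φ(t w_j)|`, which is roughly `|T| / p` (`IsBal.prob_mulVec_le`).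
Cauchy–Davenport and a large sieve bound for `∑_{t,u} |φ(tu)|²` show that `|W| R ≤ θ` for some
`θ < 1` depending only on `α` (`IsBal.card_mul_Rr_le`). The union bound over `J`, `w|_J` and the
exceptional coordinates costs only `exp(k^{0.85})`, up to a constant in the exponent, against the
gain `θ^k`.

The theorem holds with `c = 1/20`; bounded `n` and the primes `2, 3` are absorbed into `K`.
-/

open MeasureTheory Filter

noncomputable section

def IsBalanced (α : ℝ) (μ : Measure ℤ) : Prop :=
  ∀ p : ℕ, p.Prime → ∀ r : ZMod p, μ {x : ℤ | (x : ZMod p) = r} ≤ ENNReal.ofReal (1 - α)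

def skewMatrix (n : ℕ) (x : Fin n × Fin n → ℤ) : Matrix (Fin n) (Fin n) ℤ :=
  Matrix.of fun i j => if i < j then x (i, j) else if j < i then -x (j, i) else 0

def matMeasure (μ : Measure ℤ) (hμ : IsProbabilityMeasure μ) (n : ℕ) :
    Measure (Fin n × Fin n → ℤ) :=
  haveI := hμ
  Measure.pi fun _ => μ

namespace SkewCorank

/-! ### Characteristic functions modulo `p` and the large sieve -/

section

open scoped Pointwise

variable {p : ℕ} [Fact p.Prime]

/-- A probability mass function on `ℤ/p` no atom of which exceeds `1 - α`: the law modulo `p` of an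
`α`-balanced integer. -/
structure IsBal (α : ℝ) (ν : ZMod p → ℝ) : Prop where
  nonneg : ∀ r, 0 ≤ ν r
  sum_eq : ∑ r, ν r = 1
  le : ∀ r, ν r ≤ 1 - α

/-- The standard additive character `x ↦ exp (2πix/p)` of `ℤ/p`. -/
def ch (x : ZMod p) : ℂ := ZMod.stdAddChar x

lemma ch_zero : ch (0 : ZMod p) = 1 := by simp [ch]

lemma ch_add (x y : ZMod p) : ch (x + y) = ch x * ch y := by
  simp [ch, AddChar.map_add_eq_mul]

lemma ch_neg (x : ZMod p) : ch (-x) = (starRingEnd ℂ) (ch x) := by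
  simp only [ch]; exact AddChar.map_neg_eq_conj _ _

lemma norm_ch (x : ZMod p) : ‖ch x‖ = 1 := by
  simp only [ch]; exact AddChar.norm_apply _ _

lemma ch_sum {ι : Type*} (s : Finset ι) (f : ι → ZMod p) :
    ch (∑ i ∈ s, f i) = ∏ i ∈ s, ch (f i) := by
  classical
  induction s using Finset.induction_on with
  | empty => simp [ch_zero]
  | insert a s ha ih => rw [Finset.sum_insert ha, Finset.prod_insert ha, ch_add, ih]

lemma sum_ch (b : ZMod p) : ∑ x : ZMod p, ch (x * b) = if b = 0 then (p : ℂ) else 0 := by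
  have := AddChar.sum_mulShift b (ZMod.isPrimitive_stdAddChar p)
  simp only [ch]
  rw [this]
  split_ifs <;> simp [ZMod.card]

/-- The characteristic function `E ch (t ξ)` of the law `ν`. -/
def phi (ν : ZMod p → ℝ) (t : ZMod p) : ℂ := ∑ r, (ν r : ℂ) * ch (t * r)

/-- The modulus of the characteristic function. -/
def ph (ν : ZMod p → ℝ) (t : ZMod p) : ℝ := ‖phi ν t‖

/-- The defect `1 - |E ch (t ξ)|²`; it measures how far `t ξ` is from being constant modulo `p`,
and it is subadditive up to a factor `2` (`IsBal.psi_add_le`). -/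
def psi (ν : ZMod p → ℝ) (t : ZMod p) : ℝ := 1 - ph ν t ^ 2

variable {α : ℝ} {ν : ZMod p → ℝ}

lemma ph_nonneg (t : ZMod p) : 0 ≤ ph ν t := norm_nonneg _

lemma IsBal.ph_le_one (h : IsBal α ν) (t : ZMod p) : ph ν t ≤ 1 := by
  rw [← h.sum_eq, ph, phi]
  refine (norm_sum_le _ _).trans (Finset.sum_le_sum fun r _ => ?_)
  rw [norm_mul, norm_ch, mul_one, Complex.norm_real, Real.norm_of_nonneg (h.nonneg r)]

lemma IsBal.ph_zero (h : IsBal α ν) : ph ν 0 = 1 := by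
  have : phi ν 0 = 1 := by
    simp only [phi, zero_mul, ch_zero, mul_one]
    rw [← Complex.ofReal_sum, h.sum_eq, Complex.ofReal_one]
  rw [ph, this, norm_one]

lemma ph_neg (t : ZMod p) : ph ν (-t) = ph ν t := by
  have : phi ν (-t) = (starRingEnd ℂ) (phi ν t) := by
    simp only [phi, map_sum, map_mul, Complex.conj_ofReal, neg_mul, ch_neg]
  rw [ph, this, Complex.norm_conj, ph]

lemma ph_sq (t : ZMod p) :
    ph ν t ^ 2 = ∑ r, ∑ s, ν r * ν s * (ch (t * (r - s))).re := by
  have h1 : ((ph ν t ^ 2 : ℝ) : ℂ) = phi ν t * (starRingEnd ℂ) (phi ν t) := by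
    rw [Complex.mul_conj, Complex.normSq_eq_norm_sq, ph]
  have h2 : phi ν t * (starRingEnd ℂ) (phi ν t)
      = ∑ r, ∑ s, ((ν r * ν s : ℝ) : ℂ) * ch (t * (r - s)) := by
    simp only [phi, map_sum, map_mul, Complex.conj_ofReal]
    rw [Finset.sum_mul_sum]
    refine Finset.sum_congr rfl fun r _ => Finset.sum_congr rfl fun s _ => ?_
    rw [mul_sub, sub_eq_add_neg, ch_add, ch_neg]
    push_cast; ring
  have h3 := congrArg Complex.re (h1.trans h2)
  rw [Complex.ofReal_re] at h3
  rw [h3]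
  simp only [Complex.re_sum, Complex.re_ofReal_mul]

lemma IsBal.sum_sum (h : IsBal α ν) : ∑ r, ∑ s, ν r * ν s = 1 := by
  rw [← Finset.sum_mul_sum, h.sum_eq, one_mul]

lemma IsBal.psi_eq (h : IsBal α ν) (t : ZMod p) :
    psi ν t = ∑ r, ∑ s, ν r * ν s * (1 - (ch (t * (r - s))).re) := by
  simp only [mul_sub, mul_one, Finset.sum_sub_distrib]
  rw [h.sum_sum, psi, ph_sq]
  simp only [mul_sub]

lemma IsBal.psi_nonneg (h : IsBal α ν) (t : ZMod p) : 0 ≤ psi ν t := by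
  have := h.ph_le_one t
  have := ph_nonneg (ν := ν) t
  rw [psi]; nlinarith

lemma psi_le_one (t : ZMod p) : psi ν t ≤ 1 := by
  rw [psi]; nlinarith [sq_nonneg (ph ν t)]

lemma ph_le (t : ZMod p) : ph ν t ≤ 1 - psi ν t / 2 := by
  rw [psi]; nlinarith [sq_nonneg (ph ν t - 1)]

lemma IsBal.psi_zero (h : IsBal α ν) : psi ν 0 = 0 := by rw [psi, h.ph_zero]; ring

lemma one_sub_re_mul_le (a b : ℂ) (ha : ‖a‖ = 1) (hb : ‖b‖ = 1) :
    1 - (a * b).re ≤ 2 * ((1 - a.re) + (1 - b.re)) := by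
  have key : ∀ z : ℂ, ‖z‖ = 1 → 1 - z.re = ‖1 - z‖ ^ 2 / 2 := by
    intro z hz
    have h1 : z.re ^ 2 + z.im ^ 2 = 1 := by
      have := Complex.sq_norm z
      rw [hz, Complex.normSq_apply] at this; nlinarith
    rw [Complex.sq_norm, Complex.normSq_apply]
    simp only [Complex.sub_re, Complex.one_re, Complex.sub_im, Complex.one_im]
    nlinarith
  rw [key a ha, key b hb, key (a * b) (by rw [norm_mul, ha, hb, one_mul])]
  have h1 : ‖1 - a * b‖ ≤ ‖1 - a‖ + ‖1 - b‖ := by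
    have : 1 - a * b = (1 - a) + a * (1 - b) := by ring
    rw [this]
    refine (norm_add_le _ _).trans ?_
    rw [norm_mul, ha, one_mul]
  have := norm_nonneg (1 - a * b)
  nlinarith [sq_nonneg (‖1 - a‖ - ‖1 - b‖)]

/-- `ψ` is an average of `1 - cos`, and `√(1 - cos)` is subadditive on the circle. -/
lemma IsBal.psi_add_le (h : IsBal α ν) (x y : ZMod p) :
    psi ν (x + y) ≤ 2 * (psi ν x + psi ν y) := by
  rw [h.psi_eq, h.psi_eq, h.psi_eq, ← Finset.sum_add_distrib, Finset.mul_sum]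
  refine Finset.sum_le_sum fun r _ => ?_
  rw [← Finset.sum_add_distrib, Finset.mul_sum]
  refine Finset.sum_le_sum fun s _ => ?_
  rw [← mul_add, mul_left_comm]
  refine mul_le_mul_of_nonneg_left ?_ (mul_nonneg (h.nonneg r) (h.nonneg s))
  rw [add_mul, ch_add]
  exact one_sub_re_mul_le _ _ (norm_ch _) (norm_ch _)

lemma IsBal.sum_sq_le (h : IsBal α ν) : ∑ r, ν r * ν r ≤ 1 - α := by
  calc ∑ r, ν r * ν r ≤ ∑ r, ν r * (1 - α) :=
        Finset.sum_le_sum fun r _ => mul_le_mul_of_nonneg_left (h.le r) (h.nonneg r)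
    _ = 1 - α := by rw [← Finset.sum_mul, h.sum_eq, one_mul]

lemma IsBal.sum_ph_sq_le (h : IsBal α ν) : ∑ t, ph ν t ^ 2 ≤ p * (1 - α) := by
  have h1 : ∑ t, ph ν t ^ 2 = p * ∑ r, ν r * ν r := by
    simp only [ph_sq]
    rw [Finset.sum_comm, Finset.mul_sum]
    refine Finset.sum_congr rfl fun r _ => ?_
    rw [Finset.sum_comm]
    have h2 : ∀ s, ∑ t, ν r * ν s * (ch (t * (r - s))).re
        = if r = s then p * (ν r * ν r) else 0 := by
      intro s
      rw [← Finset.mul_sum, ← Complex.re_sum, sum_ch]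
      by_cases hrs : r = s
      · subst hrs; simp; ring
      · simp [hrs, sub_eq_zero]
    simp [h2]
  rw [h1]
  exact mul_le_mul_of_nonneg_left h.sum_sq_le (Nat.cast_nonneg _)

/-- The bilinear large sieve: Cauchy–Schwarz and Parseval in the variable `t`. -/
lemma norm_sum_sum_ch_sq_le (T U : Finset (ZMod p)) {c : ZMod p} (hc : c ≠ 0) :
    ‖∑ t ∈ T, ∑ u ∈ U, ch (t * u * c)‖ ^ 2 ≤ p * (T.card * U.card) := by
  have hpar : ∑ t : ZMod p, ‖∑ u ∈ U, ch (t * u * c)‖ ^ 2 = p * U.card := by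
    have h1 : ∀ t : ZMod p, ((‖∑ u ∈ U, ch (t * u * c)‖ ^ 2 : ℝ) : ℂ)
        = ∑ u ∈ U, ∑ v ∈ U, ch (t * ((u - v) * c)) := by
      intro t
      rw [← Complex.normSq_eq_norm_sq, ← Complex.mul_conj, map_sum, Finset.sum_mul_sum]
      refine Finset.sum_congr rfl fun u _ => Finset.sum_congr rfl fun v _ => ?_
      rw [← ch_neg, ← ch_add]; congr 1; ring
    have h2 : ((∑ t : ZMod p, ‖∑ u ∈ U, ch (t * u * c)‖ ^ 2 : ℝ) : ℂ) = ((p * U.card : ℝ) : ℂ) := by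
      rw [Complex.ofReal_sum]
      simp only [h1]
      rw [Finset.sum_comm]
      have h3 : ∀ u ∈ U, ∑ t : ZMod p, ∑ v ∈ U, ch (t * ((u - v) * c)) = p := by
        intro u hu
        rw [Finset.sum_comm]
        simp only [sum_ch, mul_eq_zero, hc, or_false, sub_eq_zero]
        simp [hu]
      rw [Finset.sum_congr rfl h3]
      simp; ring
    exact_mod_cast h2
  have h4 : ‖∑ t ∈ T, ∑ u ∈ U, ch (t * u * c)‖ ≤ ∑ t ∈ T, ‖∑ u ∈ U, ch (t * u * c)‖ :=
    norm_sum_le _ _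
  calc ‖∑ t ∈ T, ∑ u ∈ U, ch (t * u * c)‖ ^ 2
      ≤ (∑ t ∈ T, ‖∑ u ∈ U, ch (t * u * c)‖) ^ 2 := by gcongr
    _ ≤ T.card * ∑ t ∈ T, ‖∑ u ∈ U, ch (t * u * c)‖ ^ 2 := sq_sum_le_card_mul_sum_sq
    _ ≤ T.card * ∑ t : ZMod p, ‖∑ u ∈ U, ch (t * u * c)‖ ^ 2 := by
        gcongr
        exact Finset.subset_univ T
    _ = p * (T.card * U.card) := by rw [hpar]; ring

lemma IsBal.sum_sum_ph_sq_le (h : IsBal α ν) (T U : Finset (ZMod p)) :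
    ∑ t ∈ T, ∑ u ∈ U, ph ν (t * u) ^ 2
      ≤ (1 - α) * (T.card * U.card) + √(p * (T.card * U.card)) := by
  set B := √(p * (T.card * U.card) : ℝ) with hB
  have hB0 : 0 ≤ B := Real.sqrt_nonneg _
  have hN : (0 : ℝ) ≤ T.card * U.card := by positivity
  have h1 : ∑ t ∈ T, ∑ u ∈ U, ph ν (t * u) ^ 2
      = ∑ r, ∑ s, ν r * ν s * (∑ t ∈ T, ∑ u ∈ U, ch (t * u * (r - s))).re := by
    simp only [ph_sq, Complex.re_sum, Finset.mul_sum]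
    rw [Finset.sum_congr rfl fun t _ => Finset.sum_comm, Finset.sum_comm]
    refine Finset.sum_congr rfl fun r _ => ?_
    rw [Finset.sum_congr rfl fun t _ => Finset.sum_comm, Finset.sum_comm]
  have h2 : ∀ r s, ν r * ν s * (∑ t ∈ T, ∑ u ∈ U, ch (t * u * (r - s))).re
      ≤ (if r = s then ν r * ν r * (T.card * U.card) else 0) + ν r * ν s * B := by
    intro r s
    have hrs := mul_nonneg (h.nonneg r) (h.nonneg s)
    by_cases e : r = s
    · subst e
      simp only [sub_self, mul_zero, ch_zero, if_true]
      simp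
      positivity
    · rw [if_neg e, zero_add]
      refine mul_le_mul_of_nonneg_left ?_ hrs
      refine (Complex.re_le_norm _).trans ?_
      exact Real.le_sqrt_of_sq_le (norm_sum_sum_ch_sq_le T U (sub_ne_zero.2 e))
  rw [h1]
  calc _ ≤ ∑ r, ∑ s, ((if r = s then ν r * ν r * (T.card * U.card) else 0) + ν r * ν s * B) :=
        Finset.sum_le_sum fun r _ => Finset.sum_le_sum fun s _ => h2 r s
    _ = (∑ r, ν r * ν r) * (T.card * U.card) + B := by
        simp only [Finset.sum_add_distrib, Finset.sum_ite_eq, Finset.mem_univ, if_true,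
          ← Finset.sum_mul, h.sum_sum, one_mul]
    _ ≤ _ := by
        have := mul_le_mul_of_nonneg_right h.sum_sq_le hN
        linarith

/-- Two sets on whose product `ψ` is small on average cannot both be large: averaging the
characteristic function over `T × U` exhibits cancellation once `|T| |U|` exceeds a multiple of `p`. -/
lemma IsBal.card_mul_card_le (h : IsBal α ν) (hα : 0 < α) (T U : Finset (ZMod p))
    (hTU : ∑ t ∈ T, ∑ u ∈ U, psi ν (t * u) ≤ α / 4 * (T.card * U.card)) :
    (T.card * U.card : ℝ) ≤ 2 / α ^ 2 * p := by
  have h1 := h.sum_sum_ph_sq_le T U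
  have h2 : ∑ t ∈ T, ∑ u ∈ U, psi ν (t * u)
      = T.card * U.card - ∑ t ∈ T, ∑ u ∈ U, ph ν (t * u) ^ 2 := by
    simp [psi, Finset.sum_sub_distrib]
  set N : ℝ := T.card * U.card with hN
  have hN0 : 0 ≤ N := by positivity
  have h3 : 3 * α / 4 * N ≤ √(p * N) := by linarith
  have h4 : (3 * α / 4 * N) ^ 2 ≤ p * N := by
    have := Real.sq_sqrt (show 0 ≤ p * N by positivity)
    rw [← this]; gcongr
  rcases hN0.eq_or_lt with h0 | h0
  · rw [← h0]; positivity
  · have h5 : (9 * α ^ 2 / 16) * N ≤ p := by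
      by_contra hcon
      push Not at hcon
      nlinarith
    rw [div_mul_eq_mul_div, le_div_iff₀ (by positivity)]
    have : (0:ℝ) ≤ p := by positivity
    nlinarith

end

/-! ### Structured vectors -/

section

open scoped Pointwise
variable {p : ℕ} [Fact p.Prime] {α : ℝ} {ν : ZMod p → ℝ}

/-- The residues `x` for which `ψ (t x)` is at most `κ` on average over `t ∈ T`. -/
def Wset (ν : ZMod p → ℝ) (T : Finset (ZMod p)) (κ : ℝ) : Finset (ZMod p) :=
  Finset.univ.filter fun x => ∑ t ∈ T, psi ν (t * x) ≤ κ * T.card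

lemma mem_Wset {T : Finset (ZMod p)} {κ : ℝ} {x : ZMod p} :
    x ∈ Wset ν T κ ↔ ∑ t ∈ T, psi ν (t * x) ≤ κ * T.card := by simp [Wset]

lemma IsBal.zero_mem_Wset (h : IsBal α ν) (T : Finset (ZMod p)) {κ : ℝ} (hκ : 0 ≤ κ) :
    0 ∈ Wset ν T κ := by
  rw [mem_Wset]
  simp only [mul_zero, h.psi_zero, Finset.sum_const_zero]
  positivity

lemma IsBal.Wset_add_subset (h : IsBal α ν) (T : Finset (ZMod p)) (κ : ℝ) :
    Wset ν T κ + Wset ν T κ ⊆ Wset ν T (4 * κ) := by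
  intro z hz
  obtain ⟨x, hx, y, hy, rfl⟩ := Finset.mem_add.1 hz
  rw [mem_Wset] at hx hy ⊢
  calc ∑ t ∈ T, psi ν (t * (x + y)) ≤ ∑ t ∈ T, 2 * (psi ν (t * x) + psi ν (t * y)) :=
        Finset.sum_le_sum fun t _ => by rw [mul_add]; exact h.psi_add_le _ _
    _ = 2 * (∑ t ∈ T, psi ν (t * x) + ∑ t ∈ T, psi ν (t * y)) := by
        rw [← Finset.mul_sum, Finset.sum_add_distrib]
    _ ≤ _ := by linarith

/-- Each doubling `W + W` costs a factor `4` in the threshold `κ`, and Cauchy–Davenport makes it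
almost double the cardinality. -/
lemma IsBal.min_le_card_Wset (h : IsBal α ν) (T : Finset (ZMod p)) {κ : ℝ} (hκ : 0 ≤ κ) (a : ℕ) :
    min p (2 ^ a * ((Wset ν T κ).card - 1) + 1) ≤ (Wset ν T (4 ^ a * κ)).card := by
  induction a with
  | zero =>
    have : 0 < (Wset ν T κ).card := Finset.card_pos.2 ⟨0, h.zero_mem_Wset T hκ⟩
    simp only [pow_zero, one_mul]
    exact (min_le_right _ _).trans (by omega)
  | succ a ih =>
    have hne : (Wset ν T (4 ^ a * κ)).Nonempty := ⟨0, h.zero_mem_Wset T (by positivity)⟩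
    have h1 := ZMod.cauchy_davenport (Fact.out : p.Prime) hne hne
    have h2 := Finset.card_le_card (h.Wset_add_subset T (4 ^ a * κ))
    rw [show (4 : ℝ) ^ (a + 1) * κ = 4 * (4 ^ a * κ) by ring,
      show 2 ^ (a + 1) * ((Wset ν T κ).card - 1) = 2 * (2 ^ a * ((Wset ν T κ).card - 1)) by ring]
    have := hne.card_pos
    omega

lemma IsBal.le_sum_psi (h : IsBal α ν) {t : ZMod p} (ht : t ≠ 0) :
    α * p ≤ ∑ u, psi ν (t * u) := by
  have h1 : ∑ u, psi ν (t * u) = ∑ u, psi ν u :=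
    Fintype.sum_equiv (Equiv.mulLeft₀ t ht) _ _ fun _ => rfl
  have h2 : ∑ u, psi ν u = p - ∑ u, ph ν u ^ 2 := by
    simp [psi, Finset.sum_sub_distrib, ZMod.card]
  have := h.sum_ph_sq_le
  rw [h1, h2]; linarith

lemma IsBal.card_Wset_lt (h : IsBal α ν) (hα : 0 < α) {T : Finset (ZMod p)} (h1 : 1 ∈ T) :
    (Wset ν T (α / 4)).card < p := by
  have hp : (0 : ℝ) < p := by exact_mod_cast (Fact.out : p.Prime).pos
  by_contra hcon
  push Not at hcon
  have huniv : Wset ν T (α / 4) = Finset.univ := by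
    rw [← Finset.card_eq_iff_eq_univ, ZMod.card]
    exact le_antisymm (by simpa [ZMod.card] using Finset.card_le_univ (Wset ν T (α / 4))) hcon
  have hup : ∑ u : ZMod p, ∑ t ∈ T, psi ν (t * u) ≤ p * (α / 4 * T.card) := by
    have : ∀ u ∈ (Finset.univ : Finset (ZMod p)), ∑ t ∈ T, psi ν (t * u) ≤ α / 4 * T.card := by
      intro u _; rw [← mem_Wset, huniv]; exact Finset.mem_univ u
    refine (Finset.sum_le_card_nsmul _ _ _ this).trans ?_
    simp [ZMod.card]
  have hlow : (T.erase 0).card * (α * p) ≤ ∑ u : ZMod p, ∑ t ∈ T, psi ν (t * u) := by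
    rw [Finset.sum_comm]
    calc ((T.erase 0).card * (α * p) : ℝ) = ∑ t ∈ T.erase 0, α * p := by simp
      _ ≤ ∑ t ∈ T.erase 0, ∑ u, psi ν (t * u) :=
          Finset.sum_le_sum fun t ht => h.le_sum_psi (Finset.ne_of_mem_erase ht)
      _ ≤ _ := Finset.sum_le_sum_of_subset_of_nonneg (Finset.erase_subset _ _)
          fun t _ _ => Finset.sum_nonneg fun u _ => h.psi_nonneg _
  have hc1 : 1 ≤ (T.erase 0).card :=
    Finset.card_pos.2 ⟨1, Finset.mem_erase.2 ⟨one_ne_zero, h1⟩⟩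
  have hc2 : T.card ≤ (T.erase 0).card + 1 := by
    have := Finset.pred_card_le_card_erase (s := T) (a := 0); omega
  have hc3 : (T.card : ℝ) ≤ 2 * (T.erase 0).card := by exact_mod_cast (by omega)
  have hc4 : (1 : ℝ) ≤ (T.erase 0).card := by exact_mod_cast hc1
  have : (0 : ℝ) < α * p := by positivity
  nlinarith

/-- Inflating `Wset ν T κ` by `a` doublings gives a set to which the large sieve `card_mul_card_le`
applies; hence `|W| - 1` is smaller than the sieve bound by a factor `2 ^ a`. -/
lemma IsBal.card_Wset_le (h : IsBal α ν) (hα : 0 < α) {T : Finset (ZMod p)} (h1 : 1 ∈ T)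
    {κ : ℝ} (hκ : 0 ≤ κ) {a : ℕ} (ha : 4 ^ a * κ = α / 4) :
    (2 : ℝ) ^ a * (((Wset ν T κ).card : ℝ) - 1) * T.card ≤ 2 / α ^ 2 * p := by
  have hW : 1 ≤ (Wset ν T κ).card := Finset.card_pos.2 ⟨0, h.zero_mem_Wset T hκ⟩
  have hg := h.min_le_card_Wset T hκ a
  rw [ha] at hg
  have hlt := h.card_Wset_lt hα h1
  have hg2 : 2 ^ a * ((Wset ν T κ).card - 1) ≤ (Wset ν T (α / 4)).card := by omega
  have hg3 : (2 : ℝ) ^ a * (((Wset ν T κ).card : ℝ) - 1) ≤ (Wset ν T (α / 4)).card := by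
    have : ((2 ^ a * ((Wset ν T κ).card - 1) : ℕ) : ℝ) ≤ (Wset ν T (α / 4)).card := by
      exact_mod_cast hg2
    rwa [Nat.cast_mul, Nat.cast_sub hW, Nat.cast_pow, Nat.cast_ofNat, Nat.cast_one] at this
  have hls := h.card_mul_card_le hα T (Wset ν T (α / 4)) (by
    rw [Finset.sum_comm]
    refine (Finset.sum_le_card_nsmul _ _ (α / 4 * T.card) fun u hu => mem_Wset.1 hu).trans ?_
    rw [nsmul_eq_mul]; apply le_of_eq; ring)
  calc _ ≤ ((Wset ν T (α / 4)).card : ℝ) * T.card := by gcongr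
    _ ≤ _ := by rw [mul_comm]; exact hls

variable {n : ℕ}

/-- The modulus of the characteristic function of `∑ j ∈ J, ξ_j w_j` at `t`, the `ξ_j` being
independent with law `ν`. -/
def phJ (ν : ZMod p → ℝ) (J : Finset (Fin n)) (w : Fin n → ZMod p) (t : ZMod p) : ℝ :=
  ∏ j ∈ J, ph ν (t * w j)

/-- The Fourier bound `p⁻¹ ∑ t, |φ_J(t)|` for the largest atom of `∑ j ∈ J, ξ_j w_j`. -/
def Rr (ν : ZMod p → ℝ) (J : Finset (Fin n)) (w : Fin n → ZMod p) : ℝ :=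
  (∑ t, phJ ν J w t) / p

/-- The large spectrum of `∑ j ∈ J, ξ_j w_j`: frequencies at which the characteristic function
exceeds `p⁻⁴`. -/
def Tset (ν : ZMod p → ℝ) (J : Finset (Fin n)) (w : Fin n → ZMod p) : Finset (ZMod p) :=
  Finset.univ.filter fun t => ((p : ℝ) ^ 4)⁻¹ < phJ ν J w t

lemma mem_Tset {J : Finset (Fin n)} {w : Fin n → ZMod p} {t : ZMod p} :
    t ∈ Tset ν J w ↔ ((p : ℝ) ^ 4)⁻¹ < phJ ν J w t := by simp [Tset]

lemma phJ_nonneg (J : Finset (Fin n)) (w : Fin n → ZMod p) (t : ZMod p) : 0 ≤ phJ ν J w t :=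
  Finset.prod_nonneg fun _ _ => ph_nonneg _

lemma IsBal.phJ_anti (h : IsBal α ν) {J J' : Finset (Fin n)} (hJ : J ⊆ J') (w : Fin n → ZMod p)
    (t : ZMod p) : phJ ν J' w t ≤ phJ ν J w t := by
  rw [phJ, ← Finset.prod_sdiff hJ]
  exact mul_le_of_le_one_left (phJ_nonneg J w t)
    (Finset.prod_le_one (fun _ _ => ph_nonneg _) fun _ _ => h.ph_le_one _)

lemma IsBal.phJ_le_one (h : IsBal α ν) (J : Finset (Fin n)) (w : Fin n → ZMod p) (t : ZMod p) :
    phJ ν J w t ≤ 1 :=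
  Finset.prod_le_one (fun _ _ => ph_nonneg _) fun _ _ => h.ph_le_one _

lemma Rr_nonneg (J : Finset (Fin n)) (w : Fin n → ZMod p) : 0 ≤ Rr ν J w :=
  div_nonneg (Finset.sum_nonneg fun _ _ => phJ_nonneg _ _ _) (Nat.cast_nonneg _)

lemma IsBal.Rr_le (h : IsBal α ν) (J : Finset (Fin n)) (w : Fin n → ZMod p) :
    Rr ν J w ≤ (Tset ν J w).card / p + ((p : ℝ) ^ 4)⁻¹ := by
  have hp : (0 : ℝ) < p := by exact_mod_cast (Fact.out : p.Prime).pos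
  have : ∑ t, phJ ν J w t ≤ ∑ t, ((if t ∈ Tset ν J w then (1 : ℝ) else 0) + ((p : ℝ) ^ 4)⁻¹) := by
    refine Finset.sum_le_sum fun t _ => ?_
    split_ifs with ht
    · have := h.phJ_le_one J w t
      have : (0 : ℝ) ≤ ((p : ℝ) ^ 4)⁻¹ := by positivity
      linarith
    · rw [mem_Tset] at ht; linarith
  rw [Rr, div_le_iff₀ hp]
  refine this.trans (le_of_eq ?_)
  simp [Finset.sum_add_distrib, ZMod.card]
  field_simp

lemma IsBal.Rr_le_sqrt (h : IsBal α ν) {J : Finset (Fin n)} {w : Fin n → ZMod p} {j : Fin n}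
    (hj : j ∈ J) (hw : w j ≠ 0) : Rr ν J w ≤ √(1 - α) := by
  have hp : (0 : ℝ) < p := by exact_mod_cast (Fact.out : p.Prime).pos
  have h1 : ∑ t, phJ ν J w t ≤ ∑ t, ph ν t := by
    calc ∑ t, phJ ν J w t ≤ ∑ t, ph ν (t * w j) := by
          refine Finset.sum_le_sum fun t _ => ?_
          have := h.phJ_anti (Finset.singleton_subset_iff.2 hj) w t
          simpa [phJ] using this
      _ = ∑ t, ph ν t := Fintype.sum_equiv (Equiv.mulRight₀ (w j) hw) _ _ fun _ => rfl
  have h2 : (∑ t, ph ν t) ^ 2 ≤ p * (p * (1 - α)) := by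
    refine sq_sum_le_card_mul_sum_sq.trans ?_
    rw [Finset.card_univ, ZMod.card]
    exact mul_le_mul_of_nonneg_left h.sum_ph_sq_le hp.le
  refine Real.le_sqrt_of_sq_le ?_
  rw [Rr, div_pow, div_le_iff₀ (by positivity)]
  have h3 : 0 ≤ ∑ t, phJ ν J w t := Finset.sum_nonneg fun _ _ => phJ_nonneg _ _ _
  nlinarith

lemma IsBal.Rr_le_one (h : IsBal α ν) (J : Finset (Fin n)) (w : Fin n → ZMod p) :
    Rr ν J w ≤ 1 := by
  have hp : (0 : ℝ) < p := by exact_mod_cast (Fact.out : p.Prime).pos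
  rw [Rr, div_le_one hp]
  refine (Finset.sum_le_card_nsmul _ _ 1 fun t _ => h.phJ_le_one J w t).trans ?_
  simp [ZMod.card]

/-- The entropy–probability trade-off: the number of possible values of a free coordinate, times the
probability cost of one linear equation, is bounded by a constant below `1`. When the spectrum
has density at most `1/4`, the product is at most `1/2`; otherwise `W = {0}` and a single nonzero
coordinate in `J` gives `√(1 - α)`. -/
lemma IsBal.card_mul_Rr_le (h : IsBal α ν) (hα : 0 < α) {J : Finset (Fin n)}
    {w : Fin n → ZMod p} (h1 : 1 ∈ Tset ν J w) {j : Fin n} (hj : j ∈ J) (hw : w j ≠ 0)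
    {κ : ℝ} (hκ : 0 ≤ κ) {a : ℕ} (ha : 4 ^ a * κ = α / 4) (ha2 : 16 / α ^ 2 ≤ 2 ^ a) :
    ((Wset ν (Tset ν J w) κ).card : ℝ) * Rr ν J w ≤ max (1 / 2) √(1 - α) := by
  have hp2 : (2 : ℝ) ≤ p := by exact_mod_cast (Fact.out : p.Prime).two_le
  have hp : (0 : ℝ) < p := by linarith
  have hc := h.card_Wset_le hα h1 hκ ha
  have hR := h.Rr_le J w
  have hRs := h.Rr_le_sqrt hj hw
  have hR0 := Rr_nonneg (ν := ν) J w
  have hW1 : 1 ≤ (Wset ν (Tset ν J w) κ).card :=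
    Finset.card_pos.2 ⟨0, h.zero_mem_Wset _ hκ⟩
  have hN1 : (1 : ℝ) ≤ (Tset ν J w).card := by
    exact_mod_cast Finset.card_pos.2 ⟨1, h1⟩
  set W := (Wset ν (Tset ν J w) κ).card with hWdef
  set q : ℝ := (Tset ν J w).card / p with hq
  have hq0 : 0 < q := by positivity
  -- `(W - 1) q ≤ 1 / 8`
  have hWq : ((W : ℝ) - 1) * q ≤ 1 / 8 := by
    have h2 : (2 : ℝ) ^ a * (((W : ℝ) - 1) * q) ≤ 2 / α ^ 2 := by
      rw [hq, ← mul_div_assoc, ← mul_div_assoc, div_le_iff₀ hp, ← mul_assoc]; exact hc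
    have h3 : 2 / α ^ 2 ≤ 1 / 8 * 2 ^ a := by
      have : 2 / α ^ 2 = 1 / 8 * (16 / α ^ 2) := by ring
      rw [this]; gcongr
    have h4 : (0 : ℝ) < 2 ^ a := by positivity
    nlinarith
  rcases le_or_gt q (1 / 4) with hq4 | hq4
  · refine le_trans ?_ (le_max_left _ _)
    have hε : ((p : ℝ) ^ 4)⁻¹ ≤ q / 8 := by
      rw [hq, inv_le_iff_one_le_mul₀ (by positivity)]
      have : (Tset ν J w).card / (p : ℝ) / 8 * p ^ 4 = (Tset ν J w).card * (p ^ 3 / 8) := by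
        field_simp
      rw [this]
      have : (2 : ℝ) ^ 3 ≤ p ^ 3 := by gcongr
      nlinarith
    have hW0 : (0 : ℝ) ≤ W := Nat.cast_nonneg _
    have : (W : ℝ) * Rr ν J w ≤ W * (9 / 8 * q) := by gcongr; linarith
    nlinarith
  · refine le_trans ?_ (le_max_right _ _)
    have hW2 : (W : ℝ) < 2 := by nlinarith
    have hW3 : W < 2 := by exact_mod_cast hW2
    have hW4 : W = 1 := by omega
    rw [hW4, Nat.cast_one, one_mul]; exact hRs

/-- Greedy choice of `k` coordinates. If every `t ∈ B` has total defect at least `2m`, then an average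
unused coordinate shrinks `∑ t ∈ B, φ_J(t)` by a factor `1 - m / (2n)`, so some coordinate does. -/
lemma greedy (w : Fin n → ZMod p) (B : Finset (ZMod p)) (m : ℕ) (hm : m ≤ n)
    (hB : ∀ t ∈ B, (2 * m : ℝ) ≤ ∑ i, psi ν (t * w i)) (k : ℕ) (hk : k ≤ m) :
    ∃ J : Finset (Fin n), J.card = k ∧
      ∑ t ∈ B, phJ ν J w t ≤ p * (1 - (m : ℝ) / (2 * n)) ^ k := by
  induction k with
  | zero =>
    refine ⟨∅, rfl, ?_⟩
    simp only [phJ, Finset.prod_empty, pow_zero, mul_one, Finset.sum_const, nsmul_eq_mul]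
    have := Finset.card_le_univ B
    rw [ZMod.card] at this
    exact_mod_cast this
  | succ k ih =>
    obtain ⟨J, hJ, hΦ⟩ := ih (by omega)
    have hn : (0 : ℝ) < n := by exact_mod_cast (by omega : 0 < n)
    have hmn : (m : ℝ) ≤ n := by exact_mod_cast hm
    have hkm : (k : ℝ) ≤ m := by exact_mod_cast (by omega : k ≤ m)
    set Φ := ∑ t ∈ B, phJ ν J w t with hΦdef
    have hΦ0 : 0 ≤ Φ := Finset.sum_nonneg fun _ _ => phJ_nonneg _ _ _
    have hcard : (Jᶜ).card = n - k := by rw [Finset.card_compl, hJ, Fintype.card_fin]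
    have hcardR : ((Jᶜ).card : ℝ) = n - k := by rw [hcard, Nat.cast_sub (by omega)]
    have hne : (Jᶜ).Nonempty := by rw [← Finset.card_pos, hcard]; omega
    have hsum : ∑ i ∈ Jᶜ, ∑ t ∈ B, phJ ν (insert i J) w t
        ≤ ∑ i ∈ Jᶜ, Φ * (1 - (m : ℝ) / (2 * n)) := by
      rw [Finset.sum_const, nsmul_eq_mul, hcardR, Finset.sum_comm]
      have hstep : ∀ t ∈ B, ∑ i ∈ Jᶜ, phJ ν (insert i J) w t
          ≤ phJ ν J w t * ((n - k) * (1 - (m : ℝ) / (2 * n))) := by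
        intro t ht
        have e1 : ∑ i ∈ Jᶜ, phJ ν (insert i J) w t
            = phJ ν J w t * ∑ i ∈ Jᶜ, ph ν (t * w i) := by
          rw [Finset.mul_sum]
          refine Finset.sum_congr rfl fun i hi => ?_
          rw [phJ, Finset.prod_insert (Finset.mem_compl.1 hi), mul_comm, phJ]
        rw [e1]
        refine mul_le_mul_of_nonneg_left ?_ (phJ_nonneg _ _ _)
        have e2 : ∑ i ∈ Jᶜ, ph ν (t * w i) ≤ (n - k) - (∑ i ∈ Jᶜ, psi ν (t * w i)) / 2 := by
          calc _ ≤ ∑ i ∈ Jᶜ, (1 - psi ν (t * w i) / 2) := Finset.sum_le_sum fun i _ => ph_le _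
            _ = _ := by
              rw [Finset.sum_sub_distrib, ← Finset.sum_div]
              simp only [Finset.sum_const, nsmul_eq_mul, mul_one, hcardR]
        have e3 : ∑ i ∈ J, psi ν (t * w i) ≤ k := by
          refine (Finset.sum_le_card_nsmul _ _ 1 fun i _ => psi_le_one _).trans ?_
          simp [hJ]
        have e4 := Finset.sum_add_sum_compl J fun i => psi ν (t * w i)
        have e5 := hB t ht
        have e6 : ((n : ℝ) - k) * (1 - (m : ℝ) / (2 * n)) = (n - k) - m / 2 + k * m / (2 * n) := by
          field_simp
          ring
        have e7 : (0 : ℝ) ≤ k * m / (2 * n) := by positivity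
        rw [e6]; linarith
      refine (Finset.sum_le_sum hstep).trans (le_of_eq ?_)
      rw [← Finset.sum_mul]; ring
    obtain ⟨i, hi, hile⟩ := Finset.exists_le_of_sum_le hne hsum
    refine ⟨insert i J, by rw [Finset.card_insert_of_notMem (Finset.mem_compl.1 hi), hJ], ?_⟩
    refine hile.trans ?_
    have : (0 : ℝ) ≤ 1 - (m : ℝ) / (2 * n) := by
      rw [sub_nonneg, div_le_one (by positivity)]; linarith
    rw [pow_succ, ← mul_assoc]
    gcongr

/-- Structure of a vector `w` with `∏ i, |φ(w_i)| > p⁻⁴`: a set `J` of about `m` coordinates determines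
a spectrum `T` such that all but `O(m / κ)` coordinates of `w` lie in `Wset ν T κ`. -/
lemma IsBal.exists_struct (h : IsBal α ν) (w : Fin n → ZMod p) (hw : w ≠ 0) (m : ℕ) (hm : m ≤ n)
    (hmn : (p : ℝ) * (1 - (m : ℝ) / (2 * n)) ^ m ≤ ((p : ℝ) ^ 4)⁻¹)
    {κ : ℝ} (hκ : 0 < κ) (h1 : ((p : ℝ) ^ 4)⁻¹ < ∏ i, ph ν (w i)) :
    ∃ J E : Finset (Fin n), J.card ≤ m + 1 ∧ (∃ j ∈ J, w j ≠ 0) ∧ 1 ∈ Tset ν J w ∧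
      E.Nonempty ∧ (E.card : ℝ) ≤ 2 * m / κ + 1 ∧ ∀ i ∉ E, w i ∈ Wset ν (Tset ν J w) κ := by
  classical
  obtain ⟨i₀, hi₀⟩ := Function.ne_iff.1 hw
  set B : Finset (ZMod p) := Finset.univ.filter fun t => (2 * m : ℝ) ≤ ∑ i, psi ν (t * w i)
  obtain ⟨J₀, hJ₀, hΦ⟩ := greedy w B m hm (fun t ht => (Finset.mem_filter.1 ht).2) m le_rfl
  set J := insert i₀ J₀ with hJ
  set T := Tset ν J w with hT
  have h1T : 1 ∈ T := by
    rw [hT, mem_Tset]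
    refine h1.trans_le ?_
    have := h.phJ_anti (Finset.subset_univ J) w 1
    simpa [phJ] using this
  have hTB : ∀ t ∈ T, ∑ i, psi ν (t * w i) ≤ 2 * m := by
    intro t ht
    by_contra hcon
    push Not at hcon
    have htB : t ∈ B := Finset.mem_filter.2 ⟨Finset.mem_univ _, hcon.le⟩
    have e1 := Finset.single_le_sum (fun t _ => phJ_nonneg (ν := ν) J₀ w t) htB
    have e2 := h.phJ_anti (Finset.subset_insert i₀ J₀) w t
    have e3 := mem_Tset.1 ht
    linarith
  have hT0 : (0 : ℝ) < T.card := by exact_mod_cast Finset.card_pos.2 ⟨1, h1T⟩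
  set E₀ : Finset (Fin n) := Finset.univ.filter fun i => w i ∉ Wset ν T κ with hE₀
  have hE₀card : (E₀.card : ℝ) ≤ 2 * m / κ := by
    rw [le_div_iff₀ hκ]
    have e1 : (E₀.card : ℝ) * (κ * T.card) ≤ ∑ i ∈ E₀, ∑ t ∈ T, psi ν (t * w i) := by
      rw [← nsmul_eq_mul]
      refine Finset.card_nsmul_le_sum _ _ _ fun i hi => ?_
      have := (Finset.mem_filter.1 hi).2
      rw [mem_Wset] at this
      exact (not_le.1 this).le
    have e2 : ∑ i ∈ E₀, ∑ t ∈ T, psi ν (t * w i) ≤ ∑ i, ∑ t ∈ T, psi ν (t * w i) :=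
      Finset.sum_le_sum_of_subset_of_nonneg (Finset.subset_univ _)
        fun i _ _ => Finset.sum_nonneg fun t _ => h.psi_nonneg _
    have e3 : ∑ i, ∑ t ∈ T, psi ν (t * w i) ≤ T.card * (2 * m) := by
      rw [Finset.sum_comm, ← nsmul_eq_mul]
      exact Finset.sum_le_card_nsmul _ _ _ hTB
    have e4 : (E₀.card : ℝ) * κ * T.card ≤ (2 * m) * T.card := by linarith
    exact le_of_mul_le_mul_right e4 hT0
  refine ⟨J, insert i₀ E₀, ?_, ⟨i₀, Finset.mem_insert_self _ _, hi₀⟩, h1T,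
    Finset.insert_nonempty _ _, ?_, ?_⟩
  · exact (Finset.card_insert_le _ _).trans (by omega)
  · have : ((insert i₀ E₀).card : ℝ) ≤ E₀.card + 1 := by
      exact_mod_cast Finset.card_insert_le _ _
    linarith
  · intro i hi
    by_contra hcon
    exact hi (Finset.mem_insert_of_mem (Finset.mem_filter.2 ⟨Finset.mem_univ _, hcon⟩))

end

/-! ### Union bound over structured kernel vectors -/

section

open scoped Pointwise
variable {p : ℕ} [Fact p.Prime] {α : ℝ} {ν : ZMod p → ℝ} {n : ℕ}

/-- The skew-symmetric matrix over `ℤ/p` whose entries above the diagonal are `x (i, j)`; the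
remaining coordinates of `x` are ignored. -/
def skew (n : ℕ) (x : Fin n × Fin n → ZMod p) : Matrix (Fin n) (Fin n) (ZMod p) :=
  Matrix.of fun i j => if i < j then x (i, j) else if j < i then -x (j, i) else 0

/-- The probability that a family of independent variables of law `ν` equals `x`. -/
def wt {ι : Type*} [Fintype ι] (ν : ZMod p → ℝ) (x : ι → ZMod p) : ℝ := ∏ e, ν (x e)

lemma IsBal.wt_nonneg (h : IsBal α ν) {ι : Type*} [Fintype ι] (x : ι → ZMod p) : 0 ≤ wt ν x :=
  Finset.prod_nonneg fun _ _ => h.nonneg _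

lemma IsBal.sum_wt (h : IsBal α ν) {ι : Type*} [Fintype ι] [DecidableEq ι] :
    ∑ x : ι → ZMod p, wt ν x = 1 := by
  have := Finset.prod_univ_sum (fun _ : ι => (Finset.univ : Finset (ZMod p))) fun _ r => ν r
  rw [Fintype.piFinset_univ] at this
  simp only [wt]
  rw [← this]
  simp [h.sum_eq]

lemma sum_wt_ch {ι : Type*} [Fintype ι] [DecidableEq ι] (c : ι → ZMod p) :
    ∑ x : ι → ZMod p, (wt ν x : ℂ) * ch (∑ e, c e * x e) = ∏ e, phi ν (c e) := by
  have := Finset.prod_univ_sum (fun _ : ι => (Finset.univ : Finset (ZMod p)))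
    fun e r => (ν r : ℂ) * ch (c e * r)
  rw [Fintype.piFinset_univ] at this
  simp only [phi]
  rw [this]
  refine Finset.sum_congr rfl fun x _ => ?_
  rw [Finset.prod_mul_distrib, ch_sum, wt, Complex.ofReal_prod]

/-- The coefficient of the variable `x e` in the bilinear form `sᵀ (skew x) w`. -/
def coef (s w : Fin n → ZMod p) (e : Fin n × Fin n) : ZMod p :=
  if e.1 < e.2 then s e.1 * w e.2 - s e.2 * w e.1 else 0

lemma sum_mul_skew_mulVec (s w : Fin n → ZMod p) (x : Fin n × Fin n → ZMod p) :
    ∑ i, s i * (skew n x).mulVec w i = ∑ e, coef s w e * x e := by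
  have h1 : ∑ i, s i * (skew n x).mulVec w i
      = ∑ i, ∑ j, ((if i < j then s i * w j * x (i, j) else 0)
          - (if j < i then s i * w j * x (j, i) else 0)) := by
    refine Finset.sum_congr rfl fun i _ => ?_
    rw [Matrix.mulVec, dotProduct, Finset.mul_sum]
    refine Finset.sum_congr rfl fun j _ => ?_
    simp only [skew, Matrix.of_apply]
    rcases lt_trichotomy i j with hij | hij | hij
    · simp [hij, hij.not_gt]; ring
    · simp [hij]
    · simp [hij, hij.not_gt]; ring
  rw [h1]
  simp only [Finset.sum_sub_distrib]
  rw [Finset.sum_comm (f := fun i j => if j < i then s i * w j * x (j, i) else 0),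
    Fintype.sum_prod_type, ← Finset.sum_sub_distrib]
  refine Finset.sum_congr rfl fun i _ => ?_
  rw [← Finset.sum_sub_distrib]
  refine Finset.sum_congr rfl fun j _ => ?_
  simp only [coef]
  split_ifs <;> ring

/-- For `s` supported off `J`, the entry in position `{i, j}` with `i ∉ J`, `j ∈ J` has coefficient
`± s_i w_j`; keeping only these entries decouples the rows outside `J`. -/
lemma IsBal.prod_coef_le (h : IsBal α ν) (J : Finset (Fin n)) (s w : Fin n → ZMod p)
    (hs : ∀ j ∈ J, s j = 0) :
    ∏ e, ph ν (coef s w e) ≤ ∏ i ∈ Jᶜ, phJ ν J w (s i) := by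
  have h1 : ∏ i ∈ Jᶜ, phJ ν J w (s i) = ∏ e ∈ Jᶜ ×ˢ J, ph ν (s e.1 * w e.2) := by
    rw [Finset.prod_product]; rfl
  set g : Fin n × Fin n → Fin n × Fin n := fun e => if e.1 < e.2 then e else (e.2, e.1) with hg
  have hinj : Set.InjOn g (Jᶜ ×ˢ J : Finset (Fin n × Fin n)) := by
    rintro ⟨a, b⟩ hab ⟨c, d⟩ hcd heq
    simp only [Finset.coe_product, Set.mem_prod, Finset.mem_coe, Finset.mem_compl] at hab hcd
    simp only [hg] at heq
    split_ifs at heq with h1 h2 h2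
    · exact heq
    · simp only [Prod.mk.injEq] at heq
      obtain ⟨rfl, rfl⟩ := heq
      exact absurd hcd.2 hab.1
    · simp only [Prod.mk.injEq] at heq
      obtain ⟨rfl, rfl⟩ := heq
      exact absurd hab.2 hcd.1
    · simp only [Prod.mk.injEq] at heq ⊢
      exact ⟨heq.2, heq.1⟩
  have h2 : ∏ e ∈ Jᶜ ×ˢ J, ph ν (s e.1 * w e.2) = ∏ e ∈ (Jᶜ ×ˢ J).image g, ph ν (coef s w e) := by
    rw [Finset.prod_image hinj]
    refine Finset.prod_congr rfl ?_
    rintro ⟨a, b⟩ hab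
    simp only [Finset.mem_product, Finset.mem_compl] at hab
    have hb := hs b hab.2
    have hne : a ≠ b := fun e => hab.1 (e ▸ hab.2)
    simp only [hg, coef]
    rcases lt_or_gt_of_ne hne with hlt | hlt
    · simp [hlt, hb]
    · simp [hlt.not_gt, hlt, hb, ph_neg]
  rw [h1, h2, ← Finset.prod_sdiff (Finset.subset_univ ((Jᶜ ×ˢ J).image g))]
  exact mul_le_of_le_one_left (Finset.prod_nonneg fun _ _ => ph_nonneg _)
    (Finset.prod_le_one (fun _ _ => ph_nonneg _) fun _ _ => h.ph_le_one _)

/-- The rows outside `J`, restricted to the columns in `J`, are independent, and each is orthogonal to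
`w` with conditional probability at most `Rr ν J w`. -/
lemma IsBal.prob_mulVec_le (h : IsBal α ν) (J : Finset (Fin n)) (w : Fin n → ZMod p) :
    ∑ x : Fin n × Fin n → ZMod p, wt ν x * (if (skew n x).mulVec w = 0 then 1 else 0)
      ≤ Rr ν J w ^ (Jᶜ).card := by
  classical
  have hp : (0 : ℝ) < p := by exact_mod_cast (Fact.out : p.Prime).pos
  set S : Fin n → Finset (ZMod p) := fun i => if i ∈ J then {0} else Finset.univ with hS
  -- the indicator is dominated by a normalised character sum over `s` vanishing on `J`
  have hind : ∀ x : Fin n × Fin n → ZMod p,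
      ∑ s ∈ Fintype.piFinset S, ch (∑ e, coef s w e * x e)
        = ((p ^ (Jᶜ).card * (if ∀ i ∈ Jᶜ, (skew n x).mulVec w i = 0 then 1 else 0) : ℝ) : ℂ) := by
    intro x
    have e1 := Finset.prod_univ_sum S fun i t => ch (t * (skew n x).mulVec w i)
    simp only [← sum_mul_skew_mulVec, ch_sum]
    rw [← e1, ← Finset.prod_mul_prod_compl J]
    have e2 : ∏ i ∈ J, ∑ t ∈ S i, ch (t * (skew n x).mulVec w i) = 1 := by
      refine Finset.prod_eq_one fun i hi => ?_
      simp [hS, hi, ch_zero]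
    have e3 : ∏ i ∈ Jᶜ, ∑ t ∈ S i, ch (t * (skew n x).mulVec w i)
        = ∏ i ∈ Jᶜ, (p : ℂ) * (if (skew n x).mulVec w i = 0 then 1 else 0) := by
      refine Finset.prod_congr rfl fun i hi => ?_
      simp only [hS, Finset.mem_compl.1 hi, if_false, sum_ch]
      split_ifs <;> simp
    rw [e2, one_mul, e3, Finset.prod_mul_distrib, Finset.prod_const, Finset.prod_ite_zero]
    push_cast
    simp only [Finset.mem_compl]
    split_ifs <;> simp
  have hle : ∑ x : Fin n × Fin n → ZMod p,
        wt ν x * (if (skew n x).mulVec w = 0 then (1 : ℝ) else 0)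
      ≤ ∑ x : Fin n × Fin n → ZMod p,
        wt ν x * (if ∀ i ∈ Jᶜ, (skew n x).mulVec w i = 0 then 1 else 0) := by
    refine Finset.sum_le_sum fun x _ => mul_le_mul_of_nonneg_left ?_ (h.wt_nonneg x)
    by_cases hx : (skew n x).mulVec w = 0
    · simp [hx]
    · rw [if_neg hx]; split_ifs <;> norm_num
  refine hle.trans ?_
  set P := ∑ x : Fin n × Fin n → ZMod p,
    wt ν x * (if ∀ i ∈ Jᶜ, (skew n x).mulVec w i = 0 then (1 : ℝ) else 0) with hP
  have hfour : (((p : ℝ) ^ (Jᶜ).card * P : ℝ) : ℂ)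
      = ∑ s ∈ Fintype.piFinset S, ∏ e, phi ν (coef s w e) := by
    simp only [← sum_wt_ch]
    rw [Finset.sum_comm]
    simp only [← Finset.mul_sum, hind]
    rw [hP, Finset.mul_sum, Complex.ofReal_sum]
    refine Finset.sum_congr rfl fun x _ => ?_
    push_cast; ring
  have hnorm : (p : ℝ) ^ (Jᶜ).card * P ≤ ∑ s ∈ Fintype.piFinset S, ∏ i ∈ Jᶜ, phJ ν J w (s i) := by
    calc (p : ℝ) ^ (Jᶜ).card * P ≤ ‖(((p : ℝ) ^ (Jᶜ).card * P : ℝ) : ℂ)‖ := by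
          rw [Complex.norm_real]; exact le_abs_self _
      _ ≤ ∑ s ∈ Fintype.piFinset S, ‖∏ e, phi ν (coef s w e)‖ := by
          rw [hfour]; exact norm_sum_le _ _
      _ ≤ _ := by
          refine Finset.sum_le_sum fun s hs => ?_
          rw [norm_prod]
          refine h.prod_coef_le J s w fun j hj => ?_
          have := Fintype.mem_piFinset.1 hs j
          simpa [hS, hj] using this
  have hfact : ∑ s ∈ Fintype.piFinset S, ∏ i ∈ Jᶜ, phJ ν J w (s i)
      = (p * Rr ν J w) ^ (Jᶜ).card := by
    have e1 := Finset.prod_univ_sum S fun i t => if i ∈ J then (1 : ℝ) else phJ ν J w t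
    have e2 : ∀ s : Fin n → ZMod p, ∏ i, (if i ∈ J then (1 : ℝ) else phJ ν J w (s i))
        = ∏ i ∈ Jᶜ, phJ ν J w (s i) := by
      intro s
      rw [← Finset.prod_mul_prod_compl J, Finset.prod_eq_one fun i hi => by simp [hi], one_mul]
      exact Finset.prod_congr rfl fun i hi => by simp [Finset.mem_compl.1 hi]
    simp only [e2] at e1
    rw [← e1, ← Finset.prod_mul_prod_compl J, Finset.prod_eq_one fun i hi => by simp [hS, hi],
      one_mul]
    have e3 : ∀ i ∈ Jᶜ, ∑ t ∈ S i, (if i ∈ J then (1 : ℝ) else phJ ν J w t) = p * Rr ν J w := by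
      intro i hi
      have hi' := Finset.mem_compl.1 hi
      simp only [hS, hi', if_false, Rr]
      field_simp
    rw [Finset.prod_congr rfl e3, Finset.prod_const]
  rw [hfact, mul_pow] at hnorm
  exact le_of_mul_le_mul_left hnorm (by positivity)

/-- The kernel of `A` contains a structured vector: a nonzero `w` for which the characteristic
function of `X ⬝ᵥ w`, with `X` a random vector of law `ν`, exceeds `p⁻⁴` in modulus at `1`. -/
def Bad (ν : ZMod p → ℝ) {k : ℕ} (A : Matrix (Fin k) (Fin k) (ZMod p)) : Prop :=
  ∃ w : Fin k → ZMod p, w ≠ 0 ∧ A.mulVec w = 0 ∧ ((p : ℝ) ^ 4)⁻¹ < ∏ i, ph ν (w i)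

/-- The vectors that the pair `(J, E)` witnesses to be structured, in the sense of
`IsBal.exists_struct`. -/
def Sset (ν : ZMod p → ℝ) (κ : ℝ) (J E : Finset (Fin n)) : Set (Fin n → ZMod p) :=
  {w | (∃ j ∈ J, w j ≠ 0) ∧ 1 ∈ Tset ν J w ∧ ∀ i ∉ E, w i ∈ Wset ν (Tset ν J w) κ}

lemma phJ_congr {J : Finset (Fin n)} {w w' : Fin n → ZMod p} (hw : ∀ j ∈ J, w j = w' j) :
    phJ ν J w = phJ ν J w' := by
  funext t
  exact Finset.prod_congr rfl fun j hj => by rw [hw j hj]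

lemma Rr_congr {J : Finset (Fin n)} {w w' : Fin n → ZMod p} (hw : ∀ j ∈ J, w j = w' j) :
    Rr ν J w = Rr ν J w' := by
  rw [Rr, Rr, phJ_congr hw]

lemma Tset_congr {J : Finset (Fin n)} {w w' : Fin n → ZMod p} (hw : ∀ j ∈ J, w j = w' j) :
    Tset ν J w = Tset ν J w' := by
  simp only [Tset, phJ_congr hw]

open Classical in
/-- Union bound for one pair `(J, E)`: fix `w` on `J` in at most `p ^ s` ways; then each coordinate
outside `J ∪ E` contributes at most `|W| · R_J ≤ θ` and each coordinate of `J ∪ E` at most `p`. -/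
lemma IsBal.sum_Sset_le (h : IsBal α ν) (hα : 0 < α) (J E : Finset (Fin n))
    {κ : ℝ} (hκ : 0 ≤ κ) {a : ℕ} (ha : 4 ^ a * κ = α / 4) (ha2 : 16 / α ^ 2 ≤ 2 ^ a)
    {s d : ℕ} (hJs : J.card ≤ s) (hd : (J ∪ E).card ≤ d) :
    ∑ w ∈ Finset.univ.filter (fun w => w ∈ Sset ν κ J E), Rr ν J w ^ (Jᶜ).card
      ≤ (p : ℝ) ^ s * ((p : ℝ) ^ d * (max (1 / 2) √(1 - α)) ^ (n - d)) := by
  have hp1 : (1 : ℝ) ≤ p := by exact_mod_cast (Fact.out : p.Prime).one_le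
  set θ : ℝ := max (1 / 2) √(1 - α) with hθ
  have hα1 : 0 ≤ 1 - α := (h.nonneg 0).trans (h.le 0)
  have hθ1 : θ ≤ 1 := by
    refine max_le (by norm_num) ?_
    exact Real.sqrt_le_iff.2 ⟨zero_le_one, by linarith⟩
  have hθ0 : 0 ≤ θ := le_trans (by norm_num) (le_max_left _ _)
  set ρ : (Fin n → ZMod p) → (J → ZMod p) := fun w j => w j with hρ
  rw [← Finset.sum_fiberwise (g := ρ)]
  have hfib : ∀ u : J → ZMod p,
      ∑ w ∈ (Finset.univ.filter (fun w => w ∈ Sset ν κ J E)).filter (fun w => ρ w = u),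
        Rr ν J w ^ (Jᶜ).card ≤ (p : ℝ) ^ d * θ ^ (n - d) := by
    intro u
    rcases ((Finset.univ.filter (fun w => w ∈ Sset ν κ J E)).filter
      (fun w => ρ w = u)).eq_empty_or_nonempty with he | ⟨w₀, hw₀⟩
    · rw [he, Finset.sum_empty]; positivity
    simp only [Finset.mem_filter, Finset.mem_univ, true_and] at hw₀
    obtain ⟨⟨⟨j, hj, hwj⟩, h1, hE⟩, hu⟩ := hw₀
    set W := Wset ν (Tset ν J w₀) κ with hW
    set R := Rr ν J w₀ with hR
    have hR0 : 0 ≤ R := Rr_nonneg _ _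
    have hR1 : R ≤ 1 := h.Rr_le_one _ _
    have hWR : (W.card : ℝ) * R ≤ θ := h.card_mul_Rr_le hα h1 hj hwj hκ ha ha2
    set Q : Fin n → Finset (ZMod p) := fun i =>
      if i ∈ J then {w₀ i} else if i ∈ E then Finset.univ else W with hQ
    have hagree : ∀ w, ρ w = u → ∀ i ∈ J, w i = w₀ i := by
      intro w hw i hi
      have := congrFun (hw.trans hu.symm) ⟨i, hi⟩
      simpa [hρ] using this
    have hsub : (Finset.univ.filter (fun w => w ∈ Sset ν κ J E)).filter (fun w => ρ w = u)
        ⊆ Fintype.piFinset Q := by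
      intro w hw
      simp only [Finset.mem_filter, Finset.mem_univ, true_and] at hw
      have hag := hagree w hw.2
      rw [Fintype.mem_piFinset]
      intro i
      simp only [hQ]
      split_ifs with hiJ hiE
      · rw [Finset.mem_singleton]; exact hag i hiJ
      · exact Finset.mem_univ _
      · have := hw.1.2.2 i hiE
        rwa [Tset_congr hag] at this
    calc _ = ∑ w ∈ (Finset.univ.filter (fun w => w ∈ Sset ν κ J E)).filter (fun w => ρ w = u),
            R ^ (Jᶜ).card := by
          refine Finset.sum_congr rfl fun w hw => ?_
          rw [Rr_congr (hagree w (Finset.mem_filter.1 hw).2)]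
      _ ≤ ∑ w ∈ Fintype.piFinset Q, R ^ (Jᶜ).card :=
          Finset.sum_le_sum_of_subset_of_nonneg hsub fun _ _ _ => by positivity
      _ = ∏ i, ((Q i).card : ℝ) * (if i ∈ J then 1 else R) := by
          rw [Finset.sum_const, nsmul_eq_mul, Fintype.card_piFinset, Finset.prod_mul_distrib,
            Nat.cast_prod]
          congr 1
          rw [← Finset.prod_mul_prod_compl J, Finset.prod_eq_one fun i hi => by simp [hi], one_mul,
            ← Finset.prod_const]
          exact Finset.prod_congr rfl fun i hi => by simp [Finset.mem_compl.1 hi]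
      _ ≤ ∏ i, (if i ∈ J ∪ E then (p : ℝ) else θ) := by
          refine Finset.prod_le_prod (fun i _ => ?_) fun i _ => ?_
          · split_ifs <;> positivity
          · simp only [hQ, Finset.mem_union]
            by_cases hiJ : i ∈ J
            · simp [hiJ, hp1]
            by_cases hiE : i ∈ E
            · simp only [hiJ, hiE, if_false, if_true, or_true, Finset.card_univ, ZMod.card]
              nlinarith
            · simpa [hiJ, hiE] using hWR
      _ = (p : ℝ) ^ (J ∪ E).card * θ ^ (n - (J ∪ E).card) := by
          rw [← Finset.prod_mul_prod_compl (J ∪ E)]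
          congr 1
          · rw [← Finset.prod_const]
            exact Finset.prod_congr rfl fun i hi => by rw [if_pos hi]
          · have hcc : ((J ∪ E)ᶜ).card = n - (J ∪ E).card := by
              rw [Finset.card_compl, Fintype.card_fin]
            rw [← hcc, ← Finset.prod_const]
            exact Finset.prod_congr rfl fun i hi => by rw [if_neg (Finset.mem_compl.1 hi)]
      _ ≤ _ := by
          refine mul_le_mul (pow_le_pow_right₀ hp1 hd) ?_ (by positivity) (by positivity)
          exact pow_le_pow_of_le_one hθ0 hθ1 (by omega)
  refine (Finset.sum_le_card_nsmul _ _ _ fun u _ => hfib u).trans ?_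
  rw [nsmul_eq_mul]
  refine mul_le_mul_of_nonneg_right ?_ (by positivity)
  rw [Finset.card_univ, Fintype.card_fun, ZMod.card, Fintype.card_coe, Nat.cast_pow]
  exact pow_le_pow_right₀ hp1 hJs

/-- Small sets are counted through the functions that enumerate them with repetition. -/
lemma exists_range_eq (J : Finset (Fin n)) (hJ : J.Nonempty) {s : ℕ} (hs : J.card ≤ s) :
    ∃ f : Fin s → Fin n, Finset.univ.image f = J := by
  have : Nonempty J := hJ.to_subtype
  have hemb : Nonempty (J ↪ Fin s) := Function.Embedding.nonempty_of_card_le (by simpa using hs)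
  obtain ⟨g⟩ := hemb
  refine ⟨fun i => (Function.invFun g i : J), ?_⟩
  ext i
  simp only [Finset.mem_image, Finset.mem_univ, true_and]
  constructor
  · rintro ⟨a, rfl⟩; exact (Function.invFun g a).2
  · intro hi
    obtain ⟨a, ha⟩ := Function.invFun_surjective g.injective ⟨i, hi⟩
    exact ⟨a, by rw [ha]⟩

open Classical in
/-- Union bound over all structured vectors. Taking `m` of order `n ^ (3/4)` makes the right-hand side
exponentially small in `n`. -/
lemma IsBal.prob_bad_le (h : IsBal α ν) (hα : 0 < α) {κ : ℝ} (hκ : 0 < κ) {a : ℕ}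
    (ha : 4 ^ a * κ = α / 4) (ha2 : 16 / α ^ 2 ≤ 2 ^ a) {m : ℕ} (hm : m ≤ n)
    (hmn : (p : ℝ) * (1 - (m : ℝ) / (2 * n)) ^ m ≤ ((p : ℝ) ^ 4)⁻¹) {s e d : ℕ}
    (hs : m + 1 ≤ s) (he : 2 * m / κ + 1 ≤ e) (hd : s + e ≤ d) :
    ∑ x : Fin n × Fin n → ZMod p, wt ν x * (if Bad ν (skew n x) then 1 else 0)
      ≤ ((n : ℝ) * p) ^ d * ((p : ℝ) ^ d * (max (1 / 2) √(1 - α)) ^ (n - d)) := by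
  have hp1 : (1 : ℝ) ≤ p := by exact_mod_cast (Fact.out : p.Prime).one_le
  set θ : ℝ := max (1 / 2) √(1 - α) with hθ
  have hθ0 : 0 ≤ θ := le_trans (by norm_num) (le_max_left _ _)
  rcases Nat.eq_zero_or_pos n with hn | hn
  · subst hn
    have : ∀ x : Fin 0 × Fin 0 → ZMod p, ¬ Bad ν (skew 0 x) := by
      rintro x ⟨w, hw, -⟩
      exact hw (Subsingleton.elim _ _)
    simp only [this, if_false, mul_zero, Finset.sum_const_zero]
    positivity
  have hn1 : (1 : ℝ) ≤ n := by exact_mod_cast hn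
  let im {k : ℕ} (f : Fin k → Fin n) : Finset (Fin n) := Finset.univ.image f
  have himcard : ∀ {k : ℕ} (f : Fin k → Fin n), (im f).card ≤ k := by
    intro k f
    simpa using (Finset.card_image_le (s := Finset.univ) (f := f))
  have hpt : ∀ x : Fin n × Fin n → ZMod p, (if Bad ν (skew n x) then (1 : ℝ) else 0)
      ≤ ∑ f : Fin s → Fin n, ∑ g : Fin e → Fin n,
          ∑ w ∈ Finset.univ.filter (fun w => w ∈ Sset ν κ (im f) (im g)),
            (if (skew n x).mulVec w = 0 then (1 : ℝ) else 0) := by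
    intro x
    have h0 : ∀ (f : Fin s → Fin n) (g : Fin e → Fin n),
        (0 : ℝ) ≤ ∑ w ∈ Finset.univ.filter (fun w => w ∈ Sset ν κ (im f) (im g)),
            (if (skew n x).mulVec w = 0 then (1 : ℝ) else 0) :=
      fun f g => Finset.sum_nonneg fun w _ => by split_ifs <;> norm_num
    split_ifs with hb
    · obtain ⟨w, hw0, hAw, hw1⟩ := hb
      obtain ⟨J, E, hJc, hJw, h1T, hEn, hEc, hE⟩ := h.exists_struct w hw0 m hm hmn hκ hw1
      obtain ⟨f, rfl⟩ := exists_range_eq J (hJw.imp fun _ hj => hj.1) (hJc.trans hs)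
      obtain ⟨g, rfl⟩ := exists_range_eq E hEn (s := e) (by exact_mod_cast hEc.trans he)
      refine le_trans ?_ (Finset.single_le_sum
        (fun f _ => Finset.sum_nonneg fun g _ => h0 f g) (Finset.mem_univ f))
      refine le_trans ?_ (Finset.single_le_sum (fun g _ => h0 f g) (Finset.mem_univ g))
      refine le_trans ?_ (Finset.single_le_sum (a := w)
        (fun w _ => by split_ifs <;> norm_num) ?_)
      · rw [if_pos hAw]
      · simp only [Finset.mem_filter, Finset.mem_univ, true_and]
        exact ⟨hJw, h1T, hE⟩
    · exact Finset.sum_nonneg fun f _ => Finset.sum_nonneg fun g _ => h0 f g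
  calc _ ≤ ∑ x : Fin n × Fin n → ZMod p, wt ν x * ∑ f : Fin s → Fin n, ∑ g : Fin e → Fin n,
          ∑ w ∈ Finset.univ.filter (fun w => w ∈ Sset ν κ (im f) (im g)),
            (if (skew n x).mulVec w = 0 then (1 : ℝ) else 0) :=
        Finset.sum_le_sum fun x _ => mul_le_mul_of_nonneg_left (hpt x) (h.wt_nonneg x)
    _ = ∑ f : Fin s → Fin n, ∑ g : Fin e → Fin n,
          ∑ w ∈ Finset.univ.filter (fun w => w ∈ Sset ν κ (im f) (im g)),
            ∑ x : Fin n × Fin n → ZMod p,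
              wt ν x * (if (skew n x).mulVec w = 0 then (1 : ℝ) else 0) := by
        simp only [Finset.mul_sum]
        rw [Finset.sum_comm]
        refine Finset.sum_congr rfl fun f _ => ?_
        rw [Finset.sum_comm]
        refine Finset.sum_congr rfl fun g _ => ?_
        rw [Finset.sum_comm]
    _ ≤ ∑ f : Fin s → Fin n, ∑ g : Fin e → Fin n,
          (p : ℝ) ^ s * ((p : ℝ) ^ d * θ ^ (n - d)) := by
        refine Finset.sum_le_sum fun f _ => Finset.sum_le_sum fun g _ => ?_
        refine (Finset.sum_le_sum fun w _ => h.prob_mulVec_le (im f) w).trans ?_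
        refine h.sum_Sset_le hα (im f) (im g) hκ.le ha ha2 (himcard f) ?_
        have := Finset.card_union_le (im f) (im g)
        have := himcard f
        have := himcard g
        omega
    _ = (n : ℝ) ^ (s + e) * (p : ℝ) ^ s * ((p : ℝ) ^ d * θ ^ (n - d)) := by
        simp only [Finset.sum_const, Finset.card_univ, Fintype.card_fun, Fintype.card_fin,
          nsmul_eq_mul]
        push_cast; ring
    _ ≤ _ := by
        rw [mul_pow]
        refine mul_le_mul_of_nonneg_right ?_ (by positivity)
        refine mul_le_mul (pow_le_pow_right₀ hn1 hd) (pow_le_pow_right₀ hp1 (by omega))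
          (by positivity) (by positivity)

end

/-! ### The bordering chain -/

section

open scoped Pointwise
variable {p : ℕ} [Fact p.Prime] {α : ℝ} {ν : ZMod p → ℝ} {n k : ℕ}

/-- Fubini for independent blocks of coordinates. -/
lemma sum_wt_sum {ι κ : Type*} [Fintype ι] [Fintype κ] [DecidableEq ι] [DecidableEq κ]
    (H : (ι ⊕ κ → ZMod p) → ℝ) :
    ∑ x, wt ν x * H x = ∑ y : ι → ZMod p, wt ν y * ∑ z : κ → ZMod p, wt ν z * H (Sum.elim y z) := by
  rw [Fintype.sum_equiv (Equiv.sumArrowEquivProdArrow ι κ (ZMod p)) _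
    (fun yz => wt ν yz.1 * wt ν yz.2 * H (Sum.elim yz.1 yz.2))]
  · rw [Fintype.sum_prod_type]
    refine Finset.sum_congr rfl fun y _ => ?_
    rw [Finset.mul_sum]
    exact Finset.sum_congr rfl fun z _ => by ring
  · intro x
    have : Sum.elim (x ∘ Sum.inl) (x ∘ Sum.inr) = x := Sum.elim_comp_inl_inr x
    simp only [Equiv.sumArrowEquivProdArrow, Equiv.coe_fn_mk, this]
    simp [wt, Fintype.prod_sum_type]

/-- Marginalisation: a subfamily of independent coordinates is again independent with law `ν`. -/
lemma IsBal.sum_wt_comp (h : IsBal α ν) {ι ι' : Type*} [Fintype ι] [Fintype ι'] [DecidableEq ι]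
    [DecidableEq ι'] (f : ι' → ι) (hf : Function.Injective f) (G : (ι' → ZMod p) → ℝ) :
    ∑ x : ι → ZMod p, wt ν x * G (x ∘ f) = ∑ y, wt ν y * G y := by
  classical
  let e : ι' ⊕ ↥((Set.range f)ᶜ) ≃ ι :=
    ((Equiv.ofInjective f hf).sumCongr (Equiv.refl _)).trans (Equiv.Set.sumCompl (Set.range f))
  have he : ∀ i, e (Sum.inl i) = f i := by intro i; simp [e]
  rw [Fintype.sum_equiv (e.arrowCongr (Equiv.refl (ZMod p))).symm _
    (fun x => wt ν x * G (x ∘ Sum.inl)), sum_wt_sum]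
  · refine Finset.sum_congr rfl fun y _ => ?_
    simp only [Sum.elim_comp_inl]
    rw [← Finset.sum_mul, h.sum_wt, one_mul]
  · intro x
    have h1 : (e.arrowCongr (Equiv.refl (ZMod p))).symm x = x ∘ e := by
      ext i; simp [Equiv.arrowCongr]
    rw [h1]
    have h2 : wt ν (x ∘ e) = wt ν x := by
      simp only [wt, Function.comp]
      exact Fintype.prod_equiv e _ _ fun _ => rfl
    have h3 : (x ∘ e) ∘ Sum.inl = x ∘ f := by
      ext i; simp [he]
    rw [h2, h3]

/-- The expectation of `G` at a random skew-symmetric `k × k` matrix with entries of law `ν`. -/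
def Ex (ν : ZMod p → ℝ) (k : ℕ) (G : Matrix (Fin k) (Fin k) (ZMod p) → ℝ) : ℝ :=
  ∑ x : Fin k × Fin k → ZMod p, wt ν x * G (skew k x)

/-- The skew-symmetric bordering of `A` by a new first row `(0, X)` and a new first column `(0, -X)`. -/
def bord (X : Fin k → ZMod p) (A : Matrix (Fin k) (Fin k) (ZMod p)) :
    Matrix (Fin (k + 1)) (Fin (k + 1)) (ZMod p) :=
  Matrix.of (Fin.cons (Fin.cons 0 X) fun i => Fin.cons (-X i) (A i))

lemma skew_succ (x : Fin (k + 1) × Fin (k + 1) → ZMod p) :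
    skew (k + 1) x
      = bord (fun j => x (0, j.succ)) (skew k fun e => x (e.1.succ, e.2.succ)) := by
  ext i j
  refine Fin.cases ?_ (fun i => ?_) i <;> refine Fin.cases ?_ (fun j => ?_) j <;>
    simp [skew, bord, Fin.succ_pos]

lemma skew_transpose (x : Fin k × Fin k → ZMod p) : (skew k x).transpose = -skew k x := by
  ext i j
  simp only [skew, Matrix.transpose_apply, Matrix.of_apply, Matrix.neg_apply]
  rcases lt_trichotomy i j with hij | hij | hij
  · simp [hij, hij.not_gt]
  · simp [hij]
  · simp [hij, hij.not_gt]

lemma IsBal.Ex_succ (h : IsBal α ν) (G : Matrix (Fin (k + 1)) (Fin (k + 1)) (ZMod p) → ℝ) :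
    Ex ν (k + 1) G = Ex ν k fun A => ∑ X : Fin k → ZMod p, wt ν X * G (bord X A) := by
  let f : (Fin k × Fin k) ⊕ Fin k → Fin (k + 1) × Fin (k + 1) :=
    Sum.elim (fun e => (e.1.succ, e.2.succ)) fun j => (0, j.succ)
  have hf : Function.Injective f := by
    rintro (⟨a, b⟩ | a) (⟨c, d⟩ | c) hac
    · simp only [f, Sum.elim_inl, Prod.mk.injEq, Fin.succ_inj] at hac
      simp [hac]
    · simp only [f, Sum.elim_inl, Sum.elim_inr, Prod.mk.injEq] at hac
      exact absurd hac.1 (Fin.succ_ne_zero _)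
    · simp only [f, Sum.elim_inl, Sum.elim_inr, Prod.mk.injEq] at hac
      exact absurd hac.1.symm (Fin.succ_ne_zero _)
    · simp only [f, Sum.elim_inr, Prod.mk.injEq, Fin.succ_inj] at hac
      simp [hac]
  have h1 := h.sum_wt_comp f hf fun y =>
    G (bord (fun j => y (Sum.inr j)) (skew k fun e => y (Sum.inl e)))
  rw [Ex, Ex]
  simp only [skew_succ]
  refine h1.trans ?_
  rw [sum_wt_sum]
  rfl

lemma IsBal.Ex_mono (h : IsBal α ν) {G H : Matrix (Fin k) (Fin k) (ZMod p) → ℝ}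
    (hGH : ∀ A, A.transpose = -A → G A ≤ H A) : Ex ν k G ≤ Ex ν k H :=
  Finset.sum_le_sum fun x _ =>
    mul_le_mul_of_nonneg_left (hGH _ (skew_transpose x)) (h.wt_nonneg x)

lemma Ex_add (G H : Matrix (Fin k) (Fin k) (ZMod p) → ℝ) :
    Ex ν k (fun A => G A + H A) = Ex ν k G + Ex ν k H := by
  simp only [Ex, mul_add, Finset.sum_add_distrib]

lemma Ex_const_mul (c : ℝ) (G : Matrix (Fin k) (Fin k) (ZMod p) → ℝ) :
    Ex ν k (fun A => c * G A) = c * Ex ν k G := by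
  simp only [Ex, Finset.mul_sum]
  exact Finset.sum_congr rfl fun x _ => by ring

lemma IsBal.Ex_const (h : IsBal α ν) (c : ℝ) : Ex ν k (fun _ => c) = c := by
  simp only [Ex]
  rw [← Finset.sum_mul, h.sum_wt, one_mul]

/-- The kernel of `A`, as a finite set. -/
def ker (A : Matrix (Fin k) (Fin k) (ZMod p)) : Finset (Fin k → ZMod p) :=
  Finset.univ.filter fun v => A.mulVec v = 0

lemma mem_ker {A : Matrix (Fin k) (Fin k) (ZMod p)} {v : Fin k → ZMod p} :
    v ∈ ker A ↔ A.mulVec v = 0 := by simp [ker]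

lemma ker_pos (A : Matrix (Fin k) (Fin k) (ZMod p)) : 1 ≤ (ker A).card :=
  Finset.card_pos.2 ⟨0, by simp [mem_ker]⟩

lemma mem_ker_bord {X : Fin k → ZMod p} {A : Matrix (Fin k) (Fin k) (ZMod p)}
    {v : Fin (k + 1) → ZMod p} :
    v ∈ ker (bord X A) ↔
      X ⬝ᵥ Fin.tail v = 0 ∧ A.mulVec (Fin.tail v) = v 0 • X := by
  have h0 : (bord X A).mulVec v 0 = X ⬝ᵥ Fin.tail v := by
    simp [Matrix.mulVec, dotProduct, bord, Fin.sum_univ_succ, Fin.tail]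
  have h1 : ∀ i : Fin k, (bord X A).mulVec v i.succ = A.mulVec (Fin.tail v) i - v 0 * X i := by
    intro i
    simp [Matrix.mulVec, dotProduct, bord, Fin.sum_univ_succ, Fin.tail]
    ring
  rw [mem_ker, funext_iff, Fin.forall_fin_succ]
  simp only [h0, h1, Pi.zero_apply, sub_eq_zero]
  rw [funext_iff]
  simp [smul_eq_mul]

/-- Bordering multiplies the size of the kernel by at most `p`. -/
lemma card_ker_bord_le (X : Fin k → ZMod p) (A : Matrix (Fin k) (Fin k) (ZMod p)) :
    (ker (bord X A)).card ≤ p * (ker A).card := by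
  classical
  have h1 := Finset.card_le_mul_card_image (f := fun v : Fin (k + 1) → ZMod p => v 0)
    (ker (bord X A)) (ker A).card ?_
  · refine h1.trans ?_
    rw [mul_comm]
    refine Nat.mul_le_mul_right _ ?_
    simpa [ZMod.card] using Finset.card_le_univ (((ker (bord X A))).image fun v => v 0)
  · intro s hs
    obtain ⟨v₀, hv₀, hs₀⟩ := Finset.mem_image.1 hs
    refine Finset.card_le_card_of_injOn (fun v => Fin.tail v - Fin.tail v₀) ?_ ?_
    · intro v hv
      simp only [Finset.coe_filter, Set.mem_ofPred_eq] at hv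
      have a1 := (mem_ker_bord.1 hv.1).2
      have a2 := (mem_ker_bord.1 hv₀).2
      rw [Finset.mem_coe, mem_ker, Matrix.mulVec_sub, a1, a2, hv.2, hs₀, sub_self]
    · intro v hv v' hv' heq
      simp only [Finset.coe_filter, Set.mem_ofPred_eq] at hv hv'
      have e1 : Fin.tail v = Fin.tail v' := sub_left_injective heq
      rw [← Fin.cons_self_tail v, ← Fin.cons_self_tail v', e1, hv.2, hv'.2]

/-- If `X` is not orthogonal to `ker A`, then, `A` being skew-symmetric, `X` is not in its column space,
and bordering divides the size of the kernel by `p` at least. -/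
lemma mul_card_ker_bord_le (X : Fin k → ZMod p) (A : Matrix (Fin k) (Fin k) (ZMod p))
    (hA : A.transpose = -A) (hX : ∃ w ∈ ker A, X ⬝ᵥ w ≠ 0) :
    p * (ker (bord X A)).card ≤ (ker A).card := by
  classical
  obtain ⟨w, hw, hXw⟩ := hX
  rw [mem_ker] at hw
  have hv0 : ∀ v ∈ ker (bord X A), v 0 = 0 := by
    intro v hv
    have a := (mem_ker_bord.1 hv).2
    have b : w ⬝ᵥ A.mulVec (Fin.tail v) = 0 := by
      rw [Matrix.dotProduct_mulVec, ← Matrix.mulVec_transpose, hA, Matrix.neg_mulVec, hw]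
      simp
    rw [a, dotProduct_smul, smul_eq_mul, dotProduct_comm] at b
    exact (mul_eq_zero.1 b).resolve_right hXw
  have h1 : ((Finset.univ : Finset (ZMod p)) ×ˢ ker (bord X A)).card ≤ (ker A).card := by
    refine Finset.card_le_card_of_injOn (fun cv => cv.1 • w + Fin.tail cv.2) ?_ ?_
    · rintro ⟨c, v⟩ hcv
      have hv : v ∈ ker (bord X A) := by simpa using hcv
      have a := (mem_ker_bord.1 hv).2
      rw [hv0 v hv, zero_smul] at a
      rw [Finset.mem_coe, mem_ker, Matrix.mulVec_add, Matrix.mulVec_smul, hw, a]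
      simp
    · rintro ⟨c, v⟩ hcv ⟨c', v'⟩ hcv' heq
      have hv : v ∈ ker (bord X A) := by simpa using hcv
      have hv' : v' ∈ ker (bord X A) := by simpa using hcv'
      simp only at heq
      have e1 := congrArg (fun z => X ⬝ᵥ z) heq
      simp only [dotProduct_add, dotProduct_smul, (mem_ker_bord.1 hv).1, (mem_ker_bord.1 hv').1,
        add_zero, smul_eq_mul] at e1
      have e2 : c = c' := mul_right_cancel₀ hXw e1
      subst e2
      have e3 : Fin.tail v = Fin.tail v' := add_left_cancel heq
      have e4 : v = v' := by
        rw [← Fin.cons_self_tail v, ← Fin.cons_self_tail v', e3, hv0 v hv, hv0 v' hv']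
      rw [e4]
  rwa [Finset.card_product, Finset.card_univ, ZMod.card] at h1

open Classical in
/-- If `ker A` has no structured vector, then `X` is orthogonal to `ker A` with nearly the probability
`1 / |ker A|` of the uniform model: `|ker A|²` times this event is at most
`|∑ w ∈ ker A, ch (X ⬝ᵥ w)|²`, whose expectation has only small off-diagonal terms. -/
lemma IsBal.prob_orth_le (h : IsBal α ν) (A : Matrix (Fin k) (Fin k) (ZMod p)) (hA : ¬ Bad ν A) :
    ∑ X : Fin k → ZMod p, wt ν X * (if ∀ w ∈ ker A, X ⬝ᵥ w = 0 then 1 else 0)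
      ≤ ((ker A).card : ℝ)⁻¹ + ((p : ℝ) ^ 4)⁻¹ := by
  set Z : ℝ := ((ker A).card : ℝ) with hZ
  have hZ1 : 1 ≤ Z := by rw [hZ]; exact_mod_cast ker_pos A
  have hpt : ∀ X : Fin k → ZMod p, Z ^ 2 * (if ∀ w ∈ ker A, X ⬝ᵥ w = 0 then (1 : ℝ) else 0)
      ≤ ‖∑ w ∈ ker A, ch (X ⬝ᵥ w)‖ ^ 2 := by
    intro X
    split_ifs with hX
    · rw [Finset.sum_congr rfl fun w hw => by rw [hX w hw, ch_zero]]
      simp [hZ]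
    · rw [mul_zero]; positivity
  have hexp : ∑ X : Fin k → ZMod p, wt ν X * ‖∑ w ∈ ker A, ch (X ⬝ᵥ w)‖ ^ 2
      ≤ ∑ w ∈ ker A, ∑ v ∈ ker A, ∏ i, ph ν ((w - v) i) := by
    have e1 : ((∑ X : Fin k → ZMod p, wt ν X * ‖∑ w ∈ ker A, ch (X ⬝ᵥ w)‖ ^ 2 : ℝ) : ℂ)
        = ∑ w ∈ ker A, ∑ v ∈ ker A, ∏ i, phi ν ((w - v) i) := by
      simp only [← sum_wt_ch]
      rw [Complex.ofReal_sum]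
      rw [Finset.sum_congr rfl fun w _ => Finset.sum_comm, Finset.sum_comm]
      refine Finset.sum_congr rfl fun X _ => ?_
      rw [Complex.ofReal_mul, ← Complex.normSq_eq_norm_sq, ← Complex.mul_conj, map_sum,
        Finset.sum_mul_sum, Finset.mul_sum]
      refine Finset.sum_congr rfl fun w _ => ?_
      rw [Finset.mul_sum]
      refine Finset.sum_congr rfl fun v _ => ?_
      rw [← ch_neg, ← ch_add]
      congr 2
      simp only [dotProduct, Pi.sub_apply, sub_mul, Finset.sum_sub_distrib]
      simp only [sub_eq_add_neg, mul_comm]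
    calc _ ≤ ‖((∑ X : Fin k → ZMod p, wt ν X * ‖∑ w ∈ ker A, ch (X ⬝ᵥ w)‖ ^ 2 : ℝ) : ℂ)‖ := by
          rw [Complex.norm_real]; exact le_abs_self _
      _ ≤ _ := by
          rw [e1]
          refine (norm_sum_le _ _).trans (Finset.sum_le_sum fun w _ => ?_)
          refine (norm_sum_le _ _).trans (Finset.sum_le_sum fun v _ => ?_)
          rw [norm_prod]; rfl
  have hgood : ∑ w ∈ ker A, ∑ v ∈ ker A, ∏ i, ph ν ((w - v) i)
      ≤ Z * (1 + Z * ((p : ℝ) ^ 4)⁻¹) := by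
    rw [hZ, ← nsmul_eq_mul]
    refine Finset.sum_le_card_nsmul _ _ _ fun w hw => ?_
    have e2 : ∀ v ∈ ker A, ∏ i, ph ν ((w - v) i)
        ≤ (if w = v then (1 : ℝ) else 0) + ((p : ℝ) ^ 4)⁻¹ := by
      intro v hv
      have h4 : (0 : ℝ) ≤ ((p : ℝ) ^ 4)⁻¹ := by positivity
      by_cases hwv : w = v
      · rw [if_pos hwv]
        have : ∏ i, ph ν ((w - v) i) ≤ 1 :=
          Finset.prod_le_one (fun _ _ => ph_nonneg _) fun _ _ => h.ph_le_one _
        linarith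
      · rw [if_neg hwv, zero_add]
        by_contra hcon
        push Not at hcon
        refine hA ⟨w - v, sub_ne_zero.2 hwv, ?_, hcon⟩
        rw [Matrix.mulVec_sub, mem_ker.1 hw, mem_ker.1 hv, sub_zero]
    refine (Finset.sum_le_sum e2).trans (le_of_eq ?_)
    rw [Finset.sum_add_distrib, Finset.sum_ite_eq, if_pos hw, Finset.sum_const, nsmul_eq_mul]
  have hfin : Z ^ 2 * ∑ X : Fin k → ZMod p,
      wt ν X * (if ∀ w ∈ ker A, X ⬝ᵥ w = 0 then (1 : ℝ) else 0) ≤ Z * (1 + Z * ((p : ℝ) ^ 4)⁻¹) := by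
    refine le_trans ?_ (hexp.trans hgood)
    rw [Finset.mul_sum]
    refine Finset.sum_le_sum fun X _ => ?_
    rw [mul_left_comm]
    exact mul_le_mul_of_nonneg_left (hpt X) (h.wt_nonneg X)
  have hZp : 0 < Z ^ 2 := by positivity
  have e5 : Z ^ 2 * (Z⁻¹ + ((p : ℝ) ^ 4)⁻¹) = Z * (1 + Z * ((p : ℝ) ^ 4)⁻¹) := by
    field_simp
  rw [← e5] at hfin
  exact le_of_mul_le_mul_left hfin hZp

/-- A Lyapunov function for the kernel size `Z` along the bordering chain. The quadratic term detects
`Z ≥ p³` by Markov's inequality with the saving `p⁻⁶`; the linear term absorbs the contribution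
`p² Z` of the second moment. -/
def pot (A : Matrix (Fin k) (Fin k) (ZMod p)) : ℝ :=
  ((ker A).card : ℝ) ^ 2 + 4 * p ^ 2 * (ker A).card

lemma pot_nonneg (A : Matrix (Fin k) (Fin k) (ZMod p)) : 0 ≤ pot A := by
  rw [pot]; positivity

/-- The potential contracts by `1/2` in expectation, up to an additive `4p³`. With probability at
most `1/Z + p⁻⁴` the kernel size `Z` becomes at most `pZ`, and otherwise it becomes at most `Z/p`. -/
lemma IsBal.sum_pot_bord_le (h : IsBal α ν) (hp5 : 5 ≤ p) (A : Matrix (Fin k) (Fin k) (ZMod p))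
    (hAt : A.transpose = -A) (hA : ¬ Bad ν A) :
    ∑ X : Fin k → ZMod p, wt ν X * pot (bord X A) ≤ 1 / 2 * pot A + 4 * p ^ 3 := by
  classical
  have hp5' : (5 : ℝ) ≤ p := by exact_mod_cast hp5
  have hp : (0 : ℝ) < p := by linarith
  set Z : ℝ := ((ker A).card : ℝ) with hZ
  have hZ1 : 1 ≤ Z := by rw [hZ]; exact_mod_cast ker_pos A
  set c₁ : ℝ := (Z / p) ^ 2 + 4 * p ^ 2 * (Z / p) with hc₁
  set c₂ : ℝ := (p * Z) ^ 2 + 4 * p ^ 2 * (p * Z) with hc₂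
  have hc₁0 : 0 ≤ c₁ := by positivity
  have hpt : ∀ X : Fin k → ZMod p,
      pot (bord X A) ≤ c₁ + c₂ * (if ∀ w ∈ ker A, X ⬝ᵥ w = 0 then (1 : ℝ) else 0) := by
    intro X
    split_ifs with hX
    · have : ((ker (bord X A)).card : ℝ) ≤ p * Z := by
        rw [hZ]; exact_mod_cast card_ker_bord_le X A
      have : pot (bord X A) ≤ c₂ := by
        rw [pot, hc₂]; gcongr
      linarith
    · push Not at hX
      have : ((ker (bord X A)).card : ℝ) ≤ Z / p := by
        rw [le_div_iff₀ hp, mul_comm, hZ]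
        exact_mod_cast mul_card_ker_bord_le X A hAt hX
      rw [mul_zero, add_zero, pot, hc₁]; gcongr
  have hpr := h.prob_orth_le A hA
  have hmain : ∑ X : Fin k → ZMod p, wt ν X * pot (bord X A)
      ≤ c₁ + c₂ * (Z⁻¹ + ((p : ℝ) ^ 4)⁻¹) := by
    calc _ ≤ ∑ X : Fin k → ZMod p,
          wt ν X * (c₁ + c₂ * (if ∀ w ∈ ker A, X ⬝ᵥ w = 0 then (1 : ℝ) else 0)) :=
        Finset.sum_le_sum fun X _ => mul_le_mul_of_nonneg_left (hpt X) (h.wt_nonneg X)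
      _ = c₁ + c₂ * ∑ X : Fin k → ZMod p,
          wt ν X * (if ∀ w ∈ ker A, X ⬝ᵥ w = 0 then (1 : ℝ) else 0) := by
        simp only [mul_add, Finset.sum_add_distrib]
        rw [← Finset.sum_mul, h.sum_wt, one_mul, Finset.mul_sum]
        congr 1
        exact Finset.sum_congr rfl fun X _ => by ring
      _ ≤ _ := by gcongr
  refine hmain.trans ?_
  have e1 : c₁ + c₂ * (Z⁻¹ + ((p : ℝ) ^ 4)⁻¹)
      = 2 * Z ^ 2 / p ^ 2 + p ^ 2 * Z + 4 * p * Z + 4 * Z / p + 4 * p ^ 3 := by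
    rw [hc₁, hc₂]; field_simp; ring
  rw [e1, pot, ← hZ]
  have e2 : 2 * Z ^ 2 / p ^ 2 ≤ 1 / 2 * Z ^ 2 := by
    rw [div_le_iff₀ (by positivity)]
    have : (25 : ℝ) ≤ p ^ 2 := by nlinarith
    nlinarith [sq_nonneg Z]
  have e3 : 4 * Z / p ≤ Z := by
    rw [div_le_iff₀ hp]; nlinarith
  nlinarith [mul_nonneg (by linarith : (0:ℝ) ≤ Z) (by nlinarith : (0:ℝ) ≤ p ^ 2 - 4 * p - 1)]

/-- Every trailing principal submatrix of `A` of size `j` with `k₀ ≤ j < k` is free of structured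
kernel vectors. -/
def GC (ν : ZMod p → ℝ) (k₀ : ℕ) : (k : ℕ) → Matrix (Fin k) (Fin k) (ZMod p) → Prop
  | 0, _ => True
  | k + 1, A => GC ν k₀ k (A.submatrix Fin.succ Fin.succ) ∧
      (k₀ ≤ k → ¬ Bad ν (A.submatrix Fin.succ Fin.succ))

lemma bord_submatrix (X : Fin k → ZMod p) (A : Matrix (Fin k) (Fin k) (ZMod p)) :
    (bord X A).submatrix Fin.succ Fin.succ = A := by
  ext i j; simp [bord]

lemma GC_bord {k₀ : ℕ} (X : Fin k → ZMod p) (A : Matrix (Fin k) (Fin k) (ZMod p)) :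
    GC ν k₀ (k + 1) (bord X A) ↔ GC ν k₀ k A ∧ (k₀ ≤ k → ¬ Bad ν A) := by
  rw [GC, bord_submatrix]

open Classical in
lemma IsBal.prob_not_GC_le (h : IsBal α ν) (k₀ : ℕ) (β : ℝ) (n : ℕ)
    (hβ : ∀ k, k₀ ≤ k → k < n → Ex ν k (fun A => if Bad ν A then 1 else 0) ≤ β) (hβ0 : 0 ≤ β) :
    Ex ν n (fun A => if GC ν k₀ n A then 0 else 1) ≤ n * β := by
  induction n with
  | zero => simp [Ex, GC]
  | succ k ih =>
    have ih' := ih fun j hj hjk => hβ j hj (by omega)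
    rw [h.Ex_succ]
    have hpt : ∀ A : Matrix (Fin k) (Fin k) (ZMod p), A.transpose = -A →
        ∑ X : Fin k → ZMod p, wt ν X * (if GC ν k₀ (k + 1) (bord X A) then (0 : ℝ) else 1)
        ≤ (if GC ν k₀ k A then 0 else 1)
          + (if k₀ ≤ k then 1 else 0) * (if Bad ν A then 1 else 0) := by
      intro A _
      simp only [GC_bord]
      rw [← Finset.sum_mul, h.sum_wt, one_mul]
      by_cases h1 : GC ν k₀ k A <;> by_cases h2 : k₀ ≤ k <;> by_cases h3 : Bad ν A <;>
        simp [h1, h2, h3]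
    refine (h.Ex_mono hpt).trans ?_
    rw [Ex_add, Ex_const_mul]
    have : (if k₀ ≤ k then (1 : ℝ) else 0) * Ex ν k (fun A => if Bad ν A then 1 else 0) ≤ β := by
      split_ifs with hk
      · rw [one_mul]; exact hβ k hk (by omega)
      · rw [zero_mul]; exact hβ0
    push_cast
    linarith

lemma card_ker_le (A : Matrix (Fin k) (Fin k) (ZMod p)) : ((ker A).card : ℝ) ≤ (p : ℝ) ^ k := by
  have := Finset.card_le_univ (ker A)
  rw [Fintype.card_fun, ZMod.card, Fintype.card_fin] at this
  exact_mod_cast this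

open Classical in
lemma IsBal.Ex_pot_le (h : IsBal α ν) (hp5 : 5 ≤ p) (k₀ j : ℕ) :
    Ex ν (k₀ + j) (fun A => if GC ν k₀ (k₀ + j) A then pot A else 0)
      ≤ (1 / 2) ^ j * (5 * (p : ℝ) ^ (2 * k₀ + 2)) + 8 * p ^ 3 := by
  have hp1 : (1 : ℝ) ≤ p := by exact_mod_cast (by omega : 1 ≤ p)
  induction j with
  | zero =>
    have hpt : ∀ A : Matrix (Fin (k₀ + 0)) (Fin (k₀ + 0)) (ZMod p), A.transpose = -A →
        (if GC ν k₀ (k₀ + 0) A then pot A else 0) ≤ 5 * (p : ℝ) ^ (2 * k₀ + 2) := by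
      intro A _
      have h1 : pot A ≤ 5 * (p : ℝ) ^ (2 * k₀ + 2) := by
        have e := card_ker_le A
        rw [pot]
        have e1 : ((ker A).card : ℝ) ^ 2 ≤ (p : ℝ) ^ (2 * k₀ + 2) := by
          calc ((ker A).card : ℝ) ^ 2 ≤ ((p : ℝ) ^ (k₀ + 0)) ^ 2 := by gcongr
            _ = (p : ℝ) ^ (2 * k₀) := by rw [← pow_mul]; congr 1; omega
            _ ≤ _ := pow_le_pow_right₀ hp1 (by omega)
        have e2 : (p : ℝ) ^ 2 * (ker A).card ≤ (p : ℝ) ^ (2 * k₀ + 2) := by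
          calc (p : ℝ) ^ 2 * (ker A).card ≤ (p : ℝ) ^ 2 * (p : ℝ) ^ (k₀ + 0) := by gcongr
            _ = (p : ℝ) ^ (k₀ + 2) := by rw [← pow_add]; congr 1; omega
            _ ≤ _ := pow_le_pow_right₀ hp1 (by omega)
        linarith
      split_ifs
      · exact h1
      · positivity
    refine (h.Ex_mono hpt).trans ?_
    rw [h.Ex_const]
    have : (0 : ℝ) ≤ 8 * p ^ 3 := by positivity
    simp only [pow_zero, one_mul]
    linarith
  | succ j ih =>
    rw [← add_assoc, h.Ex_succ]
    have hpt : ∀ A : Matrix (Fin (k₀ + j)) (Fin (k₀ + j)) (ZMod p), A.transpose = -A →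
        ∑ X : Fin (k₀ + j) → ZMod p,
          wt ν X * (if GC ν k₀ (k₀ + j + 1) (bord X A) then pot (bord X A) else 0)
        ≤ 1 / 2 * (if GC ν k₀ (k₀ + j) A then pot A else 0) + 4 * p ^ 3 := by
      intro A hAt
      simp only [GC_bord]
      have h0 : (0 : ℝ) ≤ 4 * p ^ 3 := by positivity
      by_cases h1 : GC ν k₀ (k₀ + j) A
      · by_cases h2 : Bad ν A
        · have := pot_nonneg A
          simp only [h1, h2, le_add_iff_nonneg_right, zero_le, not_true_eq_false, imp_false,
            and_false, if_false, mul_zero, Finset.sum_const_zero, if_true]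
          linarith
        · simp only [h1, h2, not_false_eq_true, implies_true, and_true, if_true]
          exact h.sum_pot_bord_le hp5 A hAt h2
      · simp [h1]
    refine (h.Ex_mono hpt).trans ?_
    rw [Ex_add, Ex_const_mul, h.Ex_const]
    calc _ ≤ 1 / 2 * ((1 / 2) ^ j * (5 * (p : ℝ) ^ (2 * k₀ + 2)) + 8 * p ^ 3) + 4 * p ^ 3 := by
          gcongr
      _ = _ := by ring

open Classical in
/-- Markov's inequality for the potential of the chain started at size `k₀`. -/
lemma IsBal.prob_ker_le (h : IsBal α ν) (hp5 : 5 ≤ p) (k₀ n : ℕ) (hk : k₀ ≤ n) (β : ℝ)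
    (hβ : ∀ k, k₀ ≤ k → k < n → Ex ν k (fun A => if Bad ν A then 1 else 0) ≤ β) (hβ0 : 0 ≤ β) :
    Ex ν n (fun A => if p ^ 3 ≤ (ker A).card then 1 else 0)
      ≤ n * β + (1 / 2) ^ (n - k₀) * (5 * (p : ℝ) ^ (2 * k₀)) + 8 * ((p : ℝ)⁻¹) ^ 3 := by
  obtain ⟨j, rfl⟩ := Nat.exists_eq_add_of_le hk
  have hp1 : (1 : ℝ) ≤ p := by exact_mod_cast (by omega : 1 ≤ p)
  have hp0 : (0 : ℝ) < p := by linarith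
  have hpt : ∀ A : Matrix (Fin (k₀ + j)) (Fin (k₀ + j)) (ZMod p), A.transpose = -A →
      (if p ^ 3 ≤ (ker A).card then (1 : ℝ) else 0)
        ≤ (if GC ν k₀ (k₀ + j) A then 0 else 1)
          + ((p : ℝ) ^ 6)⁻¹ * (if GC ν k₀ (k₀ + j) A then pot A else 0) := by
    intro A _
    have := pot_nonneg A
    by_cases h1 : GC ν k₀ (k₀ + j) A
    · simp only [h1, if_true, zero_add]
      split_ifs with hZ
      · have hZ' : ((p : ℝ) ^ 3) ≤ (ker A).card := by exact_mod_cast hZ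
        rw [le_inv_mul_iff₀ (by positivity), mul_one, pot]
        have : ((p : ℝ) ^ 3) ^ 2 ≤ ((ker A).card : ℝ) ^ 2 := by gcongr
        have : (0 : ℝ) ≤ 4 * p ^ 2 * (ker A).card := by positivity
        calc (p : ℝ) ^ 6 = (p ^ 3) ^ 2 := by ring
          _ ≤ _ := by linarith
      · positivity
    · simp only [h1, if_false, mul_zero, add_zero]
      split_ifs <;> norm_num
  refine (h.Ex_mono hpt).trans ?_
  rw [Ex_add, Ex_const_mul]
  have a1 := h.prob_not_GC_le k₀ β (k₀ + j) hβ hβ0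
  have a2 := h.Ex_pot_le hp5 k₀ j
  have a3 : ((p : ℝ) ^ 6)⁻¹ * ((1 / 2) ^ j * (5 * (p : ℝ) ^ (2 * k₀ + 2)) + 8 * p ^ 3)
      ≤ (1 / 2) ^ j * (5 * (p : ℝ) ^ (2 * k₀)) + 8 * ((p : ℝ)⁻¹) ^ 3 := by
    have b1 : ((p : ℝ) ^ 6)⁻¹ * (8 * p ^ 3) = 8 * ((p : ℝ)⁻¹) ^ 3 := by field_simp
    have b2 : ((p : ℝ) ^ 6)⁻¹ * (p : ℝ) ^ (2 * k₀ + 2) ≤ (p : ℝ) ^ (2 * k₀) := by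
      rw [inv_mul_le_iff₀ (by positivity), ← pow_add]
      exact pow_le_pow_right₀ hp1 (by omega)
    calc _ = (1 / 2) ^ j * (5 * (((p : ℝ) ^ 6)⁻¹ * (p : ℝ) ^ (2 * k₀ + 2)))
          + ((p : ℝ) ^ 6)⁻¹ * (8 * p ^ 3) := by ring
      _ ≤ _ := by rw [b1]; gcongr
  have a4 := mul_le_mul_of_nonneg_left a2 (by positivity : (0 : ℝ) ≤ ((p : ℝ) ^ 6)⁻¹)
  rw [Nat.add_sub_cancel_left]
  linarith

end

/-! ### From the measure to finite sums, and the choice of parameters -/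

section

variable {p : ℕ} [Fact p.Prime] {α : ℝ} {ν : ZMod p → ℝ} {k : ℕ}

/-- The law of `ξ` modulo `p`. -/
def resLaw (μ : Measure ℤ) (p : ℕ) (r : ZMod p) : ℝ := (μ {x : ℤ | (x : ZMod p) = r}).toReal

lemma alpha_le_one {μ : Measure ℤ} (hμ : IsProbabilityMeasure μ) (hbal : IsBalanced α μ) :
    α ≤ 1 := by
  by_contra! hlt
  have h0 : ∀ r : ZMod 2, μ {x : ℤ | (x : ZMod 2) = r} = 0 := fun r => by
    have := hbal 2 Nat.prime_two r
    rwa [ENNReal.ofReal_of_nonpos (by linarith), nonpos_iff_eq_zero] at this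
  have h1 : μ (⋃ r : ZMod 2, {x : ℤ | (x : ZMod 2) = r}) = 0 := measure_iUnion_null h0
  have h2 : (⋃ r : ZMod 2, {x : ℤ | (x : ZMod 2) = r}) = Set.univ := by
    ext x; simp
  rw [h2, measure_univ] at h1
  exact one_ne_zero h1

lemma isBal_resLaw {μ : Measure ℤ} (hμ : IsProbabilityMeasure μ) (hbal : IsBalanced α μ) :
    IsBal α (resLaw μ p) where
  nonneg r := ENNReal.toReal_nonneg
  sum_eq := by
    have h2 : (⋃ r : ZMod p, {x : ℤ | (x : ZMod p) = r}) = Set.univ := by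
      ext x; simp
    have h3 : μ (⋃ r : ZMod p, {x : ℤ | (x : ZMod p) = r})
        = ∑ r : ZMod p, μ {x : ℤ | (x : ZMod p) = r} := by
      rw [measure_iUnion, tsum_fintype]
      · intro r s hrs
        refine Set.disjoint_left.2 fun x hx hx' => hrs ?_
        exact Eq.trans (Eq.symm hx) hx'
      · exact fun _ => MeasurableSet.of_discrete
    rw [h2, measure_univ] at h3
    simp only [resLaw]
    rw [← ENNReal.toReal_sum fun r _ => measure_ne_top _ _, ← h3, ENNReal.toReal_one]
  le r := by
    refine ENNReal.toReal_le_of_le_ofReal ?_ (hbal p Fact.out r)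
    linarith [alpha_le_one hμ hbal]

open Classical in
/-- An event depending only on the entries modulo `p` has a probability at most the corresponding
finite sum. -/
lemma measure_le_sum {μ : Measure ℤ} (hμ : IsProbabilityMeasure μ) (n : ℕ)
    (P : (Fin n × Fin n → ZMod p) → Prop) :
    ((matMeasure μ hμ n) {x | P fun e => (x e : ZMod p)}).toReal
      ≤ ∑ y, wt (resLaw μ p) y * (if P y then 1 else 0) := by
  have hsub : {x : Fin n × Fin n → ℤ | P fun e => (x e : ZMod p)} ⊆
      ⋃ y ∈ Finset.univ.filter P, Set.univ.pi fun e => {x : ℤ | (x : ZMod p) = y e} := by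
    intro x hx
    refine Set.mem_biUnion (x := fun e => (x e : ZMod p)) ?_ ?_
    · exact Finset.mem_coe.2 (Finset.mem_filter.2 ⟨Finset.mem_univ _, hx⟩)
    · exact fun e _ => rfl
  have h1 := (measure_mono hsub).trans
    (measure_biUnion_finset_le (μ := matMeasure μ hμ n) _ _)
  have hpi : ∀ y : Fin n × Fin n → ZMod p,
      (matMeasure μ hμ n) (Set.univ.pi fun e => {x : ℤ | (x : ZMod p) = y e})
        = ∏ e, μ {x : ℤ | (x : ZMod p) = y e} := fun y => Measure.pi_pi _ _
  simp only [hpi] at h1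
  have hfin : ∀ y : Fin n × Fin n → ZMod p, ∏ e, μ {x : ℤ | (x : ZMod p) = y e} ≠ ⊤ :=
    fun y => ENNReal.prod_ne_top fun e _ => measure_ne_top _ _
  refine (ENNReal.toReal_mono (ENNReal.sum_ne_top.2 fun y _ => hfin y) h1).trans ?_
  rw [ENNReal.toReal_sum fun y _ => hfin y, Finset.sum_filter]
  refine Finset.sum_le_sum fun y _ => ?_
  split_ifs
  · simp [wt, resLaw, ENNReal.toReal_prod]
  · simp

lemma skewMatrix_map (n : ℕ) (x : Fin n × Fin n → ℤ) :
    (skewMatrix n x).map (fun z : ℤ => (z : ZMod p)) = skew n fun e => (x e : ZMod p) := by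
  ext i j
  simp only [skewMatrix, skew, Matrix.map_apply, Matrix.of_apply]
  split_ifs <;> simp

lemma pow_three_le_card_ker {n : ℕ} (hn : 3 ≤ n) (A : Matrix (Fin n) (Fin n) (ZMod p))
    (hA : A.rank ≤ n - 3) : p ^ 3 ≤ (ker A).card := by
  have h1 := LinearMap.finrank_range_add_finrank_ker A.mulVecLin
  rw [Module.finrank_fin_fun] at h1
  have h2 : 3 ≤ Module.finrank (ZMod p) (LinearMap.ker A.mulVecLin) := by
    have : A.rank = Module.finrank (ZMod p) (LinearMap.range A.mulVecLin) := rfl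
    omega
  have h3 : Nat.card (LinearMap.ker A.mulVecLin)
      = p ^ Module.finrank (ZMod p) (LinearMap.ker A.mulVecLin) := by
    rw [Module.natCard_eq_pow_finrank (K := ZMod p), Nat.card_zmod]
  have h4 : Nat.card (LinearMap.ker A.mulVecLin) = (ker A).card := by
    rw [← Nat.card_eq_finsetCard]
    refine Nat.card_congr (Equiv.subtypeEquivRight fun v => ?_)
    rw [mem_ker, LinearMap.mem_ker, Matrix.mulVecLin_apply]
  rw [← h4, h3]
  exact Nat.pow_le_pow_right (Fact.out : p.Prime).pos h2

lemma eventually_rpow_le {a b A B : ℝ} (hab : a < b) (hB : 0 < B) :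
    ∀ᶠ x : ℝ in atTop, A * x ^ a ≤ B * x ^ b := by
  filter_upwards [(tendsto_rpow_atTop (sub_pos.2 hab)).eventually_ge_atTop (A / B),
    eventually_gt_atTop 0] with x hx hx0
  have h1 : x ^ b = x ^ (b - a) * x ^ a := by
    rw [← Real.rpow_add hx0]; congr 1; ring
  rw [h1, ← mul_assoc]
  refine mul_le_mul_of_nonneg_right ?_ (Real.rpow_nonneg hx0.le _)
  rw [div_le_iff₀ hB] at hx
  linarith

lemma eventually_log_le {b : ℝ} (hb : 0 < b) :
    ∀ᶠ x : ℝ in atTop, Real.log x ≤ x ^ b := by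
  filter_upwards [(isLittleO_log_rpow_atTop hb).bound one_pos, eventually_gt_atTop 0] with x hx hx0
  rw [one_mul, Real.norm_of_nonneg (Real.rpow_nonneg hx0.le _)] at hx
  exact (le_abs_self _).trans hx


open Classical in
/-- Uniformly in the moduli `p ≤ exp ((k + 1) ^ (1/10))`, a random skew-symmetric matrix has a structured
kernel vector with probability at most `exp (-√k)` once `k` is large in terms of `α`. -/
lemma exists_prob_bad_le (hα : 0 < α) : ∃ N₀ : ℕ, ∀ k : ℕ, N₀ ≤ k → ∀ (p : ℕ) [Fact p.Prime]
    (ν : ZMod p → ℝ), IsBal α ν → (p : ℝ) ≤ Real.exp (((k : ℝ) + 1) ^ (1 / 10 : ℝ)) →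
    Ex ν k (fun A => if Bad ν A then 1 else 0) ≤ Real.exp (-(k : ℝ) ^ (1 / 2 : ℝ)) := by
  obtain ⟨a, ha2⟩ := pow_unbounded_of_one_lt (16 / α ^ 2) (one_lt_two (α := ℝ))
  set κ : ℝ := α / 4 / 4 ^ a with hκdef
  have hκ : 0 < κ := by positivity
  have ha : 4 ^ a * κ = α / 4 := by rw [hκdef]; field_simp
  set θ : ℝ := max (1 / 2) √(1 - α) with hθdef
  have hθ0 : 0 < θ := lt_of_lt_of_le (by norm_num) (le_max_left _ _)
  have hθ1 : θ < 1 := by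
    refine max_lt (by norm_num) ?_
    rw [Real.sqrt_lt' one_pos]; linarith
  set l : ℝ := -Real.log θ with hldef
  have hl : 0 < l := by rw [hldef, neg_pos]; exact Real.log_neg hθ0 hθ1
  set C : ℝ := 2 * (2 / κ + 4) with hCdef
  have hC : 0 < C := by positivity
  have hev : ∀ᶠ x : ℝ in atTop, 1 ≤ x ∧ 20 * x ^ (1 / 10 : ℝ) ≤ 1 * x ^ (1 / 2 : ℝ) ∧
      Real.log x ≤ x ^ (1 / 10 : ℝ) ∧ (5 * C) * x ^ (17 / 20 : ℝ) ≤ (l / 3) * x ^ (1 : ℝ) ∧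
      (l * C) * x ^ (3 / 4 : ℝ) ≤ (l / 3) * x ^ (1 : ℝ) ∧
      1 * x ^ (1 / 2 : ℝ) ≤ (l / 3) * x ^ (1 : ℝ) := by
    filter_upwards [eventually_ge_atTop 1,
      eventually_rpow_le (a := 1 / 10) (b := 1 / 2) (A := 20) (B := 1) (by norm_num) one_pos,
      eventually_log_le (b := 1 / 10) (by norm_num),
      eventually_rpow_le (a := 17 / 20) (b := 1) (A := 5 * C) (B := l / 3) (by norm_num)
        (by positivity),
      eventually_rpow_le (a := 3 / 4) (b := 1) (A := l * C) (B := l / 3) (by norm_num)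
        (by positivity),
      eventually_rpow_le (a := 1 / 2) (b := 1) (A := 1) (B := l / 3) (by norm_num)
        (by positivity)] with x h1 h2 h3 h4 h5 h6
    exact ⟨h1, h2, h3, h4, h5, h6⟩
  obtain ⟨N₀, hN₀⟩ := eventually_atTop.1 (tendsto_natCast_atTop_atTop.eventually hev)
  refine ⟨N₀, fun k hk p _ ν h hp => ?_⟩
  obtain ⟨h1, h2, h3, h4, h5, h6⟩ := hN₀ k hk
  set x : ℝ := (k : ℝ) with hx
  have hx0 : 0 < x := by linarith
  have hp0 : (0 : ℝ) < p := by exact_mod_cast (Fact.out : p.Prime).pos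
  -- `log p ≤ 2 x ^ (1/10)`
  have hL : Real.log p ≤ 2 * x ^ (1 / 10 : ℝ) := by
    have e1 : Real.log p ≤ (x + 1) ^ (1 / 10 : ℝ) := by
      rw [← Real.log_exp ((x + 1) ^ (1 / 10 : ℝ))]
      exact Real.log_le_log hp0 hp
    refine e1.trans ?_
    calc (x + 1) ^ (1 / 10 : ℝ) ≤ (2 * x) ^ (1 / 10 : ℝ) := by
          refine Real.rpow_le_rpow (by positivity) (by linarith) (by norm_num)
      _ = 2 ^ (1 / 10 : ℝ) * x ^ (1 / 10 : ℝ) := Real.mul_rpow (by norm_num) hx0.le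
      _ ≤ 2 * x ^ (1 / 10 : ℝ) := by
          refine mul_le_mul_of_nonneg_right ?_ (by positivity)
          calc (2 : ℝ) ^ (1 / 10 : ℝ) ≤ 2 ^ (1 : ℝ) :=
                Real.rpow_le_rpow_of_exponent_le (by norm_num) (by norm_num)
            _ = 2 := Real.rpow_one _
  have hpe : (p : ℝ) = Real.exp (Real.log p) := (Real.exp_log hp0).symm
  set m : ℕ := ⌈x ^ (3 / 4 : ℝ)⌉₊ with hmdef
  have hm1 : x ^ (3 / 4 : ℝ) ≤ m := Nat.le_ceil _
  have hx34 : 1 ≤ x ^ (3 / 4 : ℝ) := Real.one_le_rpow h1 (by norm_num)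
  have hm2 : (m : ℝ) ≤ 2 * x ^ (3 / 4 : ℝ) := by
    have := Nat.ceil_lt_add_one (a := x ^ (3 / 4 : ℝ)) (by positivity)
    linarith
  have hmk : m ≤ k := by
    refine Nat.ceil_le.2 ?_
    calc x ^ (3 / 4 : ℝ) ≤ x ^ (1 : ℝ) :=
          Real.rpow_le_rpow_of_exponent_le h1 (by norm_num)
      _ = k := by rw [Real.rpow_one]
  have hmR : (m : ℝ) ≤ x := by rw [hx]; exact_mod_cast hmk
  have hm1' : (1 : ℝ) ≤ m := hx34.trans hm1
  set e : ℕ := ⌈2 * m / κ⌉₊ + 1 with hedef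
  have he : 2 * (m : ℝ) / κ + 1 ≤ (e : ℝ) := by
    rw [hedef]; push_cast
    linarith [Nat.le_ceil (2 * (m : ℝ) / κ)]
  set d : ℕ := (m + 1) + e with hddef
  have hd : (d : ℝ) ≤ C * x ^ (3 / 4 : ℝ) := by
    have e1 := Nat.ceil_lt_add_one (a := 2 * (m : ℝ) / κ) (by positivity)
    have e2 : (d : ℝ) ≤ (2 / κ + 4) * m := by
      have e3 : 2 * (m : ℝ) / κ = 2 / κ * m := by ring
      rw [hddef, hedef]; push_cast
      rw [add_mul, ← e3]
      linarith
    calc (d : ℝ) ≤ (2 / κ + 4) * m := e2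
      _ ≤ (2 / κ + 4) * (2 * x ^ (3 / 4 : ℝ)) := by gcongr
      _ = C * x ^ (3 / 4 : ℝ) := by rw [hCdef]; ring
  have hmn : (p : ℝ) * (1 - (m : ℝ) / (2 * (k : ℝ))) ^ m ≤ ((p : ℝ) ^ 4)⁻¹ := by
    have e1 : (1 - (m : ℝ) / (2 * x)) ^ m ≤ Real.exp (-((m : ℝ) / (2 * x) * m)) := by
      calc (1 - (m : ℝ) / (2 * x)) ^ m ≤ Real.exp (-((m : ℝ) / (2 * x))) ^ m := by
            refine pow_le_pow_left₀ ?_ (Real.one_sub_le_exp_neg _) _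
            rw [sub_nonneg, div_le_one (by positivity)]; linarith
        _ = _ := by rw [← Real.exp_nat_mul]; congr 1; ring
    have e2 : x ^ (1 / 2 : ℝ) / 2 ≤ (m : ℝ) / (2 * x) * m := by
      have e3 : x ^ (3 / 4 : ℝ) * x ^ (3 / 4 : ℝ) = x ^ (1 / 2 : ℝ) * x := by
        rw [← Real.rpow_add hx0, ← Real.rpow_add_one hx0.ne']; norm_num
      have e4 : x ^ (1 / 2 : ℝ) * x ≤ m * m := by
        rw [← e3]; exact mul_le_mul hm1 hm1 (by positivity) (by positivity)
      rw [div_mul_eq_mul_div, le_div_iff₀ (by positivity)]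
      linarith
    calc (p : ℝ) * (1 - (m : ℝ) / (2 * x)) ^ m
        ≤ Real.exp (Real.log p) * Real.exp (-((m : ℝ) / (2 * x) * m)) := by
          rw [← hpe]; gcongr
      _ ≤ Real.exp (-(4 * Real.log p)) := by
          rw [← Real.exp_add]
          refine Real.exp_le_exp.2 ?_
          linarith
      _ = ((p : ℝ) ^ 4)⁻¹ := by
          rw [Real.exp_neg, hpe, ← Real.exp_nat_mul, Real.log_exp]; norm_num
  refine (h.prob_bad_le hα hκ ha ha2.le hmk hmn le_rfl he le_rfl).trans ?_
  have hkpos : x = Real.exp (Real.log x) := (Real.exp_log hx0).symm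
  have hθe : θ = Real.exp (-l) := by rw [hldef, neg_neg, Real.exp_log hθ0]
  have hbase : ((k : ℝ) * p) ^ d * ((p : ℝ) ^ d * θ ^ (k - d))
      = Real.exp (d * (Real.log x + 2 * Real.log p) - ((k - d : ℕ) : ℝ) * l) := by
    rw [← hx, hθe]
    nth_rewrite 1 [hkpos]
    nth_rewrite 1 2 [hpe]
    rw [← Real.exp_add, ← Real.exp_nat_mul, ← Real.exp_nat_mul, ← Real.exp_nat_mul,
      ← Real.exp_add, ← Real.exp_add]
    congr 1; ring
  change ((k : ℝ) * p) ^ d * ((p : ℝ) ^ d * θ ^ (k - d)) ≤ _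
  rw [hbase]
  refine Real.exp_le_exp.2 ?_
  have hsub : x - d ≤ ((k - d : ℕ) : ℝ) := by
    rw [hx, sub_le_iff_le_add]; exact_mod_cast le_tsub_add
  have e1 : (d : ℝ) * (Real.log x + 2 * Real.log p) ≤ 5 * C * x ^ (17 / 20 : ℝ) := by
    calc (d : ℝ) * (Real.log x + 2 * Real.log p) ≤ d * (5 * x ^ (1 / 10 : ℝ)) := by
          gcongr; linarith
      _ ≤ C * x ^ (3 / 4 : ℝ) * (5 * x ^ (1 / 10 : ℝ)) := by gcongr
      _ = 5 * C * (x ^ (3 / 4 : ℝ) * x ^ (1 / 10 : ℝ)) := by ring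
      _ = 5 * C * x ^ (17 / 20 : ℝ) := by rw [← Real.rpow_add hx0]; norm_num
  have e2 : (x - C * x ^ (3 / 4 : ℝ)) * l ≤ ((k - d : ℕ) : ℝ) * l := by
    gcongr; linarith
  rw [Real.rpow_one] at h4 h5 h6
  nlinarith

/-- The bound for large `n` and `p ≥ 5`. The chain starts at `k₀ = ⌊√n⌋`, so that `p ≤ exp (n ^ (1/20))`
implies `p ≤ exp ((k + 1) ^ (1/10))` for every `k ≥ k₀`. -/
lemma exists_main_bound (hα : 0 < α) : ∃ N₁ : ℕ, 3 ≤ N₁ ∧ ∀ n : ℕ, N₁ ≤ n →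
    ∀ (p : ℕ) [Fact p.Prime] (ν : ZMod p → ℝ), IsBal α ν → 5 ≤ p →
    (p : ℝ) ≤ Real.exp ((n : ℝ) ^ (1 / 20 : ℝ)) →
    Ex ν n (fun A => if p ^ 3 ≤ (ker A).card then 1 else 0)
      ≤ 8 * ((p : ℝ)⁻¹ ^ 3 + Real.exp (-(n : ℝ) ^ (1 / 20 : ℝ))) := by
  classical
  obtain ⟨N₀, hN₀⟩ := exists_prob_bad_le hα
  have hev : ∀ᶠ x : ℝ in atTop, 4 ≤ x ∧ Real.log x ≤ x ^ (1 / 20 : ℝ) ∧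
      2 * x ^ (1 / 20 : ℝ) ≤ (1 / 2) * x ^ (1 / 4 : ℝ) ∧
      6 * x ^ (11 / 20 : ℝ) ≤ (1 / 2) * x ^ (1 : ℝ) := by
    filter_upwards [eventually_ge_atTop 4, eventually_log_le (b := 1 / 20) (by norm_num),
      eventually_rpow_le (a := 1 / 20) (b := 1 / 4) (A := 2) (B := 1 / 2) (by norm_num)
        (by norm_num),
      eventually_rpow_le (a := 11 / 20) (b := 1) (A := 6) (B := 1 / 2) (by norm_num)
        (by norm_num)] with x h1 h2 h3 h4
    exact ⟨h1, h2, h3, h4⟩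
  obtain ⟨N₂, hN₂⟩ := eventually_atTop.1 (tendsto_natCast_atTop_atTop.eventually hev)
  refine ⟨max (max 3 N₂) (N₀ ^ 2), le_max_of_le_left (le_max_left _ _),
    fun n hn p _ ν h hp5 hp => ?_⟩
  obtain ⟨h1, h2, h3, h4⟩ := hN₂ n ((le_max_right _ _).trans ((le_max_left _ _).trans hn))
  have hnN₀ : N₀ ^ 2 ≤ n := (le_max_right _ _).trans hn
  set x : ℝ := (n : ℝ) with hx
  have hx0 : 0 < x := by linarith
  have hp0 : (0 : ℝ) < p := by exact_mod_cast (Fact.out : p.Prime).pos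
  set k₀ : ℕ := Nat.sqrt n with hk₀
  have hk₀n : k₀ ≤ n := Nat.sqrt_le_self n
  have hk₀N : N₀ ≤ k₀ := Nat.le_sqrt'.2 hnN₀
  have hlt : x < ((k₀ : ℝ) + 1) ^ 2 := by rw [hx]; exact_mod_cast Nat.lt_succ_sqrt' n
  have hle : (k₀ : ℝ) ^ 2 ≤ x := by rw [hx]; exact_mod_cast Nat.sqrt_le' n
  have hβ : ∀ k, k₀ ≤ k → k < n → Ex ν k (fun A => if Bad ν A then 1 else 0)
      ≤ Real.exp (-(k₀ : ℝ) ^ (1 / 2 : ℝ)) := by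
    intro k hk _
    have hkR : (k₀ : ℝ) ≤ k := by exact_mod_cast hk
    refine (hN₀ k (hk₀N.trans hk) p ν h (hp.trans (Real.exp_le_exp.2 ?_))).trans
      (Real.exp_le_exp.2 (neg_le_neg ?_))
    · calc x ^ (1 / 20 : ℝ) ≤ (((k : ℝ) + 1) ^ (2 : ℝ)) ^ (1 / 20 : ℝ) := by
            refine Real.rpow_le_rpow hx0.le ?_ (by norm_num)
            rw [Real.rpow_two]
            refine hlt.le.trans ?_
            gcongr
        _ = ((k : ℝ) + 1) ^ (1 / 10 : ℝ) := by
            rw [← Real.rpow_mul (by positivity)]; norm_num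
    · exact Real.rpow_le_rpow (by positivity) hkR (by norm_num)
  refine (h.prob_ker_le hp5 k₀ n hk₀n _ hβ (Real.exp_pos _).le).trans ?_
  have hL : Real.log p ≤ x ^ (1 / 20 : ℝ) := by
    rw [← Real.log_exp (x ^ (1 / 20 : ℝ))]
    exact Real.log_le_log hp0 hp
  have hL0 : 0 ≤ Real.log p := Real.log_nonneg (by exact_mod_cast (Fact.out : p.Prime).one_le)
  have hsq : x ^ (1 / 2 : ℝ) * x ^ (1 / 2 : ℝ) = x := by
    rw [← Real.rpow_add hx0]; norm_num
  have hk₀u : (k₀ : ℝ) ≤ x ^ (1 / 2 : ℝ) := by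
    refine abs_le_of_sq_le_sq' ?_ (by positivity) |>.2
    rw [sq (x ^ (1 / 2 : ℝ)), hsq]; exact hle
  -- the first error term
  have t1 : x * Real.exp (-(k₀ : ℝ) ^ (1 / 2 : ℝ)) ≤ Real.exp (-x ^ (1 / 20 : ℝ)) := by
    have e1 : x ^ (1 / 4 : ℝ) / 2 ≤ (k₀ : ℝ) ^ (1 / 2 : ℝ) := by
      have e2 : x / 16 ≤ (k₀ : ℝ) ^ 2 := by
        have e3 : (1 : ℝ) ≤ k₀ := by
          have : 1 ≤ k₀ := by
            rw [hk₀]; refine Nat.le_sqrt'.2 ?_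
            have : (1 : ℝ) ≤ n := by linarith
            simpa using (by exact_mod_cast this : 1 ≤ n)
          exact_mod_cast this
        nlinarith
      have e4 : (x / 16) ^ (1 / 4 : ℝ) ≤ ((k₀ : ℝ) ^ (2 : ℝ)) ^ (1 / 4 : ℝ) := by
        rw [Real.rpow_two]
        exact Real.rpow_le_rpow (by positivity) e2 (by norm_num)
      rw [← Real.rpow_mul (by positivity), Real.div_rpow hx0.le (by norm_num)] at e4
      have e5 : (16 : ℝ) ^ (1 / 4 : ℝ) = 2 := by
        rw [show (16 : ℝ) = 2 ^ (4 : ℝ) by norm_num, ← Real.rpow_mul (by norm_num)]; norm_num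
      rw [e5] at e4
      convert e4 using 2
      norm_num
    calc x * Real.exp (-(k₀ : ℝ) ^ (1 / 2 : ℝ))
        = Real.exp (Real.log x + -(k₀ : ℝ) ^ (1 / 2 : ℝ)) := by
          rw [Real.exp_add, Real.exp_log hx0]
      _ ≤ _ := Real.exp_le_exp.2 (by linarith)
  -- the second error term
  have t2 : (1 / 2 : ℝ) ^ (n - k₀) * (5 * (p : ℝ) ^ (2 * k₀)) ≤ Real.exp (-x ^ (1 / 20 : ℝ)) := by
    have e1 : (1 / 2 : ℝ) ^ (n - k₀) ≤ Real.exp (-(x - k₀) / 2) := by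
      have : (1 / 2 : ℝ) ≤ Real.exp (-(1 / 2)) := by
        have := Real.one_sub_le_exp_neg (1 / 2)
        linarith
      calc (1 / 2 : ℝ) ^ (n - k₀) ≤ Real.exp (-(1 / 2)) ^ (n - k₀) := by gcongr
        _ = Real.exp (-(x - k₀) / 2) := by
            rw [← Real.exp_nat_mul, Nat.cast_sub hk₀n]; congr 1; ring
    have e2 : (5 : ℝ) ≤ Real.exp 2 := by
      have := Real.quadratic_le_exp_of_nonneg (x := 2) (by norm_num)
      linarith
    have e3 : (p : ℝ) ^ (2 * k₀) = Real.exp (2 * k₀ * Real.log p) := by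
      rw [mul_comm (2 * (k₀ : ℝ)), Real.exp_mul, Real.exp_log hp0]
      exact_mod_cast rfl
    have e4 : (k₀ : ℝ) * Real.log p ≤ x ^ (11 / 20 : ℝ) := by
      calc (k₀ : ℝ) * Real.log p ≤ x ^ (1 / 2 : ℝ) * x ^ (1 / 20 : ℝ) := by gcongr
        _ = x ^ (11 / 20 : ℝ) := by rw [← Real.rpow_add hx0]; norm_num
    have m1 : x ^ (1 / 2 : ℝ) ≤ x ^ (11 / 20 : ℝ) :=
      Real.rpow_le_rpow_of_exponent_le (by linarith) (by norm_num)
    have m2 : x ^ (1 / 20 : ℝ) ≤ x ^ (11 / 20 : ℝ) :=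
      Real.rpow_le_rpow_of_exponent_le (by linarith) (by norm_num)
    have m3 : 1 ≤ x ^ (11 / 20 : ℝ) := Real.one_le_rpow (by linarith) (by norm_num)
    rw [Real.rpow_one] at h4
    calc (1 / 2 : ℝ) ^ (n - k₀) * (5 * (p : ℝ) ^ (2 * k₀))
        ≤ Real.exp (-(x - k₀) / 2) * (Real.exp 2 * Real.exp (2 * k₀ * Real.log p)) := by
          rw [e3]; gcongr
      _ = Real.exp (-(x - k₀) / 2 + (2 + 2 * k₀ * Real.log p)) := by
          rw [Real.exp_add, Real.exp_add]
      _ ≤ _ := Real.exp_le_exp.2 (by linarith)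
  have := Real.exp_pos (-x ^ (1 / 20 : ℝ))
  linarith

end

end SkewCorank

theorem moderate_primes_corank_skew (α : ℝ) (hα : 0 < α)
    (μ : Measure ℤ) (hμ : IsProbabilityMeasure μ) (hbal : IsBalanced α μ) :
    ∃ c : ℝ, 0 < c ∧ ∃ K : ℝ, 0 < K ∧
      ∀ (n p : ℕ), p.Prime → (p : ℝ) ≤ Real.exp ((n : ℝ) ^ c) →
        ((matMeasure μ hμ n)
            {x | ((skewMatrix n x).map (fun z : ℤ => (z : ZMod p))).rank ≤ n - 3}).toReal
          ≤ K * ((p : ℝ)⁻¹ ^ 3 + Real.exp (-(n : ℝ) ^ c)) := by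
  classical
  obtain ⟨N, hN3, hN⟩ := SkewCorank.exists_main_bound hα
  refine ⟨1 / 20, by norm_num, 125 + Real.exp ((N : ℝ) ^ (1 / 20 : ℝ)), by positivity, ?_⟩
  intro n p hp hpn
  have : Fact p.Prime := ⟨hp⟩
  have : IsProbabilityMeasure (matMeasure μ hμ n) := by
    unfold matMeasure; infer_instance
  have hp0 : (0 : ℝ) < p := by exact_mod_cast hp.pos
  set B : ℝ := Real.exp ((N : ℝ) ^ (1 / 20 : ℝ)) with hB
  have hB0 : 0 < B := Real.exp_pos _
  have hE0 : 0 < Real.exp (-(n : ℝ) ^ (1 / 20 : ℝ)) := Real.exp_pos _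
  have hp3 : 0 < (p : ℝ)⁻¹ ^ 3 := by positivity
  have hle1 : ((matMeasure μ hμ n)
      {x | ((skewMatrix n x).map (fun z : ℤ => (z : ZMod p))).rank ≤ n - 3}).toReal ≤ 1 :=
    measureReal_le_one
  rcases lt_or_ge n N with hn | hn
  · refine hle1.trans ?_
    have e1 : 1 ≤ B * Real.exp (-(n : ℝ) ^ (1 / 20 : ℝ)) := by
      rw [hB, ← Real.exp_add]
      refine Real.one_le_exp ?_
      have : (n : ℝ) ^ (1 / 20 : ℝ) ≤ (N : ℝ) ^ (1 / 20 : ℝ) :=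
        Real.rpow_le_rpow (by positivity) (by exact_mod_cast hn.le) (by norm_num)
      linarith
    nlinarith [mul_pos hB0 hp3]
  rcases lt_or_ge p 5 with hp5 | hp5
  · refine hle1.trans ?_
    have e1 : (5 : ℝ)⁻¹ ^ 3 ≤ (p : ℝ)⁻¹ ^ 3 := by
      have : (p : ℝ) ≤ 5 := by exact_mod_cast hp5.le
      gcongr
    have e2 : (5 : ℝ)⁻¹ ^ 3 = 1 / 125 := by norm_num
    nlinarith [mul_pos hB0 hp3, mul_pos hB0 hE0]
  have hν : SkewCorank.IsBal α (SkewCorank.resLaw μ p) := SkewCorank.isBal_resLaw hμ hbal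
  simp only [SkewCorank.skewMatrix_map]
  refine (SkewCorank.measure_le_sum hμ n
    fun y => (SkewCorank.skew n y).rank ≤ n - 3).trans ?_
  have h1 := hN n hn p _ hν hp5 hpn
  refine le_trans (Finset.sum_le_sum fun y _ => mul_le_mul_of_nonneg_left ?_ (hν.wt_nonneg y))
    (h1.trans (mul_le_mul_of_nonneg_right (by linarith) (by positivity)))
  dsimp only
  split_ifs with a b b
  · exact le_rfl
  · exact absurd (SkewCorank.pow_three_le_card_ker (hN3.trans hn) _ a) b
  · exact zero_le_one
  · exact le_rfl
end
end

section
/- There exist positive constants c and c', depending only on α, such that the following holds. Let k ≤ N ≤ m ≤ n be positive integers, let G_n be any one of the random matrix models M_n (symmetric), A_n (skew-symmetric), or L_n (reduced Laplacian), and let p be any prime. Then with probability at least 1 − exp(−c k² + c' m), for every pair of subsets I, J ⊆ {1,…,m} with |I| = |J| = N, the submatrix (G_n)_{I×J} reduced modulo p has rank at least N − k over 𝔽_p. -/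
/-!
Write `A × B` for the block of a matrix with rows `A` and columns `B`. If the rows `R` are
independent on the columns `C`, and on `C ∪ B` they span the rows `A`, then the block `A × B` is
a function of the blocks `R × (C ∪ B)` and `A × C` (`Degenerate.unique`): the coefficients of the
linear combinations can be read off on `C`.

A minor `I × J` of corank more than `k` of a symmetric or skew-symmetric matrix contains such a
configuration with `|A| = |B| = 2 ⌊k / 8⌋`, `A` disjoint from `R ∪ C ∪ B` and `B` disjoint from
`C` (`exists_degenerate`). Take a row basis containing as many rows of `I ∩ J` as possible. If at
least `k / 2` of the remaining rows are in `I \ J`, choose `A` among these. Otherwise the principal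
minor on `I ∩ J` has corank at least about `k / 2`; by symmetry a row basis of it is also a column
basis, and `A`, `B` are disjoint sets of indices outside this basis. The disjointness guarantees
that the entries of `A × B` do not reappear, transposed, in the blocks that determine them.

Hence for fixed `(R, C, A, B)` and independent entries the configuration is degenerate with
probability at most `(1 - α) ^ (|A| |B|)` (`iid_degenerate_le`). For the reduced Laplacian the
diagonal entries depend on the edges of `A × B`, but only the degrees of vertices outside `A`
matter. Splitting `A` into pairs `{a₀, a₁}` and fixing the sums `x_{a₀ b} + x_{a₁ b}` fixes these
degrees, and still leaves a bound `(3 / 4) ^ (|A| |B| / 2)` (`lap_degenerate_le`). A union bound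
over the `16 ^ m` configurations finishes the proof (`prob_allMinorsLargeRank`).
-/

open MeasureTheory Filter

noncomputable section

def symMatrix (n : ℕ) (x : Fin n × Fin n → ℤ) : Matrix (Fin n) (Fin n) ℤ :=
  Matrix.of fun i j => if i ≤ j then x (i, j) else x (j, i)

def edgeInd {n : ℕ} (x : Fin n × Fin n → Bool) (i j : Fin n) : ℤ :=
  if i < j then (if x (i, j) then 1 else 0)
  else if j < i then (if x (j, i) then 1 else 0) else 0

def redLap (n : ℕ) (x : Fin (n + 1) × Fin (n + 1) → Bool) : Matrix (Fin n) (Fin n) ℤ :=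
  Matrix.of fun i j =>
    if i = j then -(∑ k : Fin (n + 1), edgeInd x k i.castSucc)
    else edgeInd x i.castSucc j.castSucc

def graphMeasure (n : ℕ) : Measure (Fin (n + 1) × Fin (n + 1) → Bool) :=
  (PMF.uniformOfFintype (Fin (n + 1) × Fin (n + 1) → Bool)).toMeasure

/-- All `N × N` minors with indices below `m` of the mod-`p` reduction of `M` have
rank at least `N - k`. -/
def AllMinorsLargeRank {n : ℕ} (p : ℕ) (M : Matrix (Fin n) (Fin n) ℤ)
    (N m k : ℕ) : Prop :=
  ∀ I J : Finset (Fin n), I.card = N → J.card = N →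
    (∀ i ∈ I, (i : ℕ) < m) → (∀ j ∈ J, (j : ℕ) < m) →
    N - k ≤ ((M.map (fun z : ℤ => (z : ZMod p))).submatrix
      (fun i : {a // a ∈ I} => (i : Fin n)) (fun j : {a // a ∈ J} => (j : Fin n))).rank

/-! ### Degenerate configurations -/

/-- The rows of `G` indexed by `R`, cut down to the columns `J`, are linearly independent. -/
def RowIndep {F : Type*} [Field F] {n : ℕ} (G : Matrix (Fin n) (Fin n) F)
    (R J : Finset (Fin n)) : Prop :=
  ∀ u : Fin n → F, (∀ j ∈ J, ∑ r ∈ R, u r * G r j = 0) → ∀ r ∈ R, u r = 0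

/-- On the columns `J`, the row `i` of `G` is a linear combination of the rows in `R`. -/
def InRowSpan {F : Type*} [Field F] {n : ℕ} (G : Matrix (Fin n) (Fin n) F)
    (R J : Finset (Fin n)) (i : Fin n) : Prop :=
  ∃ u : Fin n → F, ∀ j ∈ J, G i j = ∑ r ∈ R, u r * G r j

/-- The degenerate configuration: the rows `R` are independent already on the columns `C`, and
on the columns `C ∪ B` they span all rows in `A`. It forces the block `A × B` to be a function of
the blocks `R × (C ∪ B)` and `A × C`. -/
def Degenerate {F : Type*} [Field F] {n : ℕ} (G : Matrix (Fin n) (Fin n) F)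
    (R C A B : Finset (Fin n)) : Prop :=
  RowIndep G R C ∧ ∀ i ∈ A, InRowSpan G R (C ∪ B) i

section Deterministic

variable {F : Type*} [Field F] {n : ℕ}

theorem RowIndep.insert_row {G : Matrix (Fin n) (Fin n) F} {R J : Finset (Fin n)}
    (h : RowIndep G R J) {i : Fin n} (hi : i ∉ R) (hs : ¬ InRowSpan G R J i) :
    RowIndep G (insert i R) J := by
  intro u hu
  have hui : u i = 0 := by
    by_contra hne
    apply hs
    refine ⟨fun r => -(u r / u i), fun j hj => ?_⟩
    have := hu j hj
    rw [Finset.sum_insert hi] at this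
    have h2 : ∑ r ∈ R, -(u r / u i) * G r j = -(u i)⁻¹ * ∑ r ∈ R, u r * G r j := by
      rw [Finset.mul_sum]
      exact Finset.sum_congr rfl fun r _ => by ring
    rw [h2, eq_neg_of_add_eq_zero_right this]
    field_simp
  have hR := h u fun j hj => by
    have := hu j hj
    rwa [Finset.sum_insert hi, hui, zero_mul, zero_add] at this
  intro r hr
  rcases Finset.mem_insert.1 hr with rfl | hr
  · exact hui
  · exact hR r hr

/-- An independent set of rows extends to a row basis inside `I`. -/
theorem exists_row_basis (G : Matrix (Fin n) (Fin n) F) (I J R₀ : Finset (Fin n))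
    (hR₀ : R₀ ⊆ I) (h : RowIndep G R₀ J) :
    ∃ R, R₀ ⊆ R ∧ R ⊆ I ∧ RowIndep G R J ∧ ∀ i ∈ I, InRowSpan G R J i := by
  classical
  obtain ⟨R, hR, hmax⟩ := Finset.exists_max_image
    (Finset.univ.filter fun R : Finset (Fin n) => R₀ ⊆ R ∧ R ⊆ I ∧ RowIndep G R J)
    Finset.card ⟨R₀, by simp [hR₀, h]⟩
  simp only [Finset.mem_filter, Finset.mem_univ, true_and] at hR hmax
  refine ⟨R, hR.1, hR.2.1, hR.2.2, fun i hi => ?_⟩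
  by_contra hs
  have hiR : i ∉ R := fun hiR => hs ⟨fun r => if r = i then 1 else 0, fun j _ => by simp [hiR]⟩
  have := hmax (insert i R) ⟨hR.1.trans (Finset.subset_insert _ _),
    Finset.insert_subset hi hR.2.1, hR.2.2.insert_row hiR hs⟩
  rw [Finset.card_insert_of_notMem hiR] at this
  omega

theorem RowIndep.card_le_rank {G : Matrix (Fin n) (Fin n) F} {R I J : Finset (Fin n)}
    (h : RowIndep G R J) (hRI : R ⊆ I) :
    R.card ≤ (G.submatrix (fun i : {a // a ∈ I} => (i : Fin n))
      (fun j : {a // a ∈ J} => (j : Fin n))).rank := by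
  classical
  have hli : LinearIndependent F
      (fun r : {a // a ∈ R} => fun j : {a // a ∈ J} => G (r : Fin n) (j : Fin n)) := by
    rw [Fintype.linearIndependent_iff]
    intro g hg r
    have := h (fun i => if hi : i ∈ R then g ⟨i, hi⟩ else 0) (fun j hj => by
      have h1 := congrFun hg ⟨j, hj⟩
      rw [← Finset.sum_coe_sort]
      simpa using h1) r r.2
    simpa using this
  rw [Matrix.rank_eq_finrank_span_row]
  have h1 := finrank_span_eq_card hli
  rw [Fintype.card_coe] at h1
  rw [← h1]
  apply Submodule.finrank_mono
  apply Submodule.span_mono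
  rintro _ ⟨r, rfl⟩
  exact ⟨⟨r, hRI r.2⟩, rfl⟩

/-- Independence on the columns `J` may be tested on a column basis. -/
theorem RowIndep.restrict {G : Matrix (Fin n) (Fin n) F} {R C J : Finset (Fin n)}
    (h : RowIndep G R J)
    (hC : ∀ j ∈ J, ∃ w : Fin n → F, ∀ r ∈ R, G r j = ∑ c ∈ C, w c * G r c) :
    RowIndep G R C := by
  intro u hu
  refine h u fun j hj => ?_
  obtain ⟨w, hw⟩ := hC j hj
  calc ∑ r ∈ R, u r * G r j = ∑ r ∈ R, ∑ c ∈ C, w c * (u r * G r c) := by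
        refine Finset.sum_congr rfl fun r hr => ?_
        rw [hw r hr, Finset.mul_sum]
        exact Finset.sum_congr rfl fun c _ => by ring
    _ = ∑ c ∈ C, w c * ∑ r ∈ R, u r * G r c := by
        rw [Finset.sum_comm]
        exact Finset.sum_congr rfl fun c _ => by rw [Finset.mul_sum]
    _ = 0 := Finset.sum_eq_zero fun c hc => by rw [hu c hc, mul_zero]

/-- The block `A × B` is determined by the blocks `R × (C ∪ B)` and `A × C`. -/
theorem Degenerate.unique {G G' : Matrix (Fin n) (Fin n) F} {R C A B : Finset (Fin n)}
    (h : Degenerate G R C A B) (h' : Degenerate G' R C A B)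
    (hR : ∀ i ∈ R, ∀ j ∈ C ∪ B, G i j = G' i j) (hA : ∀ i ∈ A, ∀ j ∈ C, G i j = G' i j) :
    ∀ i ∈ A, ∀ j ∈ B, G i j = G' i j := by
  intro i hi j hj
  obtain ⟨u, hu⟩ := h.2 i hi
  obtain ⟨u', hu'⟩ := h'.2 i hi
  have key : ∀ r ∈ R, u r - u' r = 0 := h.1 (fun r => u r - u' r) fun c hc => by
    have hc' : c ∈ C ∪ B := Finset.mem_union_left _ hc
    have e1 : ∑ r ∈ R, u' r * G r c = ∑ r ∈ R, u' r * G' r c :=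
      Finset.sum_congr rfl fun r hr => by rw [hR r hr c hc']
    simp only [sub_mul, Finset.sum_sub_distrib]
    rw [e1, ← hu c hc', ← hu' c hc', hA i hi c hc, sub_self]
  have hj' : j ∈ C ∪ B := Finset.mem_union_right _ hj
  rw [hu j hj', hu' j hj']
  exact Finset.sum_congr rfl fun r hr => by rw [hR r hr j hj', sub_eq_zero.1 (key r hr)]

/-- A low-rank minor of a symmetric (`e = 1`) or skew-symmetric (`e = -1`) matrix contains a
degenerate configuration in which `A × B` shares no entry, up to transposition, with the other
blocks. If `4 g` non-basis rows lie outside `J`, `A` is chosen among them; otherwise the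
principal minor on `I ∩ J` is degenerate, and there one index set is both a row and a column
basis. -/
theorem exists_degenerate (G : Matrix (Fin n) (Fin n) F) (e : F)
    (hG : ∀ i j, G i j = e * G j i) (I J : Finset (Fin n)) (N g : ℕ)
    (hI : I.card = N) (hJ : J.card = N)
    (hrank : (G.submatrix (fun i : {a // a ∈ I} => (i : Fin n))
      (fun j : {a // a ∈ J} => (j : Fin n))).rank + 8 * g ≤ N) :
    ∃ R C A B : Finset (Fin n), R ⊆ I ∪ J ∧ C ⊆ I ∪ J ∧ A ⊆ I ∪ J ∧ B ⊆ I ∪ J ∧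
      A.card = 2 * g ∧ B.card = 2 * g ∧ Disjoint A R ∧ Disjoint A C ∧ Disjoint A B ∧
      Disjoint B C ∧ Degenerate G R C A B := by
  classical
  have hIS : I ∩ J ⊆ I := Finset.inter_subset_left
  obtain ⟨R₀, -, hR₀S, hR₀i, hR₀s⟩ := exists_row_basis G (I ∩ J) J ∅ (Finset.empty_subset _)
    (fun _ _ r hr => absurd hr (Finset.notMem_empty r))
  obtain ⟨R, hR₀R, hRI, hRi, hRs⟩ := exists_row_basis G I J R₀ (hR₀S.trans hIS) hR₀i
  have hRcard := hRi.card_le_rank hRI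
  have hsplit : I \ R ⊆ ((I ∩ J) \ R₀) ∪ ((I \ J) \ R) := by
    intro i hi
    simp only [Finset.mem_sdiff, Finset.mem_union, Finset.mem_inter] at hi ⊢
    by_cases hiJ : i ∈ J
    · exact Or.inl ⟨⟨hi.1, hiJ⟩, fun h => hi.2 (hR₀R h)⟩
    · exact Or.inr ⟨⟨hi.1, hiJ⟩, hi.2⟩
  have hc1 := (Finset.card_le_card hsplit).trans (Finset.card_union_le _ _)
  have hc2 := Finset.card_sdiff_add_card_eq_card hRI
  rcases le_total (4 * g) ((I \ J) \ R).card with hcase | hcase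
  · obtain ⟨C, -, hCJ, hCi, hCs⟩ := exists_row_basis G.transpose J I ∅ (Finset.empty_subset _)
      (fun _ _ r hr => absurd hr (Finset.notMem_empty r))
    have hCcard := hCi.card_le_rank hCJ
    rw [← Matrix.transpose_submatrix, Matrix.rank_transpose] at hCcard
    have hc3 := Finset.card_sdiff_add_card_eq_card hCJ
    obtain ⟨A, hA, hAc⟩ := Finset.exists_subset_card_eq
      (show 2 * g ≤ ((I \ J) \ R).card by omega)
    obtain ⟨B, hB, hBc⟩ := Finset.exists_subset_card_eq
      (show 2 * g ≤ (J \ C).card by omega)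
    have hAJ : Disjoint A J := Finset.disjoint_left.2 fun i hi =>
      (Finset.mem_sdiff.1 (Finset.mem_sdiff.1 (hA hi)).1).2
    have hAI : A ⊆ I := fun i hi => (Finset.mem_sdiff.1 (Finset.mem_sdiff.1 (hA hi)).1).1
    have hBJ : B ⊆ J := fun i hi => (Finset.mem_sdiff.1 (hB hi)).1
    refine ⟨R, C, A, B, hRI.trans Finset.subset_union_left, hCJ.trans Finset.subset_union_right,
      hAI.trans Finset.subset_union_left, hBJ.trans Finset.subset_union_right, hAc, hBc,
      Finset.disjoint_left.2 fun i hi => (Finset.mem_sdiff.1 (hA hi)).2,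
      hAJ.mono_right hCJ, hAJ.mono_right hBJ,
      Finset.disjoint_left.2 fun i hi => (Finset.mem_sdiff.1 (hB hi)).2, ?_, ?_⟩
    · refine hRi.restrict fun j hj => ?_
      obtain ⟨w, hw⟩ := hCs j hj
      exact ⟨w, fun r hr => hw r (hRI hr)⟩
    · intro i hi
      obtain ⟨u, hu⟩ := hRs i (hAI hi)
      exact ⟨u, fun j hj => hu j (Finset.union_subset hCJ hBJ hj)⟩
  · -- The basis for the columns `I ∩ J` is extracted from `R₀`, so it is at most as large.
    obtain ⟨R₁, -, hR₁R₀, hR₁i, hR₁s⟩ := exists_row_basis G R₀ (I ∩ J) ∅ (Finset.empty_subset _)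
      (fun _ _ r hr => absurd hr (Finset.notMem_empty r))
    have hspan : ∀ i ∈ I ∩ J, InRowSpan G R₁ (I ∩ J) i := by
      intro i hi
      obtain ⟨u, hu⟩ := hR₀s i hi
      choose! w hw using hR₁s
      refine ⟨fun s => ∑ r ∈ R₀, u r * w r s, fun j hj => ?_⟩
      rw [hu j (Finset.mem_inter.1 hj).2]
      calc ∑ r ∈ R₀, u r * G r j = ∑ r ∈ R₀, ∑ s ∈ R₁, u r * w r s * G s j := by
            refine Finset.sum_congr rfl fun r hr => ?_
            rw [hw r hr j hj, Finset.mul_sum]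
            exact Finset.sum_congr rfl fun s _ => by ring
        _ = _ := by
            rw [Finset.sum_comm]
            exact Finset.sum_congr rfl fun s _ => by rw [Finset.sum_mul]
    have hR₁S : R₁ ⊆ I ∩ J := hR₁R₀.trans hR₀S
    have hc3 : 4 * g ≤ ((I ∩ J) \ R₁).card :=
      le_trans (by omega) (Finset.card_le_card (Finset.sdiff_subset_sdiff le_rfl hR₁R₀))
    obtain ⟨A, hA, hAc⟩ := Finset.exists_subset_card_eq
      (show 2 * g ≤ ((I ∩ J) \ R₁).card by omega)
    have hc4 := Finset.card_sdiff_add_card_eq_card hA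
    obtain ⟨B, hB, hBc⟩ := Finset.exists_subset_card_eq
      (show 2 * g ≤ (((I ∩ J) \ R₁) \ A).card by omega)
    have hBT : B ⊆ (I ∩ J) \ R₁ := hB.trans Finset.sdiff_subset
    have hAS : A ⊆ I ∩ J := hA.trans Finset.sdiff_subset
    have hBS : B ⊆ I ∩ J := hBT.trans Finset.sdiff_subset
    have hSU : I ∩ J ⊆ I ∪ J := hIS.trans Finset.subset_union_left
    have hAR : Disjoint A R₁ := Finset.disjoint_left.2 fun i hi => (Finset.mem_sdiff.1 (hA hi)).2
    refine ⟨R₁, R₁, A, B, hR₁S.trans hSU, hR₁S.trans hSU, hAS.trans hSU, hBS.trans hSU, hAc, hBc,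
      hAR, hAR, (Finset.disjoint_left.2 fun i hi => (Finset.mem_sdiff.1 (hB hi)).2).symm,
      Finset.disjoint_left.2 fun i hi => (Finset.mem_sdiff.1 (hBT hi)).2, ?_, ?_⟩
    · refine hR₁i.restrict fun j hj => ?_
      obtain ⟨w, hw⟩ := hspan j hj
      refine ⟨w, fun r hr => ?_⟩
      rw [hG r j, hw r (hR₁S hr), Finset.mul_sum]
      exact Finset.sum_congr rfl fun s _ => by rw [hG r s]; ring
    · intro i hi
      obtain ⟨u, hu⟩ := hspan i (hAS hi)
      exact ⟨u, fun j hj => hu j (Finset.union_subset hR₁S hBS hj)⟩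

end Deterministic

/-! ### Union bound and product measures -/

/-- The union bound over the `16 ^ m` configurations inside `{0, …, m - 1}`. -/
theorem prob_allMinorsLargeRank {Ω : Type*} [MeasurableSpace Ω] (P : Measure Ω)
    [IsProbabilityMeasure P] {n p : ℕ} [Fact p.Prime]
    (G : Ω → Matrix (Fin n) (Fin n) ℤ) (e : ℤ) (hG : ∀ ω i j, G ω i j = e * G ω j i)
    (q : ℝ) (hq0 : 0 < q) (hq1 : q < 1) (k N m g : ℕ) (hmn : m ≤ n) (hm : 0 < m)
    (hg : g = k / 8)
    (hP : ∀ R C A B : Finset (Fin n), A.card = 2 * g → B.card = 2 * g → Disjoint A R →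
      Disjoint A C → Disjoint A B → Disjoint B C →
      P {ω | Degenerate ((G ω).map (fun z : ℤ => (z : ZMod p))) R C A B} ≤
        ENNReal.ofReal q ^ (2 * g ^ 2)) :
    1 - Real.exp (-(-Real.log q / 64) * (k : ℝ) ^ 2 + (-2 * Real.log q + Real.log 16) * m) ≤
      (P {ω | AllMinorsLargeRank p (G ω) N m k}).toReal := by
  classical
  set low : Finset (Fin n) := Finset.univ.filter fun i => (i : ℕ) < m with hlow
  have hlowc : low.card = m := by
    rw [hlow, Fin.card_filter_val_lt, min_eq_right hmn]
  set Conf : Finset (Finset (Fin n) × Finset (Fin n) × Finset (Fin n) × Finset (Fin n)) :=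
    (low.powerset ×ˢ low.powerset ×ˢ low.powerset ×ˢ low.powerset).filter fun t =>
      t.2.2.1.card = 2 * g ∧ t.2.2.2.card = 2 * g ∧ Disjoint t.2.2.1 t.1 ∧
      Disjoint t.2.2.1 t.2.1 ∧ Disjoint t.2.2.1 t.2.2.2 ∧ Disjoint t.2.2.2 t.2.1 with hConf
  have hConfc : Conf.card ≤ 16 ^ m := by
    refine (Finset.card_filter_le _ _).trans (le_of_eq ?_)
    simp only [Finset.card_product, Finset.card_powerset, hlowc]
    rw [← mul_pow, ← mul_pow, ← mul_pow]
    norm_num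
  set bad : Set Ω := ⋃ t ∈ Conf,
    {ω | Degenerate ((G ω).map (fun z : ℤ => (z : ZMod p))) t.1 t.2.1 t.2.2.1 t.2.2.2} with hbad
  have hcover : (Set.univ : Set Ω) ⊆ {ω | AllMinorsLargeRank p (G ω) N m k} ∪ bad := by
    intro ω _
    by_cases hω : AllMinorsLargeRank p (G ω) N m k
    · exact Or.inl hω
    · right
      unfold AllMinorsLargeRank at hω
      push Not at hω
      obtain ⟨I, J, hI, hJ, hIm, hJm, hlt⟩ := hω
      obtain ⟨R, C, A, B, hR, hC, hA, hB, hrest⟩ := exists_degenerate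
        ((G ω).map (fun z : ℤ => (z : ZMod p))) (e : ZMod p)
        (fun i j => by simp only [Matrix.map_apply]; rw [hG ω i j]; push_cast; rfl)
        I J N g hI hJ (by omega)
      have hIJ : I ∪ J ⊆ low := by
        intro i hi
        rw [hlow, Finset.mem_filter]
        exact ⟨Finset.mem_univ _, (Finset.mem_union.1 hi).elim (hIm i) (hJm i)⟩
      rw [hbad, Set.mem_iUnion₂]
      refine ⟨(R, C, A, B), ?_, hrest.2.2.2.2.2.2⟩
      rw [hConf]
      simp only [Finset.mem_filter, Finset.mem_product, Finset.mem_powerset]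
      exact ⟨⟨hR.trans hIJ, hC.trans hIJ, hA.trans hIJ, hB.trans hIJ⟩, hrest.1, hrest.2.1,
        hrest.2.2.1, hrest.2.2.2.1, hrest.2.2.2.2.1, hrest.2.2.2.2.2.1⟩
  have hbadP : P bad ≤ ENNReal.ofReal (16 ^ m * q ^ (2 * g ^ 2)) := by
    calc P bad ≤ ∑ t ∈ Conf, P {ω | Degenerate ((G ω).map (fun z : ℤ => (z : ZMod p)))
            t.1 t.2.1 t.2.2.1 t.2.2.2} := measure_biUnion_finset_le _ _
      _ ≤ ∑ _t ∈ Conf, ENNReal.ofReal q ^ (2 * g ^ 2) := by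
          refine Finset.sum_le_sum fun t ht => ?_
          obtain ⟨-, h1, h2, h3, h4, h5, h6⟩ := Finset.mem_filter.1 ht
          exact hP _ _ _ _ h1 h2 h3 h4 h5 h6
      _ = (Conf.card : ENNReal) * ENNReal.ofReal q ^ (2 * g ^ 2) := by
          rw [Finset.sum_const, nsmul_eq_mul]
      _ ≤ ((16 ^ m : ℕ) : ENNReal) * ENNReal.ofReal q ^ (2 * g ^ 2) := by
          gcongr
      _ = _ := by
          rw [ENNReal.ofReal_mul (by positivity), ENNReal.ofReal_pow hq0.le,
            ENNReal.ofReal_pow (by norm_num)]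
          norm_num
  have hbadR : (P bad).toReal ≤ 16 ^ m * q ^ (2 * g ^ 2) :=
    ENNReal.toReal_le_of_le_ofReal (by positivity) hbadP
  have htotal : 1 ≤ (P {ω | AllMinorsLargeRank p (G ω) N m k}).toReal + (P bad).toReal := by
    rw [← ENNReal.toReal_add (measure_ne_top _ _) (measure_ne_top _ _)]
    have h1 : (1 : ENNReal) ≤ P {ω | AllMinorsLargeRank p (G ω) N m k} + P bad := by
      rw [← measure_univ (μ := P)]
      exact (measure_mono hcover).trans (measure_union_le _ _)
    have h2 := ENNReal.toReal_mono
      (ENNReal.add_ne_top.2 ⟨measure_ne_top _ _, measure_ne_top _ _⟩) h1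
    simpa using h2
  have hexp : (16 : ℝ) ^ m * q ^ (2 * g ^ 2) ≤
      Real.exp (-(-Real.log q / 64) * (k : ℝ) ^ 2 + (-2 * Real.log q + Real.log 16) * m) := by
    have hlq : Real.log q < 0 := Real.log_neg hq0 hq1
    have e1 : (16 : ℝ) ^ m * q ^ (2 * g ^ 2) =
        Real.exp (m * Real.log 16 + (2 * g ^ 2 : ℕ) * Real.log q) := by
      rw [Real.exp_add, Real.exp_nat_mul, Real.exp_nat_mul, Real.exp_log hq0,
        Real.exp_log (by norm_num)]
    rw [e1, Real.exp_le_exp]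
    have hk : (k : ℝ) ≤ 8 * g + 7 := by
      have : k ≤ 8 * g + 7 := by omega
      exact_mod_cast this
    have hm1 : (1 : ℝ) ≤ m := by exact_mod_cast hm
    -- `k ≤ 8 g + 7` gives `k² ≤ 128 g² + 98`, and `98 / 64 ≤ 2 m`.
    have hk2 : (k : ℝ) ^ 2 ≤ 128 * g ^ 2 + 98 := by
      nlinarith [sq_nonneg (8 * (g : ℝ) - 7), Nat.cast_nonneg (α := ℝ) k]
    push_cast
    nlinarith [mul_nonneg (neg_nonneg.2 hlq.le)
      (show (0 : ℝ) ≤ 2 * g ^ 2 + 2 * m - k ^ 2 / 64 by linarith)]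
  linarith

/-- Product measures: a set on which the residues `f (x t)`, `t ∈ T`, are determined by the
coordinates outside `T` has small measure. -/
theorem pi_measure_le {ι Y : Type*} [Fintype ι] (μ : Measure ℤ) [IsProbabilityMeasure μ]
    (f : ℤ → Y) (q : ENNReal) (hf : ∀ r, μ {z | f z = r} ≤ q)
    (T : Finset ι) (E : Set (ι → ℤ))
    (hE : ∀ x ∈ E, ∀ y ∈ E, (∀ i, i ∉ T → x i = y i) → ∀ t ∈ T, f (x t) = f (y t)) :
    Measure.pi (fun _ : ι => μ) E ≤ q ^ T.card := by
  classical
  have hmp := (measurePreserving_piEquivPiSubtypeProd (fun _ : ι => μ) (fun i => i ∉ T)).symm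
  rw [← hmp.measure_preimage_equiv, Measure.prod_apply (.of_discrete)]
  have hbound : ∀ y : ({i // i ∉ T} → ℤ), Measure.pi (fun _ : {i // ¬ i ∉ T} => μ)
      (Prod.mk y ⁻¹' ((MeasurableEquiv.piEquivPiSubtypeProd (fun _ : ι => ℤ)
        (fun i => i ∉ T)).symm ⁻¹' E)) ≤ q ^ T.card := by
    intro y
    set W := (Prod.mk y ⁻¹' ((MeasurableEquiv.piEquivPiSubtypeProd (fun _ : ι => ℤ)
        (fun i => i ∉ T)).symm ⁻¹' E)) with hW
    rcases W.eq_empty_or_nonempty with hemp | ⟨z₀, hz₀⟩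
    · rw [hemp, measure_empty]; exact zero_le
    have hsub : W ⊆ Set.univ.pi fun i => {z | f z = f (z₀ i)} := by
      intro z hz i _
      have hi : (i : ι) ∈ T := not_not.1 i.2
      have := hE _ hz _ hz₀ (fun i hi => by
        simp [MeasurableEquiv.piEquivPiSubtypeProd, Equiv.piEquivPiSubtypeProd, hi]) i hi
      simpa [MeasurableEquiv.piEquivPiSubtypeProd, Equiv.piEquivPiSubtypeProd, hi] using this
    refine (measure_mono hsub).trans ?_
    rw [Measure.pi_pi]
    refine (Finset.prod_le_pow_card _ _ q fun i _ => hf _).trans (le_of_eq ?_)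
    congr 1
    simp
  refine (lintegral_mono hbound).trans ?_
  simp

/-! ### The three models -/

/-- The position above the diagonal (or on it) that carries the variable of the pair
`{i, j}`. -/
def key {n : ℕ} (i j : Fin n) : Fin n × Fin n := if i < j then (i, j) else (j, i)

theorem key_inj {n : ℕ} {i j a b : Fin n} (h : key i j = key a b) :
    (i = a ∧ j = b) ∨ (i = b ∧ j = a) := by
  unfold key at h
  split_ifs at h <;> simp only [Prod.mk.injEq] at h <;> tauto

theorem key_notMem {n : ℕ} {A B : Finset (Fin n)} {i j : Fin n}
    (h₁ : i ∈ A → j ∉ B) (h₂ : j ∈ A → i ∉ B) :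
    key i j ∉ (A ×ˢ B).image fun t => key t.1 t.2 := by
  intro h
  obtain ⟨⟨a, b⟩, hab, he⟩ := Finset.mem_image.1 h
  rw [Finset.mem_product] at hab
  rcases key_inj he with ⟨rfl, rfl⟩ | ⟨rfl, rfl⟩
  · exact h₁ hab.1 hab.2
  · exact h₂ hab.1 hab.2

theorem card_key_image {n : ℕ} {A B : Finset (Fin n)} (hAB : Disjoint A B) :
    ((A ×ˢ B).image fun t => key t.1 t.2).card = A.card * B.card := by
  rw [Finset.card_image_of_injOn, Finset.card_product]
  rintro ⟨a, b⟩ h ⟨a', b'⟩ h' he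
  simp only [Finset.coe_product, Set.mem_prod, Finset.mem_coe] at h h'
  rcases key_inj he with ⟨rfl, rfl⟩ | ⟨rfl, rfl⟩
  · rfl
  · exact absurd h'.2 (Finset.disjoint_left.1 hAB h.1)

/-- Symmetric and skew-symmetric matrices with independent entries: the `A × B` block consists
of `|A| |B|` variables that occur in no other block of the configuration. -/
theorem iid_degenerate_le {n p : ℕ} [Fact p.Prime] (μ : Measure ℤ) [IsProbabilityMeasure μ]
    (q : ENNReal) (hμ : ∀ r : ZMod p, μ {z : ℤ | (z : ZMod p) = r} ≤ q)
    (G : (Fin n × Fin n → ℤ) → Matrix (Fin n) (Fin n) ℤ) (s : Fin n → Fin n → ℤ)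
    (hs : ∀ i j, i ≠ j → s i j = 1 ∨ s i j = -1)
    (hG : ∀ x i j, G x i j = s i j * x (key i j)) (R C A B : Finset (Fin n))
    (hAR : Disjoint A R) (hAC : Disjoint A C) (hAB : Disjoint A B) (hBC : Disjoint B C) :
    Measure.pi (fun _ : Fin n × Fin n => μ)
      {x | Degenerate ((G x).map (fun z : ℤ => (z : ZMod p))) R C A B} ≤
        q ^ (A.card * B.card) := by
  rw [← card_key_image hAB]
  refine pi_measure_le μ (fun z : ℤ => (z : ZMod p)) q hμ _ _ ?_
  intro x hx y hy hxy t ht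
  obtain ⟨⟨a, b⟩, hab, rfl⟩ := Finset.mem_image.1 ht
  rw [Finset.mem_product] at hab
  have hcongr : ∀ i j, (i ∈ A → j ∉ B) → (j ∈ A → i ∉ B) →
      (G x).map (fun z : ℤ => (z : ZMod p)) i j = (G y).map (fun z : ℤ => (z : ZMod p)) i j := by
    intro i j h₁ h₂
    simp only [Matrix.map_apply, hG, hxy _ (key_notMem h₁ h₂)]
  have huniq := Degenerate.unique hx hy
    (fun i hi j hj => hcongr i j (fun h => absurd hi (Finset.disjoint_left.1 hAR h))
      (fun h => absurd hj (Finset.disjoint_left.1 (Finset.disjoint_union_right.2 ⟨hAC, hAB⟩) h)))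
    (fun i _ j hj => hcongr i j (fun _ h => Finset.disjoint_left.1 hBC h hj)
      (fun h => absurd hj (Finset.disjoint_left.1 hAC h)))
    a hab.1 b hab.2
  simp only [Matrix.map_apply, hG] at huniq
  have hne : a ≠ b := fun h => Finset.disjoint_left.1 hAB hab.1 (h ▸ hab.2)
  rcases hs a b hne with h | h <;> rw [h] at huniq <;> simpa using huniq

/-- The value `0` or `1` of an edge indicator. -/
def bit (b : Bool) : ℤ := if b then 1 else 0

theorem edgeInd_eq {n : ℕ} (x : Fin n × Fin n → Bool) {i j : Fin n} (h : i ≠ j) :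
    edgeInd x i j = bit (x (key i j)) := by
  unfold edgeInd key bit
  rcases lt_or_gt_of_ne h with h | h
  · simp [h]
  · simp [h, h.not_gt]

theorem edgeInd_self {n : ℕ} (x : Fin n × Fin n → Bool) (i : Fin n) : edgeInd x i i = 0 := by
  simp [edgeInd]

/-- Counting bound for the Laplacian. With `A` split into pairs `{a₀, a₁}`, the numbers
`x_{a₀ b} + x_{a₁ b} ∈ {0, 1, 2}` together with all edges outside `A × B` fix every entry of the
configuration outside the block `A × B`: the degrees of the vertices outside `A` are fixed, and
the degrees of the vertices in `A` do not occur. So a degenerate configuration leaves 3 choices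
instead of 4 for each pair `{a₀, a₁}` and each `b`. -/
theorem card_lap_degenerate_le {n p g : ℕ} [Fact p.Prime] (R C A B : Finset (Fin n))
    (hA : A.card = 2 * g) (hB : B.card = 2 * g)
    (hAR : Disjoint A R) (hAC : Disjoint A C) (hAB : Disjoint A B) (hBC : Disjoint B C) :
    Nat.card {x : Fin (n + 1) × Fin (n + 1) → Bool //
      Degenerate ((redLap n x).map (fun z : ℤ => (z : ZMod p))) R C A B} * 4 ^ (2 * g ^ 2) ≤
      3 ^ (2 * g ^ 2) * Fintype.card (Fin (n + 1) × Fin (n + 1) → Bool) := by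
  classical
  set A' : Finset (Fin (n + 1)) := A.map Fin.castSuccEmb with hA'
  set B' : Finset (Fin (n + 1)) := B.map Fin.castSuccEmb with hB'
  have memA : ∀ i : Fin n, i.castSucc ∈ A' ↔ i ∈ A := fun i => by simp [hA']
  have memB : ∀ i : Fin n, i.castSucc ∈ B' ↔ i ∈ B := fun i => by simp [hB']
  have hAB' : Disjoint A' B' := (Finset.disjoint_map _).2 hAB
  set T := (A' ×ˢ B').image fun t => key t.1 t.2 with hT
  have hTc : T.card = 4 * g ^ 2 := by
    rw [hT, card_key_image hAB', hA', hB', Finset.card_map, Finset.card_map, hA, hB]; ring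
  obtain ⟨φ⟩ : Nonempty ({a // a ∈ A} ≃ Fin g × Fin 2) := by
    rw [← Fintype.card_eq]; simp [hA, mul_comm]
  set E := {x : Fin (n + 1) × Fin (n + 1) → Bool //
      Degenerate ((redLap n x).map (fun z : ℤ => (z : ZMod p))) R C A B} with hE
  let ed : (Fin (n + 1) × Fin (n + 1) → Bool) → {a // a ∈ A} → {b // b ∈ B} → Bool :=
    fun x a b => x (key a.1.castSucc b.1.castSucc)
  let Ψ : E → ({t // t ∉ T} → Bool) × (Fin g × {b // b ∈ B} → Fin 3) := fun x =>
    (fun t => x.1 t.1, fun sb =>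
      ⟨(ed x.1 (φ.symm (sb.1, 0)) sb.2).toNat + (ed x.1 (φ.symm (sb.1, 1)) sb.2).toNat, by
        have := Bool.toNat_le (ed x.1 (φ.symm (sb.1, 0)) sb.2)
        have := Bool.toNat_le (ed x.1 (φ.symm (sb.1, 1)) sb.2)
        omega⟩)
  have hΨ : Function.Injective Ψ := by
    rintro ⟨x, hx⟩ ⟨y, hy⟩ hxy
    have hout : ∀ t, t ∉ T → x t = y t := fun t ht => congrFun (congrArg Prod.fst hxy) ⟨t, ht⟩
    have hpair : ∀ s b, bit (ed x (φ.symm (s, 0)) b) + bit (ed x (φ.symm (s, 1)) b) =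
        bit (ed y (φ.symm (s, 0)) b) + bit (ed y (φ.symm (s, 1)) b) := by
      intro s b
      have h := congrArg Fin.val (congrFun (congrArg Prod.snd hxy) (s, b))
      have hb : ∀ c : Bool, bit c = (c.toNat : ℤ) := by decide
      simp only [hb]
      exact_mod_cast h
    have hedge : ∀ i j : Fin (n + 1), (i ∈ A' → j ∉ B') → (j ∈ A' → i ∉ B') →
        edgeInd x i j = edgeInd y i j := by
      intro i j h₁ h₂
      by_cases hij : i = j
      · rw [hij, edgeInd_self, edgeInd_self]
      · rw [edgeInd_eq x hij, edgeInd_eq y hij, hout _ (key_notMem h₁ h₂)]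
    have hdeg : ∀ v : Fin n, v ∉ A →
        ∑ k, edgeInd x k v.castSucc = ∑ k, edgeInd y k v.castSucc := by
      intro v hv
      have hvA : v.castSucc ∉ A' := fun h => hv ((memA v).1 h)
      by_cases hvB : v ∈ B
      · rw [← Finset.sum_add_sum_compl A', ← Finset.sum_add_sum_compl A' (fun k => edgeInd y k _)]
        congr 1
        · have hsum : ∀ z : Fin (n + 1) × Fin (n + 1) → Bool,
              ∑ k ∈ A', edgeInd z k v.castSucc = ∑ s : Fin g,
                (bit (ed z (φ.symm (s, 0)) ⟨v, hvB⟩) + bit (ed z (φ.symm (s, 1)) ⟨v, hvB⟩)) := by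
            intro z
            rw [hA', Finset.sum_map, ← Finset.sum_coe_sort, ← φ.symm.sum_comp,
              Fintype.sum_prod_type]
            refine Finset.sum_congr rfl fun s _ => ?_
            have hterm : ∀ a : {a // a ∈ A}, edgeInd z (Fin.castSuccEmb a.1) v.castSucc =
                bit (ed z a ⟨v, hvB⟩) := by
              intro a
              refine edgeInd_eq z fun h => hv ?_
              have : a.1 = v := Fin.castSucc_injective n h
              exact this ▸ a.2
            rw [Fin.sum_univ_two, hterm, hterm]
          rw [hsum, hsum]
          exact Finset.sum_congr rfl fun s _ => hpair s _
        · refine Finset.sum_congr rfl fun k hk => ?_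
          exact hedge _ _ (fun h => absurd h (Finset.mem_compl.1 hk)) (fun h => absurd h hvA)
      · exact Finset.sum_congr rfl fun k _ =>
          hedge _ _ (fun _ h => hvB ((memB v).1 h)) (fun h => absurd h hvA)
    have hentry : ∀ i j : Fin n, (i = j → i ∉ A) → (i ∈ A → j ∉ B) → (j ∈ A → i ∉ B) →
        redLap n x i j = redLap n y i j := by
      intro i j h₀ h₁ h₂
      simp only [redLap, Matrix.of_apply]
      split_ifs with hij
      · rw [hdeg i (h₀ hij)]
      · refine hedge _ _ ?_ ?_
        · rw [memA, memB]; exact h₁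
        · rw [memA, memB]; exact h₂
    have huniq := Degenerate.unique hx hy
      (fun i hi j hj => by
        have hiA : i ∉ A := fun h => Finset.disjoint_left.1 hAR h hi
        have hjA : j ∉ A := fun h =>
          Finset.disjoint_left.1 (Finset.disjoint_union_right.2 ⟨hAC, hAB⟩) h hj
        simp only [Matrix.map_apply]
        rw [hentry i j (fun _ => hiA) (fun h => absurd h hiA) (fun h => absurd h hjA)])
      (fun i _ j hj => by
        have hjA : j ∉ A := fun h => Finset.disjoint_left.1 hAC h hj
        simp only [Matrix.map_apply]
        rw [hentry i j (fun h => h ▸ hjA) (fun _ h => Finset.disjoint_left.1 hBC h hj)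
          (fun h => absurd h hjA)])
    apply Subtype.ext
    funext t
    by_cases ht : t ∈ T
    · obtain ⟨⟨a', b'⟩, hab, rfl⟩ := Finset.mem_image.1 ht
      rw [Finset.mem_product] at hab
      obtain ⟨a, ha, rfl⟩ := Finset.mem_map.1 hab.1
      obtain ⟨b, hb, rfl⟩ := Finset.mem_map.1 hab.2
      have hne : a ≠ b := fun h => Finset.disjoint_left.1 hAB ha (h ▸ hb)
      have hne' : a.castSucc ≠ b.castSucc := fun h => hne (Fin.castSucc_injective n h)
      have h := huniq a ha b hb
      simp only [Matrix.map_apply, redLap, Matrix.of_apply, if_neg hne,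
        edgeInd_eq _ hne'] at h
      change x (key a.castSucc b.castSucc) = y (key a.castSucc b.castSucc)
      cases hxb : x (key a.castSucc b.castSucc) <;> cases hyb : y (key a.castSucc b.castSucc) <;>
        simp [hxb, hyb, bit] at h ⊢
    · exact hout t ht
  have hcard := Nat.card_le_card_of_injective Ψ hΨ
  have hcardΨ : Nat.card (({t // t ∉ T} → Bool) × (Fin g × {b // b ∈ B} → Fin 3)) =
      2 ^ (Fintype.card (Fin (n + 1) × Fin (n + 1)) - 4 * g ^ 2) * 3 ^ (2 * g ^ 2) := by
    rw [Nat.card_eq_fintype_card, Fintype.card_prod, Fintype.card_fun, Fintype.card_fun,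
      Fintype.card_bool, Fintype.card_fin, Fintype.card_prod, Fintype.card_fin, Fintype.card_coe,
      hB, Fintype.card_subtype_compl, Fintype.card_coe, hTc]
    congr 2; ring
  have hle : 4 * g ^ 2 ≤ Fintype.card (Fin (n + 1) × Fin (n + 1)) := by
    rw [← hTc]; exact Finset.card_le_univ T
  rw [hcardΨ] at hcard
  have hpow : 2 ^ (Fintype.card (Fin (n + 1) × Fin (n + 1)) - 4 * g ^ 2) * 4 ^ (2 * g ^ 2) =
      Fintype.card (Fin (n + 1) × Fin (n + 1) → Bool) := by
    rw [Fintype.card_fun, Fintype.card_bool, show (4 : ℕ) = 2 ^ 2 from rfl, ← pow_mul, ← pow_add]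
    congr 1
    omega
  calc Nat.card E * 4 ^ (2 * g ^ 2)
      ≤ 2 ^ (Fintype.card (Fin (n + 1) × Fin (n + 1)) - 4 * g ^ 2) * 3 ^ (2 * g ^ 2) *
          4 ^ (2 * g ^ 2) := Nat.mul_le_mul_right _ hcard
    _ = _ := by rw [← hpow]; ring

theorem lap_degenerate_le {n p g : ℕ} [Fact p.Prime] (R C A B : Finset (Fin n))
    (hA : A.card = 2 * g) (hB : B.card = 2 * g)
    (hAR : Disjoint A R) (hAC : Disjoint A C) (hAB : Disjoint A B) (hBC : Disjoint B C) :
    graphMeasure n {x | Degenerate ((redLap n x).map (fun z : ℤ => (z : ZMod p))) R C A B} ≤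
      ENNReal.ofReal (3 / 4) ^ (2 * g ^ 2) := by
  classical
  have h := card_lap_degenerate_le (p := p) R C A B hA hB hAR hAC hAB hBC
  rw [graphMeasure, PMF.toMeasure_uniformOfFintype_apply _ (.of_discrete)]
  apply ENNReal.div_le_of_le_mul
  rw [← ENNReal.ofReal_natCast, ← ENNReal.ofReal_natCast, ← ENNReal.ofReal_pow (by norm_num),
    ← ENNReal.ofReal_mul (by positivity)]
  apply ENNReal.ofReal_le_ofReal
  rw [div_pow, div_mul_eq_mul_div, le_div_iff₀ (by positivity), ← Nat.card_eq_fintype_card]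
  exact_mod_cast h

theorem quadratic_repulsion (α : ℝ) (hα : 0 < α) :
    ∃ c : ℝ, 0 < c ∧ ∃ c' : ℝ, 0 < c' ∧
      ∀ (μ : Measure ℤ) (hμ : IsProbabilityMeasure μ), IsBalanced α μ →
      ∀ k N m n : ℕ, 0 < k → k ≤ N → N ≤ m → m ≤ n → ∀ p : ℕ, p.Prime →
        (1 - Real.exp (-c * (k : ℝ) ^ 2 + c' * m) ≤
          ((matMeasure μ hμ n) {x | AllMinorsLargeRank p (symMatrix n x) N m k}).toReal) ∧
        (1 - Real.exp (-c * (k : ℝ) ^ 2 + c' * m) ≤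
          ((matMeasure μ hμ n) {x | AllMinorsLargeRank p (skewMatrix n x) N m k}).toReal) ∧
        (1 - Real.exp (-c * (k : ℝ) ^ 2 + c' * m) ≤
          ((graphMeasure n) {x | AllMinorsLargeRank p (redLap n x) N m k}).toReal) := by
  set q : ℝ := max (1 - α) (3 / 4) with hq
  have hq0 : 0 < q := lt_of_lt_of_le (by norm_num) (le_max_right _ _)
  have hq1 : q < 1 := max_lt (by linarith) (by norm_num)
  have hlq : Real.log q < 0 := Real.log_neg hq0 hq1
  have hl16 : 0 < Real.log 16 := Real.log_pos (by norm_num)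
  refine ⟨-Real.log q / 64, by linarith, -2 * Real.log q + Real.log 16, by linarith, ?_⟩
  intro μ hμ hbal k N m n hk hkN hNm hmn p hp
  have : Fact p.Prime := ⟨hp⟩
  have hm : 0 < m := by omega
  have hμq : ∀ r : ZMod p, μ {z : ℤ | (z : ZMod p) = r} ≤ ENNReal.ofReal q := fun r =>
    (hbal p hp r).trans (ENNReal.ofReal_le_ofReal (le_max_left _ _))
  have hqle : ENNReal.ofReal q ≤ 1 := ENNReal.ofReal_le_one.2 hq1.le
  have hpow : ∀ a b : ℕ, a = 2 * (k / 8) → b = 2 * (k / 8) →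
      ENNReal.ofReal q ^ (a * b) ≤ ENNReal.ofReal q ^ (2 * (k / 8) ^ 2) := by
    rintro a b rfl rfl
    exact pow_le_pow_right_of_le_one' hqle (by nlinarith)
  have hM : IsProbabilityMeasure (matMeasure μ hμ n) := by
    unfold matMeasure; infer_instance
  have hL : IsProbabilityMeasure (graphMeasure n) := by
    unfold graphMeasure; infer_instance
  refine ⟨?_, ?_, ?_⟩
  · refine prob_allMinorsLargeRank (matMeasure μ hμ n) (symMatrix n) 1 ?_ q hq0 hq1 k N m _ hmn hm
      rfl ?_
    · intro x i j
      rcases lt_trichotomy i j with h | rfl | h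
      · simp [symMatrix, h.le, h.not_ge]
      · simp
      · simp [symMatrix, h.le, h.not_ge]
    · intro R C A B hA hB hAR hAC hAB hBC
      refine (iid_degenerate_le μ _ hμq (symMatrix n) (fun _ _ => 1) (fun _ _ _ => Or.inl rfl)
        ?_ R C A B hAR hAC hAB hBC).trans (hpow _ _ hA hB)
      intro x i j
      rcases lt_trichotomy i j with h | rfl | h
      · simp [symMatrix, key, h, h.le]
      · simp [symMatrix, key]
      · simp [symMatrix, key, h.not_gt, h.not_ge]
  · refine prob_allMinorsLargeRank (matMeasure μ hμ n) (skewMatrix n) (-1) ?_ q hq0 hq1 k N m _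
      hmn hm rfl ?_
    · intro x i j
      rcases lt_trichotomy i j with h | rfl | h
      · simp [skewMatrix, h, h.not_gt]
      · simp [skewMatrix]
      · simp [skewMatrix, h, h.not_gt]
    · intro R C A B hA hB hAR hAC hAB hBC
      refine (iid_degenerate_le μ _ hμq (skewMatrix n)
        (fun i j => if i < j then 1 else if j < i then -1 else 0) ?_
        ?_ R C A B hAR hAC hAB hBC).trans (hpow _ _ hA hB)
      · intro i j hij
        rcases lt_or_gt_of_ne hij with h | h
        · simp [h]
        · simp [h, h.not_gt]
      · intro x i j
        rcases lt_trichotomy i j with h | rfl | h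
        · simp [skewMatrix, key, h]
        · simp [skewMatrix]
        · simp [skewMatrix, key, h, h.not_gt]
  · refine prob_allMinorsLargeRank (graphMeasure n) (redLap n) 1 ?_ q hq0 hq1 k N m _ hmn hm
      rfl ?_
    · intro x i j
      by_cases hij : i = j
      · rw [hij, one_mul]
      · have hne : i.castSucc ≠ j.castSucc := fun h => hij (Fin.castSucc_injective n h)
        have hkey : key i.castSucc j.castSucc = key j.castSucc i.castSucc := by
          unfold key
          rcases lt_or_gt_of_ne hne with h | h <;> simp [h, h.not_gt]
        simp only [redLap, Matrix.of_apply, if_neg hij, if_neg (Ne.symm hij), one_mul,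
          edgeInd_eq x hne, edgeInd_eq x hne.symm, hkey]
    · intro R C A B hA hB hAR hAC hAB hBC
      refine (lap_degenerate_le R C A B hA hB hAR hAC hAB hBC).trans ?_
      gcongr
      exact le_max_right _ _
end
end

section
/- Let p be a prime, let H be a linear subspace of 𝔽_p^N of codimension k, let I₀ ⊆ {1,…,N}, and let δ₀ > 0. Suppose that every nonzero vector w in the orthogonal complement H^⊥ (with respect to the standard bilinear form on 𝔽_p^N) satisfies ρ(w_{I₀}) ≤ δ₀, where w_{I₀} is the restriction of w to the coordinates in I₀. Let X ∈ 𝔽_p^N be a random vector whose coordinates x_i for i ∈ I₀ are i.i.d. copies of the reduction modulo p of a fixed α-balanced random integer ξ, and whose coordinates outside I₀ are fixed deterministic elements of 𝔽_p. Then |P(X ∈ H) − p^{−k}| ≤ 2 δ₀. -/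
/-!
The indicator function of `H` is the average of the characters `x ↦ e(w · x)` over `w ∈ H^⊥`, a
space with `p ^ k` elements. The term `w = 0` contributes `p ^ (-k)` to `P(X ∈ H)`, and the term of
any other `w` has norm at most `F(w) / p ^ k`, where `F(w) = ∏_{i ∈ I₀} |E e(wᵢ ξ)|`.

The bound `∑_{t ≠ 0} F(t w) ≤ p ρ(w)` (`sum_prod_norm_charSum_le`) comes from symmetrization: for an
independent copy `ξ'` of `ξ` one has `|E e(s ξ)| ≤ exp (-4 E ‖s (ξ - ξ') / p‖²)`, Jensen's
inequality applies conditionally on `ξ ≠ ξ'`, an event of probability at least `α`, and the nonzero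
difference `ξ - ξ'` is absorbed by reindexing the sum over `t`.

Finally the dilations by `t ≠ 0` permute the nonzero vectors of `H^⊥`, so averaging over `t` bounds
`p ^ (-k) ∑_{w ≠ 0} F(w)` by `p / (p - 1) * δ₀ ≤ 2 δ₀`.
-/

open MeasureTheory Filter

noncomputable section

/-- Distance from a real number to the nearest integer. -/
def distToZ (x : ℝ) : ℝ := |x - (round x : ℝ)|

/-- The concentration discrepancy `ρ_α(w)` of a vector `w` over `𝔽_p`. -/
def rhoDisc (α : ℝ) {p : ℕ} [NeZero p] {ι : Type} [Fintype ι] (w : ι → ZMod p) : ℝ :=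
  (p : ℝ)⁻¹ * ∑ t ∈ Finset.univ.filter (fun t : ZMod p => t ≠ 0),
    Real.exp (-α * ∑ i, (distToZ (((t * w i).val : ℝ) / (p : ℝ))) ^ 2)

/-- Product of i.i.d. copies of a probability measure `ν`. -/
def piProb {ι : Type} [Fintype ι] {β : Type} [MeasurableSpace β] (ν : Measure β)
    (hν : IsProbabilityMeasure ν) : Measure (ι → β) :=
  haveI := hν
  Measure.pi fun _ => ν

/-! ### Characteristic functions of balanced weights -/

/-- `‖x / p‖²` for a residue class `x` modulo `p`. -/
def sqDist {p : ℕ} (x : ZMod p) : ℝ := (distToZ ((x.val : ℝ) / (p : ℝ))) ^ 2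

lemma sqDist_nonneg {p : ℕ} (x : ZMod p) : 0 ≤ sqDist x := sq_nonneg _

lemma sqDist_zero {p : ℕ} : sqDist (0 : ZMod p) = 0 := by
  simp [sqDist, distToZ]

lemma eight_mul_sq_distToZ_le (x : ℝ) :
    8 * distToZ x ^ 2 ≤ 1 - Real.cos (2 * Real.pi * x) := by
  have h1 : |x - round x| ≤ 1 / 2 := abs_sub_round x
  have hper : Real.cos (2 * Real.pi * x) = Real.cos (2 * Real.pi * (x - round x)) := by
    rw [mul_sub, mul_comm (2 * Real.pi) (round x : ℝ), Real.cos_sub_int_mul_two_pi]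
  rw [hper, distToZ, sq_abs]
  have hpi := Real.pi_pos
  have h2 := Real.cos_le_one_sub_mul_cos_sq (x := 2 * Real.pi * (x - round x)) (by
    rw [abs_mul, abs_of_pos (by positivity)]; nlinarith)
  have h3 : 2 / Real.pi ^ 2 * (2 * Real.pi * (x - round x)) ^ 2 = 8 * (x - round x) ^ 2 := by
    field_simp; ring
  linarith

lemma re_stdAddChar_le {p : ℕ} [NeZero p] (x : ZMod p) :
    (ZMod.stdAddChar x : ℂ).re ≤ 1 - 8 * sqDist x := by
  have h : (ZMod.stdAddChar x : ℂ).re = Real.cos (2 * Real.pi * ((x.val : ℝ) / p)) := by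
    rw [ZMod.stdAddChar_apply, ZMod.toCircle_apply, ← Complex.exp_ofReal_mul_I_re]
    congr 2
    push_cast
    ring
  have := eight_mul_sq_distToZ_le ((x.val : ℝ) / p)
  rw [h, sqDist]
  linarith

/-- The characteristic function of the weights `q` on `ZMod p`. -/
def charSum {p : ℕ} [NeZero p] (q : ZMod p → ℝ) (s : ZMod p) : ℂ :=
  ∑ r, (q r : ℂ) * ZMod.stdAddChar (s * r)

/-- Symmetrization: `|E e(sξ)|² = E Re e(s(ξ - ξ'))` for an independent copy `ξ'` of `ξ`. -/
lemma norm_charSum_sq {p : ℕ} [NeZero p] (q : ZMod p → ℝ) (s : ZMod p) :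
    ‖charSum q s‖ ^ 2 =
      ∑ x : ZMod p × ZMod p, q x.1 * q x.2 * (ZMod.stdAddChar (s * (x.1 - x.2)) : ℂ).re := by
  have h : ((‖charSum q s‖ ^ 2 : ℝ) : ℂ) =
      ∑ x : ZMod p × ZMod p, ((q x.1 * q x.2 : ℝ) : ℂ) * ZMod.stdAddChar (s * (x.1 - x.2)) := by
    rw [Complex.ofReal_pow, ← Complex.mul_conj', charSum, map_sum, Fintype.sum_mul_sum,
      ← Fintype.sum_prod_type']
    refine Finset.sum_congr rfl fun x _ => ?_
    rw [map_mul (starRingEnd ℂ), Complex.conj_ofReal, ← AddChar.map_neg_eq_conj, mul_sub, sub_eq_add_neg,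
      AddChar.map_add_eq_mul]
    push_cast
    ring
  have h2 := congrArg Complex.re h
  rw [Complex.ofReal_re, Complex.re_sum] at h2
  rw [h2]
  exact Finset.sum_congr rfl fun x _ => by rw [Complex.re_ofReal_mul]

lemma norm_charSum_le {p : ℕ} [NeZero p] (q : ZMod p → ℝ) (hq : ∀ r, 0 ≤ q r)
    (hq1 : ∑ r, q r = 1) (s : ZMod p) :
    ‖charSum q s‖ ≤
      Real.exp (-4 * ∑ x : ZMod p × ZMod p, q x.1 * q x.2 * sqDist (s * (x.1 - x.2))) := by
  set D := ∑ x : ZMod p × ZMod p, q x.1 * q x.2 * sqDist (s * (x.1 - x.2)) with hD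
  have hone : ∑ x : ZMod p × ZMod p, q x.1 * q x.2 = 1 := by
    rw [Fintype.sum_prod_type, ← Fintype.sum_mul_sum, hq1, one_mul]
  have h1 : ‖charSum q s‖ ^ 2 ≤ 1 - 8 * D := by
    rw [norm_charSum_sq, ← hone, hD, Finset.mul_sum, ← Finset.sum_sub_distrib]
    refine Finset.sum_le_sum fun x _ => ?_
    have := mul_le_mul_of_nonneg_left (re_stdAddChar_le (s * (x.1 - x.2)))
      (mul_nonneg (hq x.1) (hq x.2))
    linarith
  have h2 : 1 - 8 * D ≤ Real.exp (-4 * D) ^ 2 := by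
    rw [← Real.exp_nat_mul]
    have := Real.add_one_le_exp (((2 : ℕ) : ℝ) * (-4 * D))
    push_cast at this ⊢
    linarith
  exact le_of_sq_le_sq (h1.trans h2) (Real.exp_pos _).le

/-- Two independent copies of a random variable none of whose atoms exceeds `1 - α` differ with
probability at least `α`. -/
lemma le_prob_ne {p : ℕ} [NeZero p] (q : ZMod p → ℝ) (hq : ∀ r, 0 ≤ q r)
    (hq1 : ∑ r, q r = 1) (α : ℝ) (hqα : ∀ r, q r ≤ 1 - α) :
    α ≤ ∑ x : ZMod p × ZMod p with x.1 ≠ x.2, q x.1 * q x.2 := by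
  have hone : ∑ x : ZMod p × ZMod p, q x.1 * q x.2 = 1 := by
    rw [Fintype.sum_prod_type, ← Fintype.sum_mul_sum, hq1, one_mul]
  have hdiag : ∑ x : ZMod p × ZMod p with x.1 = x.2, q x.1 * q x.2 = ∑ r, q r * q r := by
    rw [Finset.sum_filter, Fintype.sum_prod_type]
    simp
  have hle : ∑ r, q r * q r ≤ 1 - α := by
    calc ∑ r, q r * q r ≤ ∑ r, q r * (1 - α) :=
          Finset.sum_le_sum fun r _ => mul_le_mul_of_nonneg_left (hqα r) (hq r)
      _ = 1 - α := by rw [← Finset.sum_mul, hq1, one_mul]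
  have := Finset.sum_filter_add_sum_filter_not Finset.univ
    (fun x : ZMod p × ZMod p => x.1 = x.2) (fun x => q x.1 * q x.2)
  linarith

/-- Dilating `w` by all nonzero `t`, the products of characteristic functions sum to at most
`p ρ(w)`. A single factor need not be at most `exp (-α ‖t wᵢ / p‖²)`, since `ξ - ξ'` may
concentrate on one residue `c ≠ 0`; Jensen's inequality moves the average over `c` out of the
exponential, and then `c` is absorbed into the sum over `t`. -/
lemma sum_prod_norm_charSum_le {p : ℕ} [NeZero p] [Fact p.Prime] {ι : Type} [Fintype ι]
    (q : ZMod p → ℝ) (hq : ∀ r, 0 ≤ q r) (hq1 : ∑ r, q r = 1)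
    (α : ℝ) (hα : 0 < α) (hqα : ∀ r, q r ≤ 1 - α) (w : ι → ZMod p) :
    ∑ t : ZMod p with t ≠ 0, ∏ i, ‖charSum q (t * w i)‖ ≤ p * rhoDisc α w := by
  set S := (Finset.univ : Finset (ZMod p × ZMod p)).filter (fun x => x.1 ≠ x.2) with hS
  set β := ∑ x ∈ S, q x.1 * q x.2 with hβ
  have hαβ : α ≤ β := le_prob_ne q hq hq1 α hqα
  have hβ0 : 0 < β := hα.trans_le hαβ
  set G : ZMod p → ℝ := fun t => ∑ i, sqDist (t * w i) with hG
  have hG0 : ∀ t, 0 ≤ G t := fun t => Finset.sum_nonneg fun i _ => sqDist_nonneg _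
  have hρ : p * rhoDisc α w = ∑ t : ZMod p with t ≠ 0, Real.exp (-α * G t) := by
    rw [rhoDisc, mul_inv_cancel_left₀ (Nat.cast_ne_zero.2 (NeZero.ne p))]
    rfl
  have hweights : ∑ x ∈ S, q x.1 * q x.2 / β = 1 := by
    rw [← Finset.sum_div, div_self hβ0.ne']
  have hpt : ∀ t : ZMod p, ∏ i, ‖charSum q (t * w i)‖ ≤
      ∑ x ∈ S, q x.1 * q x.2 / β * Real.exp (-α * G (t * (x.1 - x.2))) := by
    intro t
    have hexp : ∑ i, -4 * ∑ x : ZMod p × ZMod p, q x.1 * q x.2 * sqDist (t * w i * (x.1 - x.2))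
        = ∑ x ∈ S, (q x.1 * q x.2 / β) • (-4 * β * G (t * (x.1 - x.2))) := by
      rw [← Finset.mul_sum, Finset.sum_comm, hS, Finset.sum_filter, Finset.mul_sum]
      refine Finset.sum_congr rfl fun x _ => ?_
      split_ifs with hx
      · rw [smul_eq_mul, hG, ← Finset.mul_sum]
        simp only [mul_right_comm t _ (x.1 - x.2)]
        field_simp
      · rw [not_not] at hx
        simp [hx, sqDist_zero]
    calc ∏ i, ‖charSum q (t * w i)‖
        ≤ ∏ i, Real.exp (-4 * ∑ x : ZMod p × ZMod p,
            q x.1 * q x.2 * sqDist (t * w i * (x.1 - x.2))) :=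
          Finset.prod_le_prod (fun i _ => norm_nonneg _)
            fun i _ => norm_charSum_le q hq hq1 _
      _ = Real.exp (∑ x ∈ S, (q x.1 * q x.2 / β) • (-4 * β * G (t * (x.1 - x.2)))) := by
          rw [← Real.exp_sum, hexp]
      _ ≤ ∑ x ∈ S, (q x.1 * q x.2 / β) • Real.exp (-4 * β * G (t * (x.1 - x.2))) :=
          convexOn_exp.map_sum_le
            (fun x _ => div_nonneg (mul_nonneg (hq _) (hq _)) hβ0.le) hweights
            (fun _ _ => Set.mem_univ _)
      _ ≤ _ := by
          refine Finset.sum_le_sum fun x _ => ?_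
          rw [smul_eq_mul]
          refine mul_le_mul_of_nonneg_left (Real.exp_le_exp.2 ?_)
            (div_nonneg (mul_nonneg (hq _) (hq _)) hβ0.le)
          nlinarith [hG0 (t * (x.1 - x.2))]
  have hshift : ∀ c : ZMod p, c ≠ 0 → ∑ t : ZMod p with t ≠ 0, Real.exp (-α * G (t * c)) =
      ∑ t : ZMod p with t ≠ 0, Real.exp (-α * G t) := fun c hc =>
    Finset.sum_equiv (Equiv.mulRight₀ c hc) (by simp [hc]) (by simp)
  calc ∑ t : ZMod p with t ≠ 0, ∏ i, ‖charSum q (t * w i)‖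
      ≤ ∑ t : ZMod p with t ≠ 0,
          ∑ x ∈ S, q x.1 * q x.2 / β * Real.exp (-α * G (t * (x.1 - x.2))) :=
        Finset.sum_le_sum fun t _ => hpt t
    _ = ∑ x ∈ S, q x.1 * q x.2 / β * ∑ t : ZMod p with t ≠ 0, Real.exp (-α * G t) := by
        rw [Finset.sum_comm]
        refine Finset.sum_congr rfl fun x hx => ?_
        rw [← Finset.mul_sum, hshift _ (sub_ne_zero.2 (Finset.mem_filter.1 hx).2)]
    _ = p * rhoDisc α w := by rw [← Finset.sum_mul, hweights, one_mul, hρ]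

/-! ### The orthogonal complement and Fourier inversion -/

/-- The orthogonal complement of `H` for the standard bilinear form. -/
def perp {p N : ℕ} (H : Submodule (ZMod p) (Fin N → ZMod p)) :
    Submodule (ZMod p) (Fin N → ZMod p) :=
  H.dualAnnihilator.map (dotProductEquiv (ZMod p) (Fin N)).symm.toLinearMap

lemma mem_perp {p N : ℕ} (H : Submodule (ZMod p) (Fin N → ZMod p)) (w : Fin N → ZMod p) :
    w ∈ perp H ↔ ∀ v ∈ H, ∑ i, v i * w i = 0 := by
  rw [perp, Submodule.mem_map_equiv, Submodule.mem_dualAnnihilator]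
  simp [dotProduct, mul_comm]

lemma card_perp {p N k : ℕ} [NeZero p] [Fact p.Prime] (hk : k ≤ N)
    (H : Submodule (ZMod p) (Fin N → ZMod p))
    (hH : Module.finrank (ZMod p) H = N - k) : Nat.card (perp H) = p ^ k := by
  rw [Module.natCard_eq_pow_finrank (K := ZMod p), Nat.card_zmod, perp,
    LinearEquiv.finrank_map_eq]
  have := Subspace.finrank_add_finrank_dualAnnihilator_eq H
  rw [hH, Module.finrank_fin_fun] at this
  congr 1
  omega

lemma exists_perp_ne_zero {p N : ℕ} [Fact p.Prime]
    (H : Submodule (ZMod p) (Fin N → ZMod p)) {v : Fin N → ZMod p} (hv : v ∉ H) :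
    ∃ w ∈ perp H, ∑ i, v i * w i ≠ 0 := by
  obtain ⟨f, hf, hle⟩ := Submodule.exists_le_ker_of_notMem hv
  refine ⟨(dotProductEquiv (ZMod p) (Fin N)).symm f, ?_, ?_⟩
  · exact Submodule.mem_map_of_mem ((Submodule.mem_dualAnnihilator f).2 fun u hu => hle hu)
  · have : dotProductEquiv (ZMod p) (Fin N) ((dotProductEquiv (ZMod p) (Fin N)).symm f) v ≠ 0 := by
      rwa [LinearEquiv.apply_symm_apply]
    rw [dotProductEquiv_apply_apply, dotProduct] at this
    simpa only [mul_comm] using this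

/-- Fourier expansion of the indicator function of `H`. -/
lemma sum_perp_stdAddChar {p N : ℕ} [NeZero p] [Fact p.Prime]
    (H : Submodule (ZMod p) (Fin N → ZMod p)) [Fintype (perp H)] [DecidablePred (· ∈ H)]
    (v : Fin N → ZMod p) :
    ∑ w : perp H, (ZMod.stdAddChar (∑ i, v i * w.1 i) : ℂ) =
      if v ∈ H then (Nat.card (perp H) : ℂ) else 0 := by
  split_ifs with hv
  · rw [Finset.sum_congr rfl fun w _ => by
      rw [(mem_perp H w.1).1 w.2 v hv, AddChar.map_zero_eq_one]]
    simp
  · let L : perp H →+ ZMod p :=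
      { toFun := fun w => ∑ i, v i * w.1 i
        map_zero' := by simp
        map_add' := fun a b => by simp [mul_add, Finset.sum_add_distrib] }
    refine AddChar.sum_eq_zero_of_ne_one (ψ := ZMod.stdAddChar.compAddMonoidHom L) fun h => ?_
    obtain ⟨w, hw, hne⟩ := exists_perp_ne_zero H hv
    have h1 := DFunLike.congr_fun h ⟨w, hw⟩
    exact hne (ZMod.injective_stdAddChar (h1.trans (AddChar.map_zero_eq_one _).symm))

/-- Averaging over the dilations `w ↦ t • w`, which permute the nonzero vectors of `W`. -/
lemma sum_ne_zero_eq_sum_smul {p N : ℕ} [NeZero p] [Fact p.Prime]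
    (W : Submodule (ZMod p) (Fin N → ZMod p)) [Fintype W] [DecidableEq W]
    (F : (Fin N → ZMod p) → ℝ) :
    ((p : ℝ) - 1) * ∑ w : W with w ≠ 0, F w.1 =
      ∑ w : W with w ≠ 0, ∑ t : ZMod p with t ≠ 0, F (t • w.1) := by
  have hcard : (((Finset.univ.filter fun t : ZMod p => t ≠ 0).card : ℕ) : ℝ) = p - 1 := by
    rw [Finset.filter_ne', Finset.card_erase_of_mem (Finset.mem_univ _), Finset.card_univ,
      ZMod.card, Nat.cast_sub (NeZero.one_le), Nat.cast_one]
  rw [Finset.sum_comm, ← hcard, ← nsmul_eq_mul, ← Finset.sum_const]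
  refine Finset.sum_congr rfl fun t ht => ?_
  have ht0 : t ≠ 0 := (Finset.mem_filter.1 ht).2
  exact (Finset.sum_equiv (LinearEquiv.smulOfNeZero (ZMod p) W t ht0).toEquiv
    (by simp [ht0]) (by simp)).symm

/-! ### The estimate -/

/-- With the coordinates outside `I₀`
frozen to `y`, the expectation of a character under the
product weights factors over `I₀` up to a phase. -/
lemma norm_sum_char_le {p N : ℕ} [NeZero p] (q : ZMod p → ℝ) (I₀ : Finset (Fin N))
    (y w : Fin N → ZMod p) :
    ‖∑ z : {a // a ∈ I₀} → ZMod p, ((∏ i, q (z i) : ℝ) : ℂ) *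
      ZMod.stdAddChar (∑ i, (if h : i ∈ I₀ then z ⟨i, h⟩ else y i) * w i)‖ ≤
    ∏ i : {a // a ∈ I₀}, ‖charSum q (w i.1)‖ := by
  classical
  have hsplit : ∀ z : {a // a ∈ I₀} → ZMod p,
      ∑ i, (if h : i ∈ I₀ then z ⟨i, h⟩ else y i) * w i =
        ∑ i : {a // a ∈ I₀}, w i.1 * z i + ∑ i ∈ I₀ᶜ, y i * w i := by
    intro z
    rw [← Finset.sum_add_sum_compl I₀]
    congr 1
    · rw [← Finset.sum_coe_sort]
      exact Finset.sum_congr rfl fun i _ => by simp [mul_comm]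
    · exact Finset.sum_congr rfl fun i hi => by rw [dif_neg (Finset.mem_compl.1 hi)]
  have hsum : ∀ g : {a // a ∈ I₀} → ZMod p,
      (ZMod.stdAddChar (∑ i, g i) : ℂ) = ∏ i, ZMod.stdAddChar (g i) := fun g => by
    have := map_sum (AddChar.toAddMonoidHom (ZMod.stdAddChar (N := p))) g Finset.univ
    exact this
  have heq : ∑ z : {a // a ∈ I₀} → ZMod p, ((∏ i, q (z i) : ℝ) : ℂ) *
      ZMod.stdAddChar (∑ i, (if h : i ∈ I₀ then z ⟨i, h⟩ else y i) * w i) =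
      (∏ i : {a // a ∈ I₀}, charSum q (w i.1)) * ZMod.stdAddChar (∑ i ∈ I₀ᶜ, y i * w i) := by
    simp only [charSum]
    rw [Finset.prod_univ_sum, Fintype.piFinset_univ, Finset.sum_mul]
    refine Finset.sum_congr rfl fun z _ => ?_
    rw [hsplit, AddChar.map_add_eq_mul, hsum, Finset.prod_mul_distrib]
    push_cast
    ring
  rw [heq, norm_mul, AddChar.norm_apply, mul_one, norm_prod]

/-- The estimate with the law of `ξ` modulo `p` given by its weights `q` instead of a measure. -/
lemma abs_sum_sub_le {p N k : ℕ} [NeZero p] [Fact p.Prime] (hk : k ≤ N)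
    (q : ZMod p → ℝ) (hq : ∀ r, 0 ≤ q r) (hq1 : ∑ r, q r = 1)
    (α : ℝ) (hα : 0 < α) (hqα : ∀ r, q r ≤ 1 - α)
    (H : Submodule (ZMod p) (Fin N → ZMod p)) [DecidablePred (· ∈ H)]
    (hH : Module.finrank (ZMod p) H = N - k)
    (I₀ : Finset (Fin N)) (δ₀ : ℝ) (hδ₀ : 0 < δ₀)
    (hperp : ∀ w : Fin N → ZMod p, w ≠ 0 → (∀ v ∈ H, ∑ i, v i * w i = 0) →
      rhoDisc α (fun i : {a // a ∈ I₀} => w i.1) ≤ δ₀)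
    (y : Fin N → ZMod p) :
    |(∑ z : {a // a ∈ I₀} → ZMod p,
        if (fun i => if h : i ∈ I₀ then z ⟨i, h⟩ else y i) ∈ H then ∏ i, q (z i) else 0)
      - (p : ℝ) ^ (-(k : ℤ))| ≤ 2 * δ₀ := by
  classical
  have : Fintype (perp H) := Fintype.ofFinite _
  set P := ∑ z : {a // a ∈ I₀} → ZMod p,
    if (fun i => if h : i ∈ I₀ then z ⟨i, h⟩ else y i) ∈ H then ∏ i, q (z i) else 0 with hP
  set E : (Fin N → ZMod p) → ℂ := fun w => ∑ z : {a // a ∈ I₀} → ZMod p,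
    ((∏ i, q (z i) : ℝ) : ℂ) *
      ZMod.stdAddChar (∑ i, (if h : i ∈ I₀ then z ⟨i, h⟩ else y i) * w i) with hE
  set F : (Fin N → ZMod p) → ℝ := fun w => ∏ i : {a // a ∈ I₀}, ‖charSum q (w i.1)‖ with hF
  have hcard := card_perp hk H hH
  have hp2 : (2 : ℝ) ≤ p := by exact_mod_cast (Fact.out : p.Prime).two_le
  have hpk : (0 : ℝ) < (p : ℝ) ^ k := by positivity
  have hfour : ((p : ℂ) ^ k) * P = ∑ w : perp H, E w.1 := by
    simp only [hE]
    rw [Finset.sum_comm, hP, Complex.ofReal_sum, Finset.mul_sum]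
    refine Finset.sum_congr rfl fun z _ => ?_
    rw [← Finset.mul_sum, sum_perp_stdAddChar H
      (fun i => if h : i ∈ I₀ then z ⟨i, h⟩ else y i), hcard]
    split_ifs <;> simp [mul_comm]
  have hE0 : E 0 = 1 := by
    have h : ∑ z : {a // a ∈ I₀} → ZMod p, ∏ i, q (z i) = 1 := by
      rw [← Fintype.piFinset_univ, ← Finset.prod_univ_sum (fun _ => Finset.univ) (fun _ => q)]
      simp [hq1]
    simp only [hE, Pi.zero_apply, mul_zero, Finset.sum_const_zero, AddChar.map_zero_eq_one,
      mul_one]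
    exact_mod_cast h
  have hsplit : ((p : ℂ) ^ k) * P - 1 = ∑ w : perp H with w ≠ 0, E w.1 := by
    rw [hfour, Finset.filter_ne', ← Finset.add_sum_erase Finset.univ _ (Finset.mem_univ 0)]
    simp [hE0]
  have hbound : |(p : ℝ) ^ k * P - 1| ≤ ∑ w : perp H with w ≠ 0, F w.1 := by
    have h : ‖((p : ℂ) ^ k) * P - 1‖ = |(p : ℝ) ^ k * P - 1| := by
      rw [← Real.norm_eq_abs, ← Complex.norm_real]
      push_cast
      rfl
    rw [← h, hsplit]
    exact norm_sum_le_of_le _ fun w _ => norm_sum_char_le q I₀ y w.1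
  have havg : ((p : ℝ) - 1) * ∑ w : perp H with w ≠ 0, F w.1 ≤ (p : ℝ) ^ k * (p * δ₀) := by
    rw [sum_ne_zero_eq_sum_smul]
    calc ∑ w : perp H with w ≠ 0, ∑ t : ZMod p with t ≠ 0, F (t • w.1)
        ≤ ∑ w : perp H with w ≠ 0, (p : ℝ) * δ₀ := by
          refine Finset.sum_le_sum fun w hw => ?_
          have hw0 : w.1 ≠ 0 := fun h => (Finset.mem_filter.1 hw).2 (Subtype.ext h)
          exact (sum_prod_norm_charSum_le q hq hq1 α hα hqα fun i : {a // a ∈ I₀} => w.1 i.1).trans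
            (mul_le_mul_of_nonneg_left (hperp w.1 hw0 ((mem_perp H w.1).1 w.2)) (by positivity))
      _ ≤ ∑ w : perp H, (p : ℝ) * δ₀ :=
          Finset.sum_le_sum_of_subset_of_nonneg (Finset.filter_subset _ _)
            fun _ _ _ => by positivity
      _ = (p : ℝ) ^ k * (p * δ₀) := by
          rw [Finset.sum_const, Finset.card_univ, ← Nat.card_eq_fintype_card, hcard, nsmul_eq_mul,
            Nat.cast_pow]
  -- `p / (p - 1) ≤ 2`, with equality at `p = 2`
  have hfin : |(p : ℝ) ^ k * P - 1| ≤ (p : ℝ) ^ k * (2 * δ₀) := by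
    have hmul : ((p : ℝ) - 1) * |(p : ℝ) ^ k * P - 1| ≤
        ((p : ℝ) - 1) * ((p : ℝ) ^ k * (2 * δ₀)) := by
      have h1 := (mul_le_mul_of_nonneg_left hbound (by linarith : (0 : ℝ) ≤ p - 1)).trans havg
      nlinarith [mul_nonneg (mul_pos hpk hδ₀).le (by linarith : (0 : ℝ) ≤ p - 2)]
    exact le_of_mul_le_mul_left hmul (by linarith)
  have hrw : P - (p : ℝ) ^ (-(k : ℤ)) = ((p : ℝ) ^ k * P - 1) / (p : ℝ) ^ k := by
    rw [zpow_neg, zpow_natCast]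
    field_simp
  rw [hrw, abs_div, abs_of_pos hpk, div_le_iff₀ hpk]
  linarith

theorem subspace_prob_near_uniform (α : ℝ) (hα : 0 < α)
    (μ : Measure ℤ) (hμ : IsProbabilityMeasure μ) (hbal : IsBalanced α μ)
    (p : ℕ) (hp : p.Prime) [NeZero p] (N k : ℕ) (hk : k ≤ N)
    (H : Submodule (ZMod p) (Fin N → ZMod p))
    (hH : Module.finrank (ZMod p) H = N - k)
    (I₀ : Finset (Fin N)) (δ₀ : ℝ) (hδ₀ : 0 < δ₀)
    (hperp : ∀ w : Fin N → ZMod p, w ≠ 0 → (∀ v ∈ H, ∑ i, v i * w i = 0) →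
      rhoDisc α (fun i : {a // a ∈ I₀} => w i.1) ≤ δ₀)
    (ν : Measure (ZMod p)) (hν : IsProbabilityMeasure ν)
    (hνdef : ν = Measure.map (fun z : ℤ => (z : ZMod p)) μ)
    (y : Fin N → ZMod p) :
    |((piProb (ι := {a // a ∈ I₀}) ν hν)
        {z | (fun i => if h : i ∈ I₀ then z ⟨i, h⟩ else y i) ∈ H}).toReal
      - (p : ℝ) ^ (-(k : ℤ))| ≤ 2 * δ₀ := by
  classical
  have : Fact p.Prime := ⟨hp⟩
  have hmeas : ∀ r : ZMod p, ν {r} = μ {x : ℤ | (x : ZMod p) = r} := fun r => by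
    rw [hνdef, Measure.map_apply (measurable_from_top) (MeasurableSet.singleton r)]
    rfl
  have hq1 : ∑ r, ν.real {r} = 1 := by
    rw [sum_measureReal_singleton, Finset.coe_univ, probReal_univ]
  have hle : ∀ r, ν {r} ≤ ENNReal.ofReal (1 - α) := fun r => (hmeas r).trans_le (hbal p hp r)
  -- for `α > 1` balancedness would make every atom of `ν` null
  have hα1 : 0 ≤ 1 - α := by
    by_contra hneg
    have h0 : ∀ r, ν.real {r} = 0 := fun r => by
      have := hle r
      rw [ENNReal.ofReal_of_nonpos (not_le.1 hneg).le, nonpos_iff_eq_zero] at this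
      rw [Measure.real, this, ENNReal.toReal_zero]
    simp [h0] at hq1
  have hqα : ∀ r, ν.real {r} ≤ 1 - α := fun r =>
    ENNReal.toReal_le_of_le_ofReal hα1 (hle r)
  have key := abs_sum_sub_le hk (fun r => ν.real {r}) (fun r => measureReal_nonneg) hq1 α hα hqα
    H hH I₀ δ₀ hδ₀ hperp y
  convert key using 3
  rw [← Finset.sum_filter]
  set S : Finset ({a // a ∈ I₀} → ZMod p) := Finset.univ.filter
    fun z => (fun i => if h : i ∈ I₀ then z ⟨i, h⟩ else y i) ∈ H with hS
  have hset : {z : {a // a ∈ I₀} → ZMod p |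
      (fun i => if h : i ∈ I₀ then z ⟨i, h⟩ else y i) ∈ H} = (S : Set _) := by
    ext z; simp [hS]
  rw [hset, piProb, ← measureReal_def, ← sum_measureReal_singleton]
  refine Finset.sum_congr rfl fun z _ => ?_
  rw [measureReal_def, Measure.pi_singleton, ENNReal.toReal_prod]
  rfl
end
end
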